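/- arXiv:2202.02919 — 2 statements merged into one kernel-verified Lean document; each statement's English description precedes it below -/
import Mathlib

section
/- Assume the Szemerédi–Trotter-type bound: there is a constant A such that any m points and n points on the sphere of radius 1/√2 determine at most A(m^{2/3}n^{2/3} + m + n) unit-distance pairs between them. Then for every k ≥ 1 there is a constant B_k and exponent e_k such that any n points on this sphere determine at most B_k · n^{e_k} (log n)^{B_k} unit-distance paths with k vertices, where e_k = ⌊2(k+3)/5⌋ if k mod 5 ∈ {0,1,3,4} and e_k = ⌊2(k+3)/5⌋ − 2/3 if k mod 5 = 2. -/
/-!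
On the sphere of radius `1 / √2` two points are at distance `1` exactly when they are orthogonal.
Hence the unit sphere around a point meets the sphere in a great circle, antipodal points have the
same neighbours, and two points that are neither equal nor antipodal have at most two common
neighbours, `±` the normalised cross product (`common_nbr`). So the middle vertex of three
consecutive path vertices `x, y, z` is determined by `x` and `z` up to sign, unless `z = -x`, in
which case the path is said to turn back at `y`.

Write `N k` for the number of paths with `k` vertices. Trivially `N 1 ≤ n`; the common-neighbour
property gives `N 3 = O(n²)` and `N 5 = O(n N 3)`. For `N 4` the edges are weighted by the product of
the degrees of their ends. Vertices of degree at least `√n` have total degree `O(n)` by the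
incidence bound, and the neighbours of any point have total degree `O(n)`; the remaining vertices
are grouped dyadically by degree, and each pair of classes contributes `O(n²)`, so that
`N 4 = O(n² log² n)` (`ncard_paths_four`).

The step from `k` to `k + 5` has exponent `2` (`bd_all`). Paths with at least six vertices that do
not turn back at the fifth vertex number at most `2 N(4) N(k - 5)`. A path that turns back there
cannot turn back at the third or the seventh vertex, since its vertices are distinct; dropping the
third vertex, and the seventh when this helps, leaves `2 N(2) N(k - 3)` or
`4 N(2)² N(k - 7)` paths.

The bound has the factor `(log n) ^ B` with the same `B` as the constant, and `log 2 < 1`, so for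
`n = 2` enlarging `B` is no help. For `k ≥ 3` two points carry no path, but for `k ≤ 2` a concrete
`B` is needed that is good for all `n`, and `k = 2` therefore requires a unit-distance bound with
a numerical constant. It is proved from scratch (`unit_pairs_le`): a generic central projection
turns the sphere into the plane and polar great circles into lines, and the incidence bound for
points and lines follows from the crossing inequality.
-/


namespace SphPath

/-! ### Non-crossing families of segments -/

/-- The value at `x` of the affine function `x ↦ ℓ.1 * x + ℓ.2`. A pair `ℓ` of reals encodes the
non-vertical line which is the graph of this function. -/
def ht (ℓ : ℝ × ℝ) (x : ℝ) : ℝ := ℓ.1 * x + ℓ.2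

/-- A segment of a non-vertical line, given by its left endpoint, its right endpoint and the line
that carries it. -/
@[ext] structure Arc where
  l : ℝ × ℝ
  r : ℝ × ℝ
  line : ℝ × ℝ

/-- `e` is a segment with endpoints in `W` and no point of `W` in its relative interior. -/
structure IsArc (W : Finset (ℝ × ℝ)) (e : Arc) : Prop where
  hl : e.l ∈ W
  hr : e.r ∈ W
  lt : e.l.1 < e.r.1
  onl : e.l.2 = ht e.line e.l.1
  onr : e.r.2 = ht e.line e.r.1
  emp : ∀ v ∈ W, v.2 = ht e.line v.1 → e.l.1 < v.1 → v.1 < e.r.1 → False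

/-- Two segments on different lines share a relative interior point. -/
def Cross (e f : Arc) : Prop :=
  e.line ≠ f.line ∧ ∃ x, e.l.1 < x ∧ x < e.r.1 ∧ f.l.1 < x ∧ x < f.r.1 ∧
    ht e.line x = ht f.line x

lemma Cross.symm {e f : Arc} (h : Cross e f) : Cross f e := by
  obtain ⟨h1, x, a, b, c, d, h⟩ := h
  exact ⟨h1.symm, x, c, d, a, b, h.symm⟩

lemma exists_ht_eq {ℓ m : ℝ × ℝ} {x y : ℝ} (hxy : x < y) (h1 : ht ℓ x < ht m x)
    (h2 : ht m y < ht ℓ y) : ∃ z, x < z ∧ z < y ∧ ht ℓ z = ht m z := by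
  have hc : ContinuousOn (fun z => ht ℓ z - ht m z) (Set.Icc x y) := by
    unfold ht; fun_prop
  have := intermediate_value_Ioo hxy.le hc
  obtain ⟨z, hz, h⟩ := this (show (0 : ℝ) ∈ _ from ⟨by linarith, by linarith⟩)
  exact ⟨z, hz.1, hz.2, by simpa [sub_eq_zero] using h⟩

lemma cross_of_lt {e f : Arc} {x y : ℝ} (hxy : x < y) (h1 : ht e.line x < ht f.line x)
    (h2 : ht f.line y < ht e.line y) (a : e.l.1 ≤ x) (b : y ≤ e.r.1) (c : f.l.1 ≤ x)
    (d : y ≤ f.r.1) : Cross e f := by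
  obtain ⟨z, hz1, hz2, h⟩ := exists_ht_eq hxy h1 h2
  refine ⟨fun h => ?_, z, by linarith, by linarith, by linarith, by linarith, h⟩
  rw [h] at h1; exact lt_irrefl _ h1

lemma line_eq {ℓ m : ℝ × ℝ} {x y : ℝ} (hxy : x ≠ y) (h1 : ht ℓ x = ht m x)
    (h2 : ht ℓ y = ht m y) : ℓ = m := by
  unfold ht at h1 h2
  have h3 : (ℓ.1 - m.1) * (x - y) = 0 := by linear_combination h1 - h2
  have h4 : ℓ.1 = m.1 := by
    rcases mul_eq_zero.1 h3 with h | h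
    · linarith
    · exact absurd (by linarith) hxy
  exact Prod.ext h4 (by rw [h4] at h1; linarith)

/-- Two segments of one line that have a common relative interior point coincide. -/
lemma arc_eq {W : Finset (ℝ × ℝ)} (hW : Set.InjOn Prod.fst (W : Set (ℝ × ℝ))) {e f : Arc}
    (he : IsArc W e) (hf : IsArc W f) (hl : e.line = f.line) {x : ℝ} (h1 : e.l.1 < x)
    (h2 : x < e.r.1) (h3 : f.l.1 < x) (h4 : x < f.r.1) : e = f := by
  have a1 : e.l = f.l := by
    apply hW he.hl hf.hl
    by_contra hne
    rcases lt_or_gt_of_ne hne with h | h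
    · exact he.emp _ hf.hl (hl ▸ hf.onl) h (by linarith)
    · exact hf.emp _ he.hl (hl ▸ he.onl) h (by linarith)
  have a2 : e.r = f.r := by
    apply hW he.hr hf.hr
    by_contra hne
    rcases lt_or_gt_of_ne hne with h | h
    · exact hf.emp _ he.hr (hl ▸ he.onr) (by linarith) h
    · exact he.emp _ hf.hr (hl ▸ hf.onr) (by linarith) h
  exact Arc.ext a1 a2 hl

/-- In a non-crossing family, a segment `e` that is neither the steepest one leaving its left
endpoint nor the least steep one arriving at its right endpoint has a point of `W` vertically
above it with no segment in between: the leftmost point of `W` in the wedge between `e` and the next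
steeper segment `g` from the same left endpoint. -/
lemma exists_above {W : Finset (ℝ × ℝ)} (hW : Set.InjOn Prod.fst (W : Set (ℝ × ℝ)))
    {F : Finset Arc} (hF : ∀ e ∈ F, IsArc W e) (hx : ∀ e ∈ F, ∀ f ∈ F, ¬ Cross e f)
    {e : Arc} (he : e ∈ F) (h1 : ∃ f ∈ F, f.l = e.l ∧ e.line.1 < f.line.1)
    (h2 : ∃ f ∈ F, f.r = e.r ∧ f.line.1 < e.line.1) :
    ∃ v ∈ W, e.l.1 < v.1 ∧ v.1 < e.r.1 ∧ ht e.line v.1 < v.2 ∧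
      ∀ f ∈ F, f.l.1 < v.1 → v.1 < f.r.1 → ht e.line v.1 < ht f.line v.1 →
        v.2 ≤ ht f.line v.1 := by
  classical
  have hE := hF e he
  obtain ⟨g, hg, hgmin⟩ := Finset.exists_min_image
    (F.filter fun f => f.l = e.l ∧ e.line.1 < f.line.1) (fun f => f.line.1)
    (by obtain ⟨f, hf, h⟩ := h1; exact ⟨f, by simp [hf, h]⟩)
  simp only [Finset.mem_filter] at hg hgmin
  obtain ⟨hgF, hgl, hgs⟩ := hg
  have hG := hF g hgF
  obtain ⟨k, hkF, hkr, hks⟩ := h2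
  have hK := hF k hkF
  have hgp : ht g.line e.l.1 = ht e.line e.l.1 := by
    rw [← hE.onl, ← hgl, ← hG.onl]
  have hkq : ht k.line e.r.1 = ht e.line e.r.1 := by
    rw [← hE.onr, ← hkr, ← hK.onr]
  have hge : ∀ x, e.l.1 < x → ht e.line x < ht g.line x := by
    intro x hx
    unfold ht at hgp ⊢
    nlinarith [mul_pos (sub_pos.2 hgs) (sub_pos.2 hx)]
  have hke : ∀ x, x < e.r.1 → ht e.line x < ht k.line x := by
    intro x hx
    unfold ht at hkq ⊢
    nlinarith [mul_pos (sub_pos.2 hks) (sub_pos.2 hx)]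
  have hglt := hG.lt
  have hklt := hK.lt
  have helt := hE.lt
  rw [hgl] at hglt
  rw [hkr] at hklt
  obtain ⟨v, hv, hvmin⟩ := Finset.exists_min_image
    (W.filter fun v => e.l.1 < v.1 ∧ v.1 < e.r.1 ∧ ht e.line v.1 < v.2 ∧ v.1 ≤ g.r.1 ∧
      v.2 ≤ ht g.line v.1) (fun v => v.1) (by
    by_cases hc : g.r.1 < e.r.1
    · refine ⟨g.r, ?_⟩
      simp only [Finset.mem_filter]
      exact ⟨hG.hr, hglt, hc, by rw [hG.onr]; exact hge _ hglt, le_rfl, hG.onr.le⟩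
    · -- `g` passes over the right end of `e`, so the segment `k` cannot leave the wedge
      push Not at hc
      have hgt : ht k.line e.r.1 < ht g.line e.r.1 := by
        rw [hkq]; exact hge _ helt
      have c1 : e.l.1 < k.l.1 := by
        by_contra hcon
        push Not at hcon
        refine hx g hgF k hkF (cross_of_lt (x := e.l.1) (y := e.r.1) helt ?_ hgt ?_ hc hcon ?_)
        · rw [hgp]; exact hke _ helt
        · rw [hgl]
        · rw [hkr]
      have c2 : k.l.2 ≤ ht g.line k.l.1 := by
        by_contra hcon
        push Not at hcon
        rw [hK.onl] at hcon
        refine hx g hgF k hkF (cross_of_lt (x := k.l.1) (y := e.r.1) hklt hcon hgt ?_ hc le_rfl ?_)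
        · rw [hgl]; exact c1.le
        · rw [hkr]
      refine ⟨k.l, ?_⟩
      simp only [Finset.mem_filter]
      exact ⟨hK.hl, c1, hklt, by rw [hK.onl]; exact hke _ hklt, by linarith, c2⟩)
  simp only [Finset.mem_filter] at hv hvmin
  obtain ⟨hvW, v1, v2, v3, v4, v5⟩ := hv
  refine ⟨v, hvW, v1, v2, v3, fun f hf f1 f2 f3 => ?_⟩
  by_contra f4
  push Not at f4
  have hf' := hF f hf
  have f5 : ht f.line v.1 < ht g.line v.1 := lt_of_lt_of_le f4 v5
  by_cases ha : e.l.1 < f.l.1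
  · have d1 : ht e.line f.l.1 < f.l.2 := by
      by_contra hcon
      push Not at hcon
      rcases hcon.eq_or_lt with h | h
      · exact hE.emp _ hf'.hl h ha (by linarith)
      · rw [hf'.onl] at h
        exact hx f hf e he (cross_of_lt f1 h f3 le_rfl f2.le ha.le v2.le)
    have d2 : f.l.2 ≤ ht g.line f.l.1 := by
      by_contra hcon
      push Not at hcon
      rw [hf'.onl] at hcon
      refine hx g hgF f hf (cross_of_lt f1 hcon f5 ?_ v4 le_rfl f2.le)
      rw [hgl]; exact ha.le
    have := hvmin f.l ⟨hf'.hl, ha, by linarith, d1, by linarith, d2⟩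
    linarith
  · push Not at ha
    have d1 : ht f.line e.l.1 = ht e.line e.l.1 := by
      rcases lt_trichotomy (ht f.line e.l.1) (ht e.line e.l.1) with h | h | h
      · exact (hx f hf e he (cross_of_lt v1 h f3 ha f2.le le_rfl v2.le)).elim
      · exact h
      · rw [← hgp] at h
        exact (hx g hgF f hf (cross_of_lt v1 h f5 (by rw [hgl]) v4 ha f2.le)).elim
    have d2 : f.l.1 = e.l.1 := by
      by_contra hne
      exact hf'.emp _ hE.hl (by rw [hE.onl, d1]) (lt_of_le_of_ne ha hne) (by linarith)
    have d3 : f.l = e.l := hW hf'.hl hE.hl d2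
    have d4 : e.line.1 < f.line.1 := by
      unfold ht at d1 f3
      nlinarith
    have d5 : f.line.1 < g.line.1 := by
      unfold ht at d1 f5 hgp
      nlinarith
    have := hgmin f ⟨hf, d3, d4⟩
    linarith

/-- A non-crossing family of segments has at most three times as many members as it has vertices:
each segment is the steepest one leaving its left endpoint, or the least steep one arriving at its
right endpoint, or the first segment below some vertex. -/
lemma card_le_of_noncross {W : Finset (ℝ × ℝ)} (hW : Set.InjOn Prod.fst (W : Set (ℝ × ℝ)))
    {F : Finset Arc} (hF : ∀ e ∈ F, IsArc W e) (hx : ∀ e ∈ F, ∀ f ∈ F, ¬ Cross e f) :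
    F.card ≤ 3 * W.card := by
  classical
  set F1 := F.filter fun e => ∀ f ∈ F, f.l = e.l → f.line.1 ≤ e.line.1 with hF1
  set F2 := F.filter fun e => ∀ f ∈ F, f.r = e.r → e.line.1 ≤ f.line.1 with hF2
  set F3 := F.filter fun e => ∃ v ∈ W, e.l.1 < v.1 ∧ v.1 < e.r.1 ∧ ht e.line v.1 < v.2 ∧
      ∀ f ∈ F, f.l.1 < v.1 → v.1 < f.r.1 → ht e.line v.1 < ht f.line v.1 →
        v.2 ≤ ht f.line v.1 with hF3
  have hcov : F ⊆ F1 ∪ F2 ∪ F3 := by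
    intro e he
    simp only [Finset.mem_union, hF1, hF2, hF3, Finset.mem_filter, he, true_and]
    by_contra hcon
    push Not at hcon
    obtain ⟨⟨h1, h2⟩, h3⟩ := hcon
    obtain ⟨v, hv, a, b, c, d⟩ := exists_above hW hF hx he h1 h2
    obtain ⟨f, hf, x1, x2, x3, x4⟩ := h3 v hv a b c
    have := d f hf x1 x2 x3
    linarith
  have b1 : F1.card ≤ W.card := by
    apply Finset.card_le_card_of_injOn (fun e => e.l)
    · intro e he
      exact (hF e (Finset.mem_filter.1 he).1).hl
    · intro e he f hf hef
      simp only [hF1, Finset.coe_filter, Set.mem_ofPred_eq] at he hf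
      simp only at hef
      have hs : e.line.1 = f.line.1 :=
        le_antisymm (hf.2 e he.1 hef) (he.2 f hf.1 hef.symm)
      have o1 := (hF e he.1).onl
      have o2 := (hF f hf.1).onl
      have hl : e.line = f.line := by
        refine Prod.ext hs ?_
        unfold ht at o1 o2
        rw [hef, hs] at o1; linarith
      have l1 := (hF e he.1).lt
      have l2 := (hF f hf.1).lt
      obtain ⟨x, hx1, hx2⟩ := exists_between (lt_min l1 (hef ▸ l2 : e.l.1 < f.r.1))
      exact arc_eq hW (hF e he.1) (hF f hf.1) hl hx1 (lt_of_lt_of_le hx2 (min_le_left _ _))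
        (hef ▸ hx1) (lt_of_lt_of_le hx2 (min_le_right _ _))
  have b2 : F2.card ≤ W.card := by
    apply Finset.card_le_card_of_injOn (fun e => e.r)
    · intro e he
      exact (hF e (Finset.mem_filter.1 he).1).hr
    · intro e he f hf hef
      simp only [hF2, Finset.coe_filter, Set.mem_ofPred_eq] at he hf
      simp only at hef
      have hs : e.line.1 = f.line.1 :=
        le_antisymm (he.2 f hf.1 hef.symm) (hf.2 e he.1 hef)
      have o1 := (hF e he.1).onr
      have o2 := (hF f hf.1).onr
      have hl : e.line = f.line := by
        refine Prod.ext hs ?_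
        unfold ht at o1 o2
        rw [hef, hs] at o1; linarith
      have l1 := (hF e he.1).lt
      have l2 := (hF f hf.1).lt
      obtain ⟨x, hx1, hx2⟩ := exists_between (max_lt l1 (hef ▸ l2 : f.l.1 < e.r.1))
      exact arc_eq hW (hF e he.1) (hF f hf.1) hl (lt_of_le_of_lt (le_max_left _ _) hx1) hx2
        (lt_of_le_of_lt (le_max_right _ _) hx1) (hef ▸ hx2)
  have b3 : F3.card ≤ W.card := by
    have hch : ∀ e : Arc, ∃ v, e ∈ F3 → v ∈ W ∧ e.l.1 < v.1 ∧ v.1 < e.r.1 ∧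
        ht e.line v.1 < v.2 ∧ ∀ f ∈ F, f.l.1 < v.1 → v.1 < f.r.1 →
          ht e.line v.1 < ht f.line v.1 → v.2 ≤ ht f.line v.1 := by
      intro e
      by_cases he : e ∈ F3
      · obtain ⟨v, hv⟩ := (Finset.mem_filter.1 he).2
        exact ⟨v, fun _ => hv⟩
      · exact ⟨0, fun h => (he h).elim⟩
    choose v hv using hch
    apply Finset.card_le_card_of_injOn v
    · intro e he
      exact (hv e he).1
    · intro e he f hf hef
      obtain ⟨-, e1, e2, e3, e4⟩ := hv e he
      obtain ⟨-, f1, f2, f3, f4⟩ := hv f hf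
      rw [← hef] at f1 f2 f3 f4
      have heF := (Finset.mem_filter.1 he).1
      have hfF := (Finset.mem_filter.1 hf).1
      have heq : ht e.line (v e).1 = ht f.line (v e).1 := by
        rcases lt_trichotomy (ht e.line (v e).1) (ht f.line (v e).1) with h | h | h
        · have := e4 f hfF f1 f2 h
          linarith
        · exact h
        · have := f4 e heF e1 e2 h
          linarith
      have hl : e.line = f.line := by
        by_contra hne
        exact hx e heF f hfF ⟨hne, _, e1, e2, f1, f2, heq⟩
      exact arc_eq hW (hF e heF) (hF f hfF) hl e1 e2 f1 f2
  calc F.card ≤ (F1 ∪ F2 ∪ F3).card := Finset.card_le_card hcov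
    _ ≤ (F1 ∪ F2).card + F3.card := Finset.card_union_le _ _
    _ ≤ F1.card + F2.card + F3.card := by gcongr; exact Finset.card_union_le _ _
    _ ≤ 3 * W.card := by omega

open Classical in
/-- A family of segments with vertices in `W` has at most `3 * #W` members more than it has (ordered)
crossing pairs: remove segments until no crossing is left. -/
lemma card_le_add_cross {W : Finset (ℝ × ℝ)} (hW : Set.InjOn Prod.fst (W : Set (ℝ × ℝ)))
    {E : Finset Arc} (hE : ∀ e ∈ E, IsArc W e) :
    E.card ≤ 3 * W.card + ((E ×ˢ E).filter fun z => Cross z.1 z.2).card := by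
  obtain ⟨F, hF, hmax⟩ := Finset.exists_max_image
    (E.powerset.filter fun F => ∀ e ∈ F, ∀ f ∈ F, ¬ Cross e f) Finset.card ⟨∅, by simp⟩
  simp only [Finset.mem_filter, Finset.mem_powerset] at hF hmax
  obtain ⟨hFE, hFx⟩ := hF
  have h1 := card_le_of_noncross hW (fun e he => hE e (hFE he)) hFx
  have hirr : ∀ e, ¬ Cross e e := fun e h => h.1 rfl
  have hch : ∀ e : Arc, ∃ f, e ∈ E \ F → f ∈ F ∧ Cross e f := by
    intro e
    by_cases he : e ∈ E \ F
    · by_contra hcon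
      push Not at hcon
      have hno : ∀ f ∈ F, ¬ Cross e f := fun f hf => (hcon f).2 hf
      obtain ⟨heE, heF⟩ := Finset.mem_sdiff.1 he
      have := hmax (insert e F) ⟨Finset.insert_subset heE hFE, by
        intro a ha b hb
        rcases Finset.mem_insert.1 ha with rfl | ha1 <;>
        rcases Finset.mem_insert.1 hb with rfl | hb1
        · exact hirr _
        · exact hno b hb1
        · exact fun h => hno a ha1 h.symm
        · exact hFx a ha1 b hb1⟩
      rw [Finset.card_insert_of_notMem heF] at this
      omega
    · exact ⟨e, fun h => (he h).elim⟩
  choose f hf using hch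
  have h2 : (E \ F).card ≤ ((E ×ˢ E).filter fun z => Cross z.1 z.2).card := by
    apply Finset.card_le_card_of_injOn (fun e => (e, f e))
    · intro e he
      simp only [Finset.coe_filter, Finset.mem_product, Set.mem_ofPred_eq]
      exact ⟨⟨(Finset.mem_sdiff.1 he).1, hFE (hf e he).1⟩, (hf e he).2⟩
    · intro a _ b _ h
      exact (Prod.ext_iff.1 h).1
  have h3 := Finset.card_sdiff_add_card_eq_card hFE
  omega


/-! ### The crossing inequality and incidences -/

/-- The probability that a random subset of `V`, which contains each point independently with
probability `s`, contains `T` is `s ^ #T`. -/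
lemma sum_weight {α : Type*} [DecidableEq α] (V T : Finset α) (hT : T ⊆ V) (s : ℝ) :
    ∑ W ∈ V.powerset, (if T ⊆ W then s ^ W.card * (1 - s) ^ (V \ W).card else 0) =
      s ^ T.card := by
  have h := Finset.prod_add (fun _ : α => s) (fun i => if i ∈ T then 0 else 1 - s) V
  have h1 : ∏ i ∈ V, (s + if i ∈ T then 0 else 1 - s) = s ^ T.card := by
    calc ∏ i ∈ V, (s + if i ∈ T then 0 else 1 - s) = ∏ i ∈ V, (if i ∈ T then s else 1) := by
          apply Finset.prod_congr rfl
          intro i _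
          split_ifs <;> ring
      _ = s ^ T.card := by
          rw [← Finset.prod_filter, Finset.filter_mem_eq_inter, Finset.inter_eq_right.2 hT,
            Finset.prod_const]
  rw [← h1, h]
  apply Finset.sum_congr rfl
  intro W hW
  rw [Finset.prod_const]
  split_ifs with hTW
  · congr 1
    rw [← Finset.prod_const]
    apply Finset.prod_congr rfl
    intro i hi
    rw [if_neg]
    exact fun h => (Finset.mem_sdiff.1 hi).2 (hTW h)
  · obtain ⟨i, hi, hiW⟩ := Finset.not_subset.1 hTW
    rw [Finset.prod_eq_zero (i := i) (Finset.mem_sdiff.2 ⟨hT hi, hiW⟩) (by simp [hi]), mul_zero]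

/-- The expected number of members of a family `S` of which all vertices lie in the random
subset. -/
lemma sum_weight_card {α β : Type*} [DecidableEq α] (V : Finset α) (S : Finset β)
    (T : β → Finset α) (hT : ∀ b ∈ S, T b ⊆ V) (c : ℕ) (hc : ∀ b ∈ S, (T b).card = c) (s : ℝ) :
    ∑ W ∈ V.powerset, s ^ W.card * (1 - s) ^ (V \ W).card *
      ((S.filter fun b => T b ⊆ W).card : ℝ) = S.card * s ^ c := by
  have : ∀ W ∈ V.powerset, s ^ W.card * (1 - s) ^ (V \ W).card *
      ((S.filter fun b => T b ⊆ W).card : ℝ) =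
      ∑ b ∈ S, if T b ⊆ W then s ^ W.card * (1 - s) ^ (V \ W).card else 0 := by
    intro W _
    rw [← Finset.sum_filter, Finset.sum_const, nsmul_eq_mul, mul_comm]
  rw [Finset.sum_congr rfl this, Finset.sum_comm,
    Finset.sum_congr rfl (fun b hb => by rw [sum_weight V (T b) (hT b hb), hc b hb]),
    Finset.sum_const, nsmul_eq_mul]

open Classical in
/-- The crossing inequality: the bound of `card_le_add_cross`, averaged over random vertex
subsets. -/
lemma crossing_inequality {V : Finset (ℝ × ℝ)} (hV : Set.InjOn Prod.fst (V : Set (ℝ × ℝ)))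
    {E : Finset Arc} (hE : ∀ e ∈ E, IsArc V e) {s : ℝ} (h0 : 0 ≤ s) (h1 : s ≤ 1) :
    E.card * s ^ 2 ≤ 3 * (V.card * s) +
      ((E ×ˢ E).filter fun z => Cross z.1 z.2).card * s ^ 4 := by
  set X := (E ×ˢ E).filter fun z => Cross z.1 z.2 with hX
  have eV := sum_weight_card V V (fun v => {v}) (by simp) 1 (by simp) s
  have eE := sum_weight_card V E (fun e => {e.l, e.r})
    (fun e he => by
      simp [Finset.insert_subset_iff, (hE e he).hl, (hE e he).hr]) 2
    (fun e he => Finset.card_pair (fun h => (hE e he).lt.ne (by rw [h]))) s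
  have hXm : ∀ z ∈ X, IsArc V z.1 ∧ IsArc V z.2 ∧ Cross z.1 z.2 := by
    intro z hz
    simp only [hX, Finset.mem_filter, Finset.mem_product] at hz
    exact ⟨hE _ hz.1.1, hE _ hz.1.2, hz.2⟩
  have eX := sum_weight_card V X (fun z => {z.1.l, z.1.r, z.2.l, z.2.r})
    (fun z hz => by
      obtain ⟨a, b, -⟩ := hXm z hz
      simp [Finset.insert_subset_iff, a.hl, a.hr, b.hl, b.hr]) 4
    (fun z hz => by
      -- crossing segments have no common endpoint, as their lines meet only once
      obtain ⟨a, b, hne, x, x1, x2, x3, x4, hx⟩ := hXm z hz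
      have key : ∀ v : ℝ × ℝ, v.1 ≠ x → v.2 = ht z.1.line v.1 → v.2 = ht z.2.line v.1 → False :=
        fun v hv h1 h2 => hne (line_eq hv (h1.symm.trans h2) hx)
      have n1 : z.1.l ≠ z.1.r := fun h => a.lt.ne (by rw [h])
      have n2 : z.2.l ≠ z.2.r := fun h => b.lt.ne (by rw [h])
      have n3 : z.1.l ≠ z.2.l := fun h => key _ x1.ne a.onl (h ▸ b.onl)
      have n4 : z.1.l ≠ z.2.r := fun h => key _ x1.ne a.onl (h ▸ b.onr)
      have n5 : z.1.r ≠ z.2.l := fun h => key _ x2.ne' a.onr (h ▸ b.onl)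
      have n6 : z.1.r ≠ z.2.r := fun h => key _ x2.ne' a.onr (h ▸ b.onr)
      rw [Finset.card_insert_of_notMem (by simp [n1, n3, n4]),
        Finset.card_insert_of_notMem (by simp [n5, n6]), Finset.card_pair n2]) s
  rw [pow_one] at eV
  rw [← eE, ← eX, ← eV, Finset.mul_sum, ← Finset.sum_add_distrib]
  apply Finset.sum_le_sum
  intro W hW
  have hWV := Finset.mem_powerset.1 hW
  have hw : 0 ≤ s ^ W.card * (1 - s) ^ (V \ W).card :=
    mul_nonneg (pow_nonneg h0 _) (pow_nonneg (by linarith) _)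
  have := card_le_add_cross (W := W) (hV.mono hWV) (E := E.filter fun e => {e.l, e.r} ⊆ W) (by
    intro e he
    simp only [Finset.mem_filter, Finset.insert_subset_iff, Finset.singleton_subset_iff] at he
    have h := hE e he.1
    exact ⟨he.2.1, he.2.2, h.lt, h.onl, h.onr, fun v hv => h.emp v (hWV hv)⟩)
  have e1 : (((E.filter fun e => {e.l, e.r} ⊆ W) ×ˢ (E.filter fun e => {e.l, e.r} ⊆ W)).filter
      fun z => Cross z.1 z.2) = X.filter fun z => {z.1.l, z.1.r, z.2.l, z.2.r} ⊆ W := by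
    ext z
    simp only [hX, Finset.mem_filter, Finset.mem_product, Finset.insert_subset_iff,
      Finset.singleton_subset_iff]
    tauto
  have e2 : (V.filter fun v => {v} ⊆ W) = W := by
    ext v
    simp only [Finset.mem_filter, Finset.singleton_subset_iff]
    exact ⟨fun h => h.2, fun h => ⟨hWV h, h⟩⟩
  rw [e1] at this
  simp only [e2]
  calc _ ≤ s ^ W.card * (1 - s) ^ (V \ W).card * ((3 * W.card +
        (X.filter fun z => {z.1.l, z.1.r, z.2.l, z.2.r} ⊆ W).card : ℕ) : ℝ) := by
        gcongr
    _ = _ := by push_cast; ring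

open Classical in
/-- The segments between consecutive points of `V` on the line `ℓ`. -/
noncomputable def arcsOn (V : Finset (ℝ × ℝ)) (ℓ : ℝ × ℝ) : Finset Arc :=
  ((V ×ˢ V).image fun z => (⟨z.1, z.2, ℓ⟩ : Arc)).filter (IsArc V)

lemma mem_arcsOn {V : Finset (ℝ × ℝ)} {ℓ : ℝ × ℝ} {e : Arc} :
    e ∈ arcsOn V ℓ ↔ IsArc V e ∧ e.line = ℓ := by
  classical
  simp only [arcsOn, Finset.mem_filter, Finset.mem_image, Finset.mem_product]
  constructor
  · rintro ⟨⟨z, -, rfl⟩, h⟩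
    exact ⟨h, rfl⟩
  · rintro ⟨h, rfl⟩
    exact ⟨⟨(e.l, e.r), ⟨h.hl, h.hr⟩, rfl⟩, h⟩

open Classical in
lemma card_on_line_le {V : Finset (ℝ × ℝ)} (hV : Set.InjOn Prod.fst (V : Set (ℝ × ℝ)))
    (ℓ : ℝ × ℝ) :
    (V.filter fun v => v.2 = ht ℓ v.1).card ≤ (arcsOn V ℓ).card + 1 := by
  set S := V.filter fun v => v.2 = ht ℓ v.1 with hS
  have hSm : ∀ v, v ∈ S ↔ v ∈ V ∧ v.2 = ht ℓ v.1 := by simp [hS]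
  rcases S.eq_empty_or_nonempty with h | h
  · simp [h]
  obtain ⟨m, hm, hmin⟩ := Finset.exists_min_image S Prod.fst h
  have hsub : S.erase m ⊆ (arcsOn V ℓ).image fun e => e.r := by
    intro q hq
    obtain ⟨hqm, hqS⟩ := Finset.mem_erase.1 hq
    have hlt : m.1 < q.1 := lt_of_le_of_ne (hmin q hqS) fun h =>
      hqm (hV ((hSm _).1 hqS).1 ((hSm _).1 hm).1 h.symm)
    obtain ⟨p, hp, hpmax⟩ := Finset.exists_max_image (S.filter fun v => v.1 < q.1) Prod.fst
      ⟨m, by simp [hm, hlt]⟩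
    simp only [Finset.mem_filter] at hp hpmax
    refine Finset.mem_image.2 ⟨⟨p, q, ℓ⟩, mem_arcsOn.2 ⟨⟨((hSm _).1 hp.1).1, ((hSm _).1 hqS).1,
      hp.2, ((hSm _).1 hp.1).2, ((hSm _).1 hqS).2, fun v hv h1 h2 h3 => ?_⟩, rfl⟩, rfl⟩
    have := hpmax v ⟨(hSm _).2 ⟨hv, h1⟩, h3⟩
    exact absurd h2 (not_lt.2 this)
  have := (Finset.card_le_card hsub).trans Finset.card_image_le
  rw [Finset.card_erase_of_mem hm] at this
  omega

open Classical in
/-- The Szemerédi–Trotter bound for at most `n` points and at most `n` lines. -/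
lemma incidences_le {V L : Finset (ℝ × ℝ)} (hV : Set.InjOn Prod.fst (V : Set (ℝ × ℝ)))
    {n : ℕ} (hn : 1 ≤ n) (hVn : V.card ≤ n) (hLn : L.card ≤ n) :
    (((V ×ˢ L).filter fun z => z.1.2 = ht z.2 z.1.1).card : ℝ) ≤ 5 * (n : ℝ) ^ (4 / 3 : ℝ) := by
  set E := L.biUnion (arcsOn V) with hE
  have hEm : ∀ e, e ∈ E ↔ IsArc V e ∧ e.line ∈ L := by
    intro e
    simp only [hE, Finset.mem_biUnion, mem_arcsOn]
    exact ⟨fun ⟨a, b, c, d⟩ => ⟨c, d ▸ b⟩, fun ⟨a, b⟩ => ⟨_, b, a, rfl⟩⟩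
  have hI : ((V ×ˢ L).filter fun z => z.1.2 = ht z.2 z.1.1).card ≤ E.card + L.card := by
    have hEc : E.card = ∑ ℓ ∈ L, (arcsOn V ℓ).card := by
      apply Finset.card_biUnion
      intro a _ b _ hab
      refine Finset.disjoint_left.2 fun e h1 h2 => hab ?_
      rw [← (mem_arcsOn.1 h1).2, (mem_arcsOn.1 h2).2]
    have h2 : ((V ×ˢ L).filter fun z => z.1.2 = ht z.2 z.1.1).card =
        ∑ ℓ ∈ L, (V.filter fun v => v.2 = ht ℓ v.1).card := by
      rw [Finset.card_filter, Finset.sum_product_right]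
      simp only [Finset.card_filter]
    rw [h2, hEc, Finset.card_eq_sum_ones, ← Finset.sum_add_distrib]
    exact Finset.sum_le_sum fun ℓ _ => card_on_line_le hV ℓ
  have hX : ((E ×ˢ E).filter fun z => Cross z.1 z.2).card ≤ L.card * L.card := by
    rw [← Finset.card_product]
    apply Finset.card_le_card_of_injOn (fun z => (z.1.line, z.2.line))
    · intro z hz
      simp only [Finset.coe_filter, Finset.mem_product, Set.mem_ofPred_eq] at hz
      simp only [Finset.coe_product, Set.mem_prod, Finset.mem_coe]
      exact ⟨((hEm _).1 hz.1.1).2, ((hEm _).1 hz.1.2).2⟩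
    · rintro ⟨a, b⟩ hz ⟨c, d⟩ hw h
      simp only [Finset.coe_filter, Finset.mem_product, Set.mem_ofPred_eq, hEm] at hz hw
      simp only [Prod.mk.injEq] at h
      obtain ⟨⟨⟨ha, -⟩, hb, -⟩, hne, x, x1, x2, x3, x4, hx⟩ := hz
      obtain ⟨⟨⟨hc, -⟩, hd, -⟩, -, y, y1, y2, y3, y4, hy⟩ := hw
      have hxy : x = y := by
        by_contra hcon
        rw [← h.1, ← h.2] at hy
        exact hne (line_eq hcon hx hy)
      subst hxy
      exact Prod.ext (arc_eq hV ha hc h.1 x1 x2 y1 y2) (arc_eq hV hb hd h.2 x3 x4 y3 y4)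
  have hnpos : (0 : ℝ) < n := by exact_mod_cast hn
  have hn1 : (1 : ℝ) ≤ n := by exact_mod_cast hn
  -- with density `n ^ (-1/3)` both terms on the right are of order `n ^ (2/3)`
  set t : ℝ := (n : ℝ) ^ (1 / 3 : ℝ) with ht'
  have ht0 : 0 < t := Real.rpow_pos_of_pos hnpos _
  have ht3 : t ^ 3 = n := by
    rw [ht', ← Real.rpow_natCast, ← Real.rpow_mul hnpos.le]; norm_num
  have ht4 : t ^ 4 = (n : ℝ) ^ (4 / 3 : ℝ) := by
    rw [ht', ← Real.rpow_natCast, ← Real.rpow_mul hnpos.le]; norm_num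
  have ht1 : 1 ≤ t := Real.one_le_rpow hn1 (by norm_num)
  have hc := crossing_inequality hV (fun e he => ((hEm e).1 he).1) (inv_nonneg.2 ht0.le)
    (inv_le_one_of_one_le₀ ht1)
  have hVr : (V.card : ℝ) ≤ t ^ 3 := by rw [ht3]; exact_mod_cast hVn
  have hLr : (L.card : ℝ) ≤ t ^ 3 := by rw [ht3]; exact_mod_cast hLn
  have hXr : (((E ×ˢ E).filter fun z => Cross z.1 z.2).card : ℝ) ≤ t ^ 3 * t ^ 3 := by
    calc _ ≤ (L.card : ℝ) * L.card := by exact_mod_cast hX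
      _ ≤ _ := by gcongr
  have hEr : (E.card : ℝ) ≤ 4 * t ^ 4 := by
    have : (E.card : ℝ) * t⁻¹ ^ 2 ≤ 3 * (t ^ 3 * t⁻¹) + t ^ 3 * t ^ 3 * t⁻¹ ^ 4 := by
      refine hc.trans ?_
      gcongr
    have h2 := mul_le_mul_of_nonneg_right this (sq_nonneg t)
    have e1 : (E.card : ℝ) * t⁻¹ ^ 2 * t ^ 2 = E.card := by field_simp
    have e2 : (3 * (t ^ 3 * t⁻¹) + t ^ 3 * t ^ 3 * t⁻¹ ^ 4) * t ^ 2 = 4 * t ^ 4 := by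
      field_simp; norm_num
    rwa [e1, e2] at h2
  have hIr : (((V ×ˢ L).filter fun z => z.1.2 = ht z.2 z.1.1).card : ℝ) ≤ E.card + L.card := by
    exact_mod_cast hI
  have : t ^ 3 ≤ t ^ 4 := pow_le_pow_right₀ ht1 (by norm_num)
  rw [← ht4]
  linarith


/-! ### The sphere -/

/-- Euclidean three-space. -/
abbrev E3 := EuclideanSpace ℝ (Fin 3)

/-- The standard inner product in coordinates. -/
def dot (x y : E3) : ℝ := x 0 * y 0 + x 1 * y 1 + x 2 * y 2

lemma dot_self {x : E3} (hx : ‖x‖ = 1 / Real.sqrt 2) : dot x x = 1 / 2 := by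
  have h : ‖x‖ ^ 2 = dot x x := by
    rw [EuclideanSpace.real_norm_sq_eq, Fin.sum_univ_three]; unfold dot; ring
  rw [← h, hx, div_pow, Real.sq_sqrt (by norm_num)]; norm_num

/-- On the sphere of radius `1 / √2`, unit distance means orthogonality. -/
lemma dist_eq_one_iff {x y : E3} (hx : ‖x‖ = 1 / Real.sqrt 2) (hy : ‖y‖ = 1 / Real.sqrt 2) :
    dist x y = 1 ↔ dot x y = 0 := by
  have h1 := dot_self hx
  have h2 := dot_self hy
  have h : dist x y ^ 2 = 1 - 2 * dot x y := by
    rw [dist_eq_norm, EuclideanSpace.real_norm_sq_eq, Fin.sum_univ_three]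
    simp only [PiLp.sub_apply]
    unfold dot at *
    linear_combination h1 + h2
  constructor
  · intro h3
    rw [h3] at h; linarith
  · intro h3
    rw [h3] at h
    exact (sq_eq_sq₀ dist_nonneg zero_le_one).1 (by linarith)

lemma eq_or_eq_neg_of_smul {x y : E3} (hx : ‖x‖ = 1 / Real.sqrt 2)
    (hy : ‖y‖ = 1 / Real.sqrt 2) {c : ℝ} (h0 : x 0 = c * y 0) (h1 : x 1 = c * y 1)
    (h2 : x 2 = c * y 2) : x = y ∨ x = -y := by
  have a := dot_self hx
  have b := dot_self hy
  have hc : c ^ 2 = 1 := by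
    unfold dot at a b
    rw [h0, h1, h2] at a
    linear_combination 2 * a - 2 * c ^ 2 * b
  rcases mul_self_eq_one_iff.1 ((sq c).symm.trans hc) with rfl | rfl
  · left; ext i; fin_cases i <;> simp [h0, h1, h2]
  · right; ext i; fin_cases i <;> simp [h0, h1, h2]

lemma sq3_eq_zero {a b c : ℝ} (h : a ^ 2 + b ^ 2 + c ^ 2 = 0) : a = 0 ∧ b = 0 ∧ c = 0 := by
  refine ⟨?_, ?_, ?_⟩ <;> apply pow_eq_zero_iff (two_ne_zero) |>.1 <;>
    linarith [sq_nonneg a, sq_nonneg b, sq_nonneg c]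

/-- Two points of the sphere that are neither equal nor antipodal have at most two common
neighbours, and these are antipodal. -/
lemma common_nbr {x y z w : E3} (hx : ‖x‖ = 1 / Real.sqrt 2) (hy : ‖y‖ = 1 / Real.sqrt 2)
    (hz : ‖z‖ = 1 / Real.sqrt 2) (hw : ‖w‖ = 1 / Real.sqrt 2) (h1 : x ≠ y) (h2 : x ≠ -y)
    (xz : dot x z = 0) (yz : dot y z = 0) (xw : dot x w = 0) (yw : dot y w = 0) :
    z = w ∨ z = -w := by
  -- both `z` and `w` are multiples of the cross product `c` of `x` and `y`
  set c0 := x 1 * y 2 - x 2 * y 1 with hc0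
  set c1 := x 2 * y 0 - x 0 * y 2 with hc1
  set c2 := x 0 * y 1 - x 1 * y 0 with hc2
  set N := c0 ^ 2 + c1 ^ 2 + c2 ^ 2 with hN
  have ex := dot_self hx
  have ey := dot_self hy
  have ez := dot_self hz
  have ew := dot_self hw
  have hNne : N ≠ 0 := by
    intro h0
    have e : (dot x y) ^ 2 = 1 / 4 := by
      have : N = dot x x * dot y y - dot x y ^ 2 := by
        simp only [hN, hc0, hc1, hc2, dot]; ring
      rw [ex, ey, h0] at this; linarith
    have e' : (dot x y - 1 / 2) * (dot x y + 1 / 2) = 0 := by linear_combination e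
    rcases mul_eq_zero.1 e' with h | h
    · apply h1
      have : (x 0 - y 0) ^ 2 + (x 1 - y 1) ^ 2 + (x 2 - y 2) ^ 2 = 0 := by
        unfold dot at *; linear_combination ex + ey - 2 * h
      obtain ⟨a0, a1, a2⟩ := sq3_eq_zero this
      ext i; fin_cases i <;> simp <;> linarith
    · apply h2
      have : (x 0 + y 0) ^ 2 + (x 1 + y 1) ^ 2 + (x 2 + y 2) ^ 2 = 0 := by
        unfold dot at *; linear_combination ex + ey + 2 * h
      obtain ⟨a0, a1, a2⟩ := sq3_eq_zero this
      ext i; fin_cases i <;> simp <;> linarith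
  have key : ∀ u : E3, dot x u = 0 → dot y u = 0 →
      N * u 0 = (u 0 * c0 + u 1 * c1 + u 2 * c2) * c0 ∧
      N * u 1 = (u 0 * c0 + u 1 * c1 + u 2 * c2) * c1 ∧
      N * u 2 = (u 0 * c0 + u 1 * c1 + u 2 * c2) * c2 := by
    intro u hxu hyu
    have d0 : c1 * u 2 - c2 * u 1 = 0 := by
      simp only [hc1, hc2]; unfold dot at hxu hyu
      linear_combination y 0 * hxu - x 0 * hyu
    have d1 : c2 * u 0 - c0 * u 2 = 0 := by
      simp only [hc0, hc2]; unfold dot at hxu hyu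
      linear_combination y 1 * hxu - x 1 * hyu
    have d2 : c0 * u 1 - c1 * u 0 = 0 := by
      simp only [hc0, hc1]; unfold dot at hxu hyu
      linear_combination y 2 * hxu - x 2 * hyu
    refine ⟨?_, ?_, ?_⟩
    · rw [hN]; linear_combination c2 * d1 - c1 * d2
    · rw [hN]; linear_combination c0 * d2 - c2 * d0
    · rw [hN]; linear_combination c1 * d0 - c0 * d1
  obtain ⟨z0, z1, z2⟩ := key z xz yz
  obtain ⟨w0, w1, w2⟩ := key w xw yw
  set a := z 0 * c0 + z 1 * c1 + z 2 * c2
  set b := w 0 * c0 + w 1 * c1 + w 2 * c2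
  have hb : b ≠ 0 := by
    intro h0
    rw [h0] at w0 w1 w2
    have f0 : w 0 = 0 := by simpa [hNne] using w0
    have f1 : w 1 = 0 := by simpa [hNne] using w1
    have f2 : w 2 = 0 := by simpa [hNne] using w2
    unfold dot at ew
    rw [f0, f1, f2] at ew; norm_num at ew
  clear_value c0 c1 c2 N a b
  have fin : ∀ u v d : ℝ, N * u = a * d → N * v = b * d → u = a / b * v := by
    intro u v d hu hv
    rw [div_mul_eq_mul_div, eq_div_iff hb]
    exact mul_left_cancel₀ hNne (by linear_combination b * hu - a * hv)
  exact eq_or_eq_neg_of_smul hz hw (fin _ _ _ z0 w0) (fin _ _ _ z1 w1) (fin _ _ _ z2 w2)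

lemma exists_generic (S : Finset (ℝ × ℝ × ℝ)) (hS : ∀ z ∈ S, z ≠ 0) :
    ∃ s : ℝ, ∀ z ∈ S, z.1 + s * z.2.1 + s ^ 2 * z.2.2 ≠ 0 := by
  open Polynomial in
  have hfin : (⋃ z ∈ S, {s : ℝ | z.1 + s * z.2.1 + s ^ 2 * z.2.2 = 0}).Finite := by
    refine Set.Finite.biUnion S.finite_toSet fun z hz => ?_
    set p : ℝ[X] := C z.1 + C z.2.1 * X + C z.2.2 * X ^ 2 with hp
    have hp0 : p ≠ 0 := by
      intro h
      apply hS z hz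
      have c0 : p.coeff 0 = z.1 := by simp [hp]
      have c1 : p.coeff 1 = z.2.1 := by simp [hp]
      have c2 : p.coeff 2 = z.2.2 := by simp [hp]
      rw [h] at c0 c1 c2
      simp only [coeff_zero] at c0 c1 c2
      exact Prod.ext c0.symm (Prod.ext c1.symm c2.symm)
    refine (p.roots.toFinset.finite_toSet).subset fun s hs => ?_
    rw [Finset.mem_coe, Multiset.mem_toFinset, mem_roots hp0, IsRoot.def, hp]
    simp only [eval_add, eval_mul, eval_C, eval_X, eval_pow]
    rw [Set.mem_ofPred_eq] at hs
    linarith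
  obtain ⟨s, hs⟩ := hfin.infinite_compl.nonempty
  refine ⟨s, fun z hz h => hs ?_⟩
  simp only [Set.mem_iUnion]
  exact ⟨z, hz, h⟩

open Classical in
/-- The unit-distance bound on the sphere with an explicit constant. A generic projection from the
centre turns points into points of the plane and the great circles polar to them into lines; both maps
identify antipodal points only. -/
lemma unit_pairs_le (P : Finset E3) (hP : ∀ x ∈ P, ‖x‖ = 1 / Real.sqrt 2) (hne : 1 ≤ P.card) :
    (((P ×ˢ P).filter fun z => dot z.1 z.2 = 0).card : ℝ) ≤
      22 * (P.card : ℝ) ^ (4 / 3 : ℝ) := by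
  have hnz : ∀ p ∈ P, ¬ (p 0 = 0 ∧ p 1 = 0 ∧ p 2 = 0) := by
    rintro p hp ⟨a, b, c⟩
    have := dot_self (hP p hp)
    unfold dot at this
    rw [a, b, c] at this; norm_num at this
  obtain ⟨s, hs⟩ := exists_generic (P.image fun p => (p 0, p 1, p 2)) (by
    intro z hz
    obtain ⟨p, hp, rfl⟩ := Finset.mem_image.1 hz
    intro h
    simp only [Prod.mk_eq_zero] at h
    exact hnz p hp h)
  set w : E3 → ℝ := fun p => p 0 + s * p 1 + s ^ 2 * p 2 with hw
  have hwne : ∀ p ∈ P, w p ≠ 0 := fun p hp => hs _ (Finset.mem_image_of_mem _ hp)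
  obtain ⟨t, ht⟩ := exists_generic (((P ×ˢ P).image fun z =>
    (w z.2 * z.1 1 - w z.1 * z.2 1, w z.2 * z.1 2 - w z.1 * z.2 2, (0 : ℝ))).filter
      fun z => z ≠ 0) (by simp)
  set X : E3 → ℝ := fun p => (p 1 + t * p 2) / w p with hX
  have hXeq : ∀ p ∈ P, ∀ q ∈ P, X p = X q → p = q ∨ p = -q := by
    intro p hp q hq h
    have wp := hwne p hp
    have wq := hwne q hq
    simp only [hX] at h
    rw [div_eq_div_iff wp wq] at h
    have hz : (w q * p 1 - w p * q 1, w q * p 2 - w p * q 2, (0 : ℝ)) = 0 := by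
      by_contra hcon
      refine ht _ (Finset.mem_filter.2 ⟨Finset.mem_image.2 ⟨(p, q), by simp [hp, hq], rfl⟩,
        hcon⟩) ?_
      simp only
      linear_combination h
    simp only [Prod.mk_eq_zero, and_true] at hz
    have h0 : w q * p 0 = w p * q 0 := by
      have ep : w p = p 0 + s * p 1 + s ^ 2 * p 2 := rfl
      have eq : w q = q 0 + s * q 1 + s ^ 2 * q 2 := rfl
      linear_combination w p * eq - w q * ep - s * hz.1 - s ^ 2 * hz.2
    refine eq_or_eq_neg_of_smul (hP p hp) (hP q hq) (c := w p / w q) ?_ ?_ ?_ <;> field_simp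
    · linear_combination h0
    · linear_combination hz.1
    · linear_combination hz.2
  set b : E3 → ℝ := fun a => a 1 - s * a 0 with hb
  set c : E3 → ℝ := fun a => a 2 - s ^ 2 * a 0 - t * b a with hc
  have hinc : ∀ p ∈ P, ∀ a, dot p a = 0 → a 0 + b a * X p + c a * (p 2 / w p) = 0 := by
    intro p hp a h
    have wp := hwne p hp
    have : dot p a = a 0 * w p + b a * (p 1 + t * p 2) + c a * p 2 := by
      simp only [dot, hw, hb, hc]; ring
    simp only [hX]
    field_simp
    linear_combination h - this
  set π : E3 → ℝ × ℝ := fun p => (X p, p 2 / w p) with hπ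
  set lam : E3 → ℝ × ℝ := fun a => (-b a / c a, -a 0 / c a) with hlam
  have hlameq : ∀ a ∈ P, ∀ a' ∈ P, c a ≠ 0 → c a' ≠ 0 → lam a = lam a' → a = a' ∨ a = -a' := by
    intro a ha a' ha' h1 h2 h
    simp only [hlam, Prod.mk.injEq] at h
    obtain ⟨hb', h0'⟩ := h
    rw [div_eq_div_iff h1 h2] at hb' h0'
    have e1 : a 1 * c a' = a' 1 * c a := by
      have hb1 : b a * c a' = b a' * c a := by linarith
      have ea : b a = a 1 - s * a 0 := rfl
      have ea' : b a' = a' 1 - s * a' 0 := rfl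
      linear_combination hb1 - s * h0' - c a' * ea + c a * ea'
    have e2 : a 2 * c a' = a' 2 * c a := by
      have ea : c a = a 2 - s ^ 2 * a 0 - t * b a := rfl
      have ea' : c a' = a' 2 - s ^ 2 * a' 0 - t * b a' := rfl
      linear_combination c a * ea' - c a' * ea - s ^ 2 * h0' - t * hb'
    refine eq_or_eq_neg_of_smul (hP a ha) (hP a' ha') (c := c a / c a') ?_ ?_ ?_ <;> field_simp
    · linear_combination -h0'
    · linear_combination e1
    · linear_combination e2
  set V := P.image π with hV
  set L := (P.filter fun a => c a ≠ 0).image lam with hL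
  have hVinj : Set.InjOn Prod.fst (V : Set (ℝ × ℝ)) := by
    intro u hu v hv huv
    simp only [hV, Finset.coe_image, Set.mem_image, Finset.mem_coe] at hu hv
    obtain ⟨p, hp, rfl⟩ := hu
    obtain ⟨q, hq, rfl⟩ := hv
    rcases hXeq p hp q hq huv with rfl | h
    · rfl
    · refine Prod.ext huv ?_
      have : w p = - w q := by rw [h]; simp only [hw, PiLp.neg_apply]; ring
      simp only [hπ, this]
      rw [h]; simp
  set D := (P ×ˢ P).filter fun z => dot z.1 z.2 = 0 with hD
  set D0 := D.filter fun z => c z.2 = 0 with hD0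
  set D1 := D.filter fun z => c z.2 ≠ 0 with hD1
  have hDm : ∀ z, z ∈ D ↔ (z.1 ∈ P ∧ z.2 ∈ P) ∧ dot z.1 z.2 = 0 := by simp [hD]
  have hsplit : D.card = D0.card + D1.card :=
    (Finset.card_filter_add_card_filter_not _).symm
  have h0 : D0.card ≤ 2 * P.card := by
    refine Finset.card_le_mul_card_image_of_maps_to (f := Prod.snd)
      (fun z hz => ((hDm z).1 (Finset.mem_filter.1 hz).1).1.2) 2 fun a ha => ?_
    rcases (D0.filter fun z => z.2 = a).eq_empty_or_nonempty with h | ⟨⟨p, a'⟩, h⟩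
    · exact (Finset.card_eq_zero.2 h).le.trans (Nat.zero_le _)
    have hsub : (D0.filter fun z => z.2 = a) ⊆ {(p, a), (-p, a)} := by
      rintro ⟨q, a''⟩ hq
      simp only [hD0, Finset.mem_filter, hDm] at h hq
      obtain ⟨⟨⟨⟨hp, -⟩, hpa⟩, hca⟩, rfl⟩ := h
      obtain ⟨⟨⟨⟨hq, -⟩, hqa⟩, -⟩, rfl⟩ := hq
      have i1 := hinc p hp _ hpa
      have i2 := hinc q hq _ hqa
      rw [hca] at i1 i2
      have hbne : b a'' ≠ 0 := by
        intro hb0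
        rw [hb0] at i1
        have a0 : a'' 0 = 0 := by linarith
        have a1 : a'' 1 = 0 := by simp only [hb] at hb0; rw [a0] at hb0; linarith
        have a2 : a'' 2 = 0 := by
          simp only [hc, hb0, a0] at hca; linarith
        exact hnz _ ha ⟨a0, a1, a2⟩
      have : X q = X p := mul_left_cancel₀ hbne (by linarith)
      rcases hXeq q hq p hp this with rfl | rfl <;> simp
    exact (Finset.card_le_card hsub).trans Finset.card_le_two
  have h1 : D1.card ≤ 4 * ((V ×ˢ L).filter fun z => z.1.2 = SphPath.ht z.2 z.1.1).card := by
    refine Finset.card_le_mul_card_image_of_maps_to (f := fun z => (π z.1, lam z.2))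
      (fun z hz => ?_) 4 fun v hv => ?_
    · simp only [hD1, Finset.mem_filter, hDm] at hz
      obtain ⟨⟨⟨hp, ha⟩, hpa⟩, hca⟩ := hz
      simp only [Finset.mem_filter, Finset.mem_product, hV, hL]
      refine ⟨⟨Finset.mem_image_of_mem _ hp, Finset.mem_image_of_mem _ (by simp [ha, hca])⟩, ?_⟩
      have := hinc _ hp _ hpa
      simp only [SphPath.ht, hπ, hlam]
      apply mul_left_cancel₀ hca
      have e : c z.2 * (-b z.2 / c z.2 * X z.1 + -z.2 0 / c z.2) = -b z.2 * X z.1 - z.2 0 := by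
        field_simp; ring
      rw [e]; linarith
    · rcases (D1.filter fun z => (π z.1, lam z.2) = v).eq_empty_or_nonempty with
        h | ⟨⟨p, a⟩, h⟩
      · simp [h]
      have hsub : (D1.filter fun z => (π z.1, lam z.2) = v) ⊆
          ({p, -p} : Finset E3) ×ˢ ({a, -a} : Finset E3) := by
        rintro ⟨q, a'⟩ hq
        simp only [hD1, Finset.mem_filter, hDm] at h hq
        obtain ⟨⟨⟨⟨hp, ha⟩, -⟩, hca⟩, rfl⟩ := h
        obtain ⟨⟨⟨⟨hq, ha'⟩, -⟩, hca'⟩, he⟩ := hq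
        simp only [Prod.mk.injEq] at he
        have r1 := hXeq q hq p hp (Prod.ext_iff.1 he.1).1
        have r2 := hlameq a' ha' a ha hca' hca he.2
        simp only [Finset.mem_product, Finset.mem_insert, Finset.mem_singleton]
        exact ⟨r1, r2⟩
      refine (Finset.card_le_card hsub).trans ?_
      rw [Finset.card_product]
      exact Nat.mul_le_mul Finset.card_le_two Finset.card_le_two
  have h2 := incidences_le hVinj hne (Finset.card_image_le)
    (Finset.card_image_le.trans (Finset.card_filter_le _ _) : L.card ≤ P.card)
  have h3 : (P.card : ℝ) ≤ (P.card : ℝ) ^ (4 / 3 : ℝ) :=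
    Real.self_le_rpow_of_one_le (by exact_mod_cast hne) (by norm_num)
  have h0' : (D0.card : ℝ) ≤ 2 * P.card := by exact_mod_cast h0
  have h1' : (D1.card : ℝ) ≤
      4 * ((V ×ˢ L).filter fun z => z.1.2 = SphPath.ht z.2 z.1.1).card := by exact_mod_cast h1
  rw [hsplit]; push_cast
  linarith


/-! ### Counting paths by segments -/

/-- All points of `P` lie on the sphere of radius `1 / √2`. -/
def OnSphere (P : Finset E3) : Prop := ∀ x ∈ P, ‖x‖ = 1 / Real.sqrt 2

/-- The unit-distance paths with `k` vertices in `P`. -/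
def paths (P : Finset E3) (k : ℕ) : Set (Fin k → E3) :=
  {p | Function.Injective p ∧ (∀ i, p i ∈ P) ∧
    ∀ i : Fin k, ∀ h : (i : ℕ) + 1 < k, dist (p i) (p ⟨(i : ℕ) + 1, h⟩) = 1}

/-- The `i`-th vertex of a path, with the junk value `0` beyond its end. -/
def vtx {k : ℕ} (p : Fin k → E3) (i : ℕ) : E3 := if h : i < k then p ⟨i, h⟩ else 0

lemma vtx_of_lt {k : ℕ} (p : Fin k → E3) {i : ℕ} (h : i < k) : vtx p i = p ⟨i, h⟩ := dif_pos h

/-- The block of `a` consecutive vertices of `p` starting at position `o`. -/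
def seg {k : ℕ} (p : Fin k → E3) (o a : ℕ) : Fin a → E3 := fun i => vtx p (o + i)

/-- Picks exactly one of any two antipodal nonzero points. -/
noncomputable def half (z : E3) : Bool :=
  open Classical in
  decide (0 < z 0 ∨ (z 0 = 0 ∧ (0 < z 1 ∨ (z 1 = 0 ∧ 0 < z 2))))

lemma eq_of_half {z w : E3} (hw : ‖w‖ = 1 / Real.sqrt 2) (h : z = w ∨ z = -w)
    (hh : half z = half w) : z = w := by
  rcases h with h | h
  · exact h
  exfalso
  have hd := dot_self hw
  have hne : ¬ (w 0 = 0 ∧ w 1 = 0 ∧ w 2 = 0) := by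
    rintro ⟨a, b, c⟩
    unfold dot at hd
    rw [a, b, c] at hd; norm_num at hd
  subst h
  simp only [half, decide_eq_decide, PiLp.neg_apply, neg_eq_zero, Left.neg_pos_iff] at hh
  have key : ∀ a b c : ℝ, (a < 0 ∨ a = 0 ∧ (b < 0 ∨ b = 0 ∧ c < 0) ↔
      0 < a ∨ a = 0 ∧ (0 < b ∨ b = 0 ∧ 0 < c)) → a = 0 ∧ b = 0 ∧ c = 0 := by
    intro a b c
    rcases lt_trichotomy a 0 with h0 | h0 | h0 <;> rcases lt_trichotomy b 0 with h1 | h1 | h1 <;>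
      rcases lt_trichotomy c 0 with h2 | h2 | h2 <;> grind
  exact hne (key _ _ _ hh)

section
variable {P : Finset E3} {k : ℕ}

lemma paths_finite (P : Finset E3) (k : ℕ) : (paths P k).Finite :=
  (Set.Finite.pi' fun _ : Fin k => P.finite_toSet).subset fun _ hp i => hp.2.1 i

lemma vtx_mem {p : Fin k → E3} (hp : p ∈ paths P k) {i : ℕ} (h : i < k) : vtx p i ∈ P := by
  rw [vtx_of_lt p h]; exact hp.2.1 _

lemma vtx_ne {p : Fin k → E3} (hp : p ∈ paths P k) {i j : ℕ} (hi : i < k) (hj : j < k)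
    (hij : i ≠ j) : vtx p i ≠ vtx p j := by
  rw [vtx_of_lt p hi, vtx_of_lt p hj]
  exact fun h => hij (by simpa using hp.1 h)

lemma vtx_dist {p : Fin k → E3} (hp : p ∈ paths P k) {i : ℕ} (h : i + 1 < k) :
    dist (vtx p i) (vtx p (i + 1)) = 1 := by
  rw [vtx_of_lt p h, vtx_of_lt p (Nat.lt_of_succ_lt h)]
  exact hp.2.2 ⟨i, _⟩ h

lemma vtx_dot (hP : OnSphere P) {p : Fin k → E3} (hp : p ∈ paths P k) {i : ℕ} (h : i + 1 < k) :
    dot (vtx p i) (vtx p (i + 1)) = 0 :=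
  (dist_eq_one_iff (hP _ (vtx_mem hp (by omega))) (hP _ (vtx_mem hp h))).1 (vtx_dist hp h)

lemma dot_comm' (x y : E3) : dot x y = dot y x := by unfold dot; ring

lemma path_ext {p q : Fin k → E3} (h : ∀ i < k, vtx p i = vtx q i) : p = q := by
  ext1 i
  have := h i i.2
  rwa [vtx_of_lt p i.2, vtx_of_lt q i.2] at this

lemma seg_mem {p : Fin k → E3} (hp : p ∈ paths P k) {o a : ℕ} (h : o + a ≤ k) :
    seg p o a ∈ paths P a := by
  refine ⟨fun i j hij => ?_, fun i => vtx_mem hp (by omega), fun i hi => vtx_dist hp (by omega)⟩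
  by_contra hne
  exact vtx_ne hp (i := o + i) (j := o + j) (by omega) (by omega)
    (fun h => hne (Fin.ext (by omega))) hij

lemma vtx_eq_of_seg {p q : Fin k → E3} {o a : ℕ} (h : seg p o a = seg q o a) {i : ℕ}
    (h1 : o ≤ i) (h2 : i < o + a) : vtx p i = vtx q i := by
  have := congrFun h ⟨i - o, by omega⟩
  simpa [seg, Nat.add_sub_cancel' h1] using this

/-- The vertex between two given ones that are not antipodal is determined up to sign. -/
lemma vtx_mid (hP : OnSphere P) {p q : Fin k → E3} (hp : p ∈ paths P k) (hq : q ∈ paths P k)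
    {j : ℕ} (hj : j + 2 < k) (h0 : vtx p j = vtx q j) (h2 : vtx p (j + 2) = vtx q (j + 2))
    (hne : vtx p j ≠ -vtx p (j + 2)) (hh : half (vtx p (j + 1)) = half (vtx q (j + 1))) :
    vtx p (j + 1) = vtx q (j + 1) := by
  have m := fun {i : ℕ} (h : i < k) => hP _ (vtx_mem hp h)
  have m' := fun {i : ℕ} (h : i < k) => hP _ (vtx_mem hq h)
  refine eq_of_half (m' (by omega)) (common_nbr (m (i := j) (by omega)) (m hj) (m (by omega))
    (m' (by omega)) (vtx_ne hp (by omega) hj (by omega)) hne (vtx_dot hP hp (by omega)) ?_ ?_ ?_) hh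
  · rw [dot_comm']; exact vtx_dot hP hp hj
  · rw [h0]; exact vtx_dot hP hq (by omega)
  · rw [h2, dot_comm']; exact vtx_dot hP hq hj

/-- A family of paths in which each member is determined by three of its segments and a label
from a finite set is at most as large as the corresponding product. -/
lemma ncard_le_of_seg {κ : Type*} [Fintype κ] {T : Set (Fin k → E3)} (hT : T ⊆ paths P k)
    (β : (Fin k → E3) → κ) (o₁ a o₂ b o₃ c : ℕ) (h₁ : o₁ + a ≤ k) (h₂ : o₂ + b ≤ k)
    (h₃ : o₃ + c ≤ k)
    (hinj : ∀ p ∈ T, ∀ q ∈ T, seg p o₁ a = seg q o₁ a → seg p o₂ b = seg q o₂ b →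
      seg p o₃ c = seg q o₃ c → β p = β q → p = q) :
    T.ncard ≤ Fintype.card κ * ((paths P a).ncard * (paths P b).ncard * (paths P c).ncard) := by
  have hfin : ((Set.univ : Set κ) ×ˢ ((paths P a ×ˢ paths P b) ×ˢ paths P c)).Finite :=
    Set.finite_univ.prod (((paths_finite P a).prod (paths_finite P b)).prod (paths_finite P c))
  have := Set.ncard_le_ncard_of_injOn (s := T)
    (t := (Set.univ : Set κ) ×ˢ ((paths P a ×ˢ paths P b) ×ˢ paths P c))
    (fun p => (β p, (seg p o₁ a, seg p o₂ b), seg p o₃ c))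
    (fun p hp => ⟨Set.mem_univ _, ⟨seg_mem (hT hp) h₁, seg_mem (hT hp) h₂⟩, seg_mem (hT hp) h₃⟩)
    (fun p hp q hq h => by
      simp only [Prod.mk.injEq] at h
      exact hinj p hp q hq h.2.1.1 h.2.1.2 h.2.2 h.1) hfin
  rwa [Set.ncard_prod, Set.ncard_prod, Set.ncard_prod, Set.ncard_univ, Nat.card_eq_fintype_card]
    at this

lemma ncard_paths_zero : (paths P 0).ncard = 1 := by
  rw [Set.ncard_eq_one]
  refine ⟨Fin.elim0, Set.eq_singleton_iff_unique_mem.2 ⟨⟨?_, ?_, ?_⟩, fun p _ => ?_⟩⟩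
  · exact fun i => i.elim0
  · exact fun i => i.elim0
  · exact fun i => i.elim0
  · exact funext fun i => i.elim0

/-- `ncard_le_of_seg` with two segments. -/
lemma ncard_le_of_seg₂ {κ : Type*} [Fintype κ] {T : Set (Fin k → E3)} (hT : T ⊆ paths P k)
    (β : (Fin k → E3) → κ) (o₁ a o₂ b : ℕ) (h₁ : o₁ + a ≤ k) (h₂ : o₂ + b ≤ k)
    (hinj : ∀ p ∈ T, ∀ q ∈ T, seg p o₁ a = seg q o₁ a → seg p o₂ b = seg q o₂ b →
      β p = β q → p = q) :
    T.ncard ≤ Fintype.card κ * ((paths P a).ncard * (paths P b).ncard) := by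
  have := ncard_le_of_seg hT β o₁ a o₂ b 0 0 h₁ h₂ (by omega)
    fun p hp q hq h1 h2 _ h => hinj p hp q hq h1 h2 h
  rwa [ncard_paths_zero, mul_one] at this

lemma ncard_split (S : Set (Fin k → E3)) :
    (paths P k).ncard ≤ (paths P k ∩ S).ncard + (paths P k \ S).ncard := by
  conv_lhs => rw [← Set.inter_union_sdiff (paths P k) S]
  exact Set.ncard_union_le _ _

lemma ncard_paths_one : (paths P 1).ncard ≤ P.card := by
  have := Set.ncard_le_ncard_of_injOn (s := paths P 1) (t := (P : Set E3)) (fun p => vtx p 0)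
    (fun p hp => vtx_mem hp one_pos)
    (fun p _ q _ h => path_ext fun i hi => by rwa [Nat.lt_one_iff.1 hi]) P.finite_toSet
  rwa [Set.ncard_coe_finset] at this

lemma ncard_paths_three (hP : OnSphere P) : (paths P 3).ncard ≤ 3 * (P.card * P.card) := by
  have h1 := ncard_split (P := P) {p : Fin 3 → E3 | vtx p 0 = -vtx p 2}
  have h2 := ncard_le_of_seg₂ (P := P) (T := paths P 3 ∩ {p : Fin 3 → E3 | vtx p 0 = -vtx p 2})
    Set.inter_subset_left (fun _ => ()) 0 1 1 1 (by omega) (by omega) ?_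
  have h3 := ncard_le_of_seg₂ (P := P) (T := paths P 3 \ {p : Fin 3 → E3 | vtx p 0 = -vtx p 2})
    Set.sdiff_subset (fun p => half (vtx p 1)) 0 1 2 1 (by omega) (by omega) ?_
  · simp only [Fintype.card_unit, Fintype.card_bool] at h2 h3
    have := Nat.mul_le_mul (ncard_paths_one (P := P)) (ncard_paths_one (P := P))
    omega
  · intro p hp q hq h1 h2 hb
    have e0 := vtx_eq_of_seg h1 (i := 0) (by omega) (by omega)
    have e2 := vtx_eq_of_seg h2 (i := 2) (by omega) (by omega)
    have e1 := vtx_mid hP hp.1 hq.1 (j := 0) (by omega) e0 e2 hp.2 hb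
    exact path_ext fun i hi => by interval_cases i <;> assumption
  · intro p hp q hq h1 h2 hb
    have e0 := vtx_eq_of_seg h1 (i := 0) (by omega) (by omega)
    have e1 := vtx_eq_of_seg h2 (i := 1) (by omega) (by omega)
    have e2 : vtx p 2 = vtx q 2 := by
      rw [← neg_eq_iff_eq_neg.2 hp.2.symm.symm, ← neg_eq_iff_eq_neg.2 hq.2.symm.symm, e0]
    exact path_ext fun i hi => by interval_cases i <;> assumption

lemma ncard_paths_five (hP : OnSphere P) :
    (paths P 5).ncard ≤ 4 * (P.card * (paths P 3).ncard) := by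
  have h1 := ncard_split (P := P) {p : Fin 5 → E3 | vtx p 0 = -vtx p 2}
  have h2 := ncard_le_of_seg₂ (P := P) (T := paths P 5 ∩ {p : Fin 5 → E3 | vtx p 0 = -vtx p 2})
    Set.inter_subset_left (fun p => half (vtx p 3)) 0 3 4 1 (by omega) (by omega) ?_
  have h3 := ncard_le_of_seg₂ (P := P) (T := paths P 5 \ {p : Fin 5 → E3 | vtx p 0 = -vtx p 2})
    Set.sdiff_subset (fun p => half (vtx p 1)) 0 1 2 3 (by omega) (by omega) ?_
  · simp only [Fintype.card_bool] at h2 h3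
    have := Nat.mul_le_mul_right (paths P 3).ncard (ncard_paths_one (P := P))
    rw [mul_comm (paths P 3).ncard] at h2
    omega
  · intro p hp q hq h1 h2 hb
    have e0 := vtx_eq_of_seg h1 (i := 0) (by omega) (by omega)
    have e2 := vtx_eq_of_seg h2 (i := 2) (by omega) (by omega)
    have e3 := vtx_eq_of_seg h2 (i := 3) (by omega) (by omega)
    have e4 := vtx_eq_of_seg h2 (i := 4) (by omega) (by omega)
    have e1 := vtx_mid hP hp.1 hq.1 (j := 0) (by omega) e0 e2 hp.2 hb
    exact path_ext fun i hi => by interval_cases i <;> assumption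
  · intro p hp q hq h1 h2 hb
    have e0 := vtx_eq_of_seg h1 (i := 0) (by omega) (by omega)
    have e1 := vtx_eq_of_seg h1 (i := 1) (by omega) (by omega)
    have e2 := vtx_eq_of_seg h1 (i := 2) (by omega) (by omega)
    have e4 := vtx_eq_of_seg h2 (i := 4) (by omega) (by omega)
    -- the path cannot turn back to the antipode twice, as its ends would coincide
    have hne : vtx p 2 ≠ -vtx p 4 := fun h => by
      have h' : vtx p 0 = -vtx p 2 := hp.2
      rw [h, neg_neg] at h'
      exact vtx_ne hp.1 (by omega) (by omega) (by omega) h'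
    have e3 := vtx_mid hP hp.1 hq.1 (j := 2) (by omega) e2 e4 hne hb
    exact path_ext fun i hi => by interval_cases i <;> assumption

/-- The paths whose fourth and sixth vertices are antipodal; they turn back at the fifth. -/
def turn (P : Finset E3) (k : ℕ) : Set (Fin k → E3) :=
  paths P k ∩ {p | vtx p 3 = -vtx p 5}

/-- Cutting a path at its fifth vertex. -/
lemma ncard_paths_le_turn (hP : OnSphere P) (hk : 6 ≤ k) :
    (paths P k).ncard ≤ (turn P k).ncard + 2 * ((paths P 4).ncard * (paths P (k - 5)).ncard) := by
  refine (ncard_split (P := P) {p : Fin k → E3 | vtx p 3 = -vtx p 5}).trans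
    (Nat.add_le_add_left ?_ _)
  have h3 := ncard_le_of_seg₂ (P := P) (T := paths P k \ {p : Fin k → E3 | vtx p 3 = -vtx p 5})
    Set.sdiff_subset (fun p => half (vtx p 4)) 0 4 5 (k - 5) (by omega) (by omega) ?_
  · rwa [Fintype.card_bool] at h3
  intro p hp q hq h1 h2 hb
  have e3 := vtx_eq_of_seg h1 (i := 3) (by omega) (by omega)
  have e5 := vtx_eq_of_seg h2 (i := 5) (by omega) (by omega)
  have e4 := vtx_mid hP hp.1 hq.1 (j := 3) (by omega) e3 e5 hp.2 hb
  refine path_ext fun i hi => ?_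
  rcases lt_trichotomy i 4 with h | rfl | h
  · exact vtx_eq_of_seg h1 (by omega) (by omega)
  · exact e4
  · exact vtx_eq_of_seg h2 (by omega) (by omega)

lemma turn_ne (hk : 6 ≤ k) {p : Fin k → E3} (hp : p ∈ turn P k) :
    vtx p 1 ≠ -vtx p 3 := fun h => by
  have h' : vtx p 3 = -vtx p 5 := hp.2
  rw [h', neg_neg] at h
  exact vtx_ne hp.1 (by omega) (by omega) (by omega) h

lemma turn_ne' (hk : 8 ≤ k) {p : Fin k → E3} (hp : p ∈ turn P k) :
    vtx p 5 ≠ -vtx p 7 := fun h => by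
  have h' : vtx p 3 = -vtx p 5 := hp.2
  rw [h, neg_neg] at h'
  exact vtx_ne hp.1 (by omega) (by omega) (by omega) h'

lemma turn_five {p q : Fin k → E3} (hp : p ∈ turn P k) (hq : q ∈ turn P k)
    (h : vtx p 3 = vtx q 3) : vtx p 5 = vtx q 5 := by
  have h1 : vtx p 3 = -vtx p 5 := hp.2
  have h2 : vtx q 3 = -vtx q 5 := hq.2
  rw [h1, h2] at h
  exact neg_injective h

lemma ncard_turn_six (hP : OnSphere P) :
    (turn P 6).ncard ≤ 2 * ((paths P 2).ncard * (paths P 2).ncard) := by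
  have h := ncard_le_of_seg₂ (P := P) (T := turn P 6) Set.inter_subset_left
    (fun p => half (vtx p 2)) 0 2 3 2 (by omega) (by omega) ?_
  · rwa [Fintype.card_bool] at h
  intro p hp q hq h1 h2 hb
  have e0 := vtx_eq_of_seg h1 (i := 0) (by omega) (by omega)
  have e1 := vtx_eq_of_seg h1 (i := 1) (by omega) (by omega)
  have e3 := vtx_eq_of_seg h2 (i := 3) (by omega) (by omega)
  have e4 := vtx_eq_of_seg h2 (i := 4) (by omega) (by omega)
  have e2 := vtx_mid hP hp.1 hq.1 (j := 1) (by omega) e1 e3 (turn_ne le_rfl hp) hb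
  have e5 := turn_five hp hq e3
  exact path_ext fun i hi => by interval_cases i <;> assumption

lemma ncard_turn_le (hP : OnSphere P) (hk : 6 ≤ k) :
    (turn P k).ncard ≤ 2 * ((paths P 2).ncard * (paths P (k - 3)).ncard) := by
  have h := ncard_le_of_seg₂ (P := P) (T := turn P k) Set.inter_subset_left
    (fun p => half (vtx p 2)) 0 2 3 (k - 3) (by omega) (by omega) ?_
  · rwa [Fintype.card_bool] at h
  intro p hp q hq h1 h2 hb
  have e1 := vtx_eq_of_seg h1 (i := 1) (by omega) (by omega)
  have e3 := vtx_eq_of_seg h2 (i := 3) (by omega) (by omega)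
  have e2 := vtx_mid hP hp.1 hq.1 (j := 1) (by omega) e1 e3 (turn_ne hk hp) hb
  refine path_ext fun i hi => ?_
  rcases lt_trichotomy i 2 with h | rfl | h
  · exact vtx_eq_of_seg h1 (by omega) (by omega)
  · exact e2
  · exact vtx_eq_of_seg h2 (by omega) (by omega)

lemma ncard_turn_le' (hP : OnSphere P) (hk : 8 ≤ k) :
    (turn P k).ncard ≤
      4 * ((paths P 2).ncard * (paths P 2).ncard * (paths P (k - 7)).ncard) := by
  have h := ncard_le_of_seg (P := P) (T := turn P k) Set.inter_subset_left
    (fun p => (half (vtx p 2), half (vtx p 6))) 0 2 3 2 7 (k - 7) (by omega) (by omega)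
    (by omega) ?_
  · rwa [Fintype.card_prod, Fintype.card_bool] at h
  intro p hp q hq h1 h2 h3 hb
  simp only [Prod.mk.injEq] at hb
  have e1 := vtx_eq_of_seg h1 (i := 1) (by omega) (by omega)
  have e3 := vtx_eq_of_seg h2 (i := 3) (by omega) (by omega)
  have e4 := vtx_eq_of_seg h2 (i := 4) (by omega) (by omega)
  have e2 := vtx_mid hP hp.1 hq.1 (j := 1) (by omega) e1 e3 (turn_ne (by omega) hp) hb.1
  have e5 := turn_five hp hq e3
  have e7 := vtx_eq_of_seg h3 (i := 7) (by omega) (by omega)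
  have e6 := vtx_mid hP hp.1 hq.1 (j := 5) (by omega) e5 e7 (turn_ne' hk hp) hb.2
  refine path_ext fun i hi => ?_
  by_cases h : i < 7
  · have e0 := vtx_eq_of_seg h1 (i := 0) (by omega) (by omega)
    interval_cases i <;> assumption
  · exact vtx_eq_of_seg h3 (by omega) (by omega)

open Classical in
lemma ncard_paths_two (hP : OnSphere P) :
    (paths P 2).ncard ≤ ((P ×ˢ P).filter fun z => dot z.1 z.2 = 0).card := by
  have := Set.ncard_le_ncard_of_injOn (s := paths P 2)
    (t := (((P ×ˢ P).filter fun z => dot z.1 z.2 = 0 : Finset (E3 × E3)) : Set (E3 × E3)))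
    (fun p => (vtx p 0, vtx p 1))
    (fun p hp => by
      have h0 := vtx_mem hp (i := 0) (by omega)
      have h1 := vtx_mem hp (i := 1) (by omega)
      have h2 := vtx_dot hP hp (i := 0) (by omega)
      simpa using ⟨⟨h0, h1⟩, h2⟩)
    (fun p _ q _ h => path_ext fun i hi => by
      simp only [Prod.mk.injEq] at h
      obtain ⟨e0, e1⟩ := h
      interval_cases i <;> assumption) (Finset.finite_toSet _)
  rwa [Set.ncard_coe_finset] at this

end

/-! ### Paths with four vertices -/

section
open Classical

/-- The number of neighbours of `y` in `P`. -/
noncomputable def dg (P : Finset E3) (y : E3) : ℕ := (P.filter fun z => dot y z = 0).card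

/-- The number of unit-distance pairs between two point sets on the sphere. -/
noncomputable def ed (Q R : Finset E3) : ℕ := ((Q ×ˢ R).filter fun z => dot z.1 z.2 = 0).card

lemma ed_eq_sum (Q R : Finset E3) : ed Q R = ∑ y ∈ Q, dg R y := by
  simp only [ed, dg, Finset.card_filter, Finset.sum_product]

lemma dg_le (P : Finset E3) (y : E3) : dg P y ≤ P.card := Finset.card_filter_le _ _

/-- The number of walks of three steps whose middle edge is `yz`. -/
noncomputable def wt (P : Finset E3) (y z : E3) : ℕ := if dot y z = 0 then dg P y * dg P z else 0

lemma wt_comm (P : Finset E3) (y z : E3) : wt P y z = wt P z y := by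
  simp only [wt, dot_comm' y z, mul_comm]

lemma ncard_paths_four_le {P : Finset E3} (hP : OnSphere P) :
    (paths P 4).ncard ≤ ∑ y ∈ P, ∑ z ∈ P, wt P y z := by
  set T : Finset ((_ : E3 × E3) × E3 × E3) :=
    ((P ×ˢ P).filter fun z => dot z.1 z.2 = 0).sigma fun z =>
      (P.filter fun x => dot z.1 x = 0) ×ˢ (P.filter fun x => dot z.2 x = 0) with hT
  have h1 : T.card = ∑ y ∈ P, ∑ z ∈ P, wt P y z := by
    rw [hT, Finset.card_sigma, Finset.sum_filter, Finset.sum_product]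
    simp only [Finset.card_product, wt, dg]
  rw [← h1, ← Set.ncard_coe_finset]
  refine Set.ncard_le_ncard_of_injOn (fun p => ⟨(vtx p 1, vtx p 2), (vtx p 0, vtx p 3)⟩)
    (fun p hp => ?_) (fun p _ q _ h => ?_) (Finset.finite_toSet _)
  · have m0 := vtx_mem hp (i := 0) (by omega)
    have m1 := vtx_mem hp (i := 1) (by omega)
    have m2 := vtx_mem hp (i := 2) (by omega)
    have m3 := vtx_mem hp (i := 3) (by omega)
    have d0 := vtx_dot hP hp (i := 0) (by omega)
    have d1 := vtx_dot hP hp (i := 1) (by omega)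
    have d2 := vtx_dot hP hp (i := 2) (by omega)
    rw [dot_comm'] at d0
    simp only [hT, Finset.coe_sigma, Set.mem_sigma_iff, Finset.mem_coe, Finset.mem_filter,
      Finset.mem_product]
    exact ⟨⟨⟨m1, m2⟩, d1⟩, ⟨m0, d0⟩, m3, d2⟩
  · simp only [Sigma.mk.injEq, Prod.mk.injEq, heq_eq_eq] at h
    obtain ⟨⟨e1, e2⟩, e0, e3⟩ := h
    exact path_ext fun i hi => by interval_cases i <;> assumption

/-- The neighbours of a point have total degree linear in `n`, because almost every other point is
counted at most twice. -/
lemma sum_wt_le {P : Finset E3} (hP : OnSphere P) {y : E3} (hy : y ∈ P) :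
    ∑ z ∈ P, wt P y z ≤ dg P y * (4 * P.card) := by
  have h1 : ∑ z ∈ P, wt P y z = dg P y * ∑ z ∈ P, if dot y z = 0 then dg P z else 0 := by
    rw [Finset.mul_sum]
    exact Finset.sum_congr rfl fun z _ => by simp only [wt]; split_ifs <;> simp
  rw [h1]
  refine Nat.mul_le_mul_left _ ?_
  have h2 : ∑ z ∈ P, (if dot y z = 0 then dg P z else 0) =
      ∑ x ∈ P, (P.filter fun z => dot y z = 0 ∧ dot z x = 0).card := by
    simp only [dg, Finset.card_filter]
    rw [Finset.sum_comm]
    refine Finset.sum_congr rfl fun z _ => ?_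
    by_cases h : dot y z = 0 <;> simp [h]
  have h3 : ∀ x ∈ P, (P.filter fun z => dot y z = 0 ∧ dot z x = 0).card ≤
      2 + if x ∈ ({y, -y} : Finset E3) then P.card else 0 := by
    intro x hx
    by_cases h : x ∈ ({y, -y} : Finset E3)
    · rw [if_pos h]
      exact (Finset.card_filter_le _ _).trans (by omega)
    · rw [if_neg h, add_zero]
      simp only [Finset.mem_insert, Finset.mem_singleton, not_or] at h
      rcases (P.filter fun z => dot y z = 0 ∧ dot z x = 0).eq_empty_or_nonempty with h0 | ⟨w, hw⟩
      · rw [h0]; simp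
      refine (Finset.card_le_card (t := {w, -w}) fun z hz => ?_).trans Finset.card_le_two
      rw [Finset.mem_filter] at hz hw
      rw [dot_comm' _ x] at hz hw
      have := common_nbr (hP x hx) (hP y hy) (hP z hz.1) (hP w hw.1) h.1 h.2 hz.2.2 hz.2.1
        hw.2.2 hw.2.1
      simpa using this
  rw [h2]
  refine (Finset.sum_le_sum h3).trans ?_
  rw [Finset.sum_add_distrib, Finset.sum_const, ← Finset.sum_filter, Finset.sum_const]
  have h4 : (P.filter fun x => x ∈ ({y, -y} : Finset E3)).card ≤ 2 :=
    (Finset.card_le_card (fun x hx => (Finset.mem_filter.1 hx).2)).trans Finset.card_le_two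
  have := Nat.mul_le_mul_right P.card h4
  simp only [smul_eq_mul]
  omega

/-- Splitting the middle edges according to whether an end has high degree. -/
lemma sum_wt_split {P : Finset E3} (hP : OnSphere P) (H : Finset E3) (hH : H ⊆ P) :
    ∑ y ∈ P, ∑ z ∈ P, wt P y z ≤ 8 * P.card * ed H P +
      ∑ y ∈ P \ H, ∑ z ∈ P \ H, wt P y z := by
  have h1 : ∑ y ∈ H, ∑ z ∈ P, wt P y z ≤ 4 * P.card * ed H P := by
    rw [ed_eq_sum, Finset.mul_sum]
    exact Finset.sum_le_sum fun y hy => (sum_wt_le hP (hH hy)).trans_eq (mul_comm _ _)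
  have h2 : ∑ y ∈ P \ H, ∑ z ∈ P, wt P y z =
      ∑ y ∈ P \ H, ∑ z ∈ P \ H, wt P y z + ∑ y ∈ P \ H, ∑ z ∈ H, wt P y z := by
    rw [← Finset.sum_add_distrib]
    exact Finset.sum_congr rfl fun y _ => (Finset.sum_sdiff hH).symm
  have h3 : ∑ y ∈ P \ H, ∑ z ∈ H, wt P y z ≤ ∑ y ∈ H, ∑ z ∈ P, wt P y z := by
    rw [Finset.sum_comm]
    refine Finset.sum_le_sum fun z _ => ?_
    rw [Finset.sum_congr rfl fun y _ => wt_comm P y z]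
    exact Finset.sum_le_sum_of_subset Finset.sdiff_subset
  rw [← Finset.sum_sdiff hH, h2]
  have h4 : 8 * P.card * ed H P = 2 * (4 * P.card * ed H P) := by ring
  omega

end

section
variable {A : ℝ}

open Classical in
/-- A class of points of degree at least `a` satisfies `a m ^ (2/3) = O(n)`. -/
lemma rich_le (hA : 1 ≤ A) (hE : ∀ Q R : Finset E3, OnSphere Q → OnSphere R → (ed Q R : ℝ) ≤
      A * ((Q.card : ℝ) ^ (2 / 3 : ℝ) * (R.card : ℝ) ^ (2 / 3 : ℝ) + Q.card + R.card))
    {P Y : Finset E3} (hP : OnSphere P) (hY : Y ⊆ P) {a : ℝ}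
    (hd : ∀ y ∈ Y, a ≤ dg P y) :
    a * (Y.card : ℝ) ^ (2 / 3 : ℝ) ≤ 3 * A * P.card := by
  rcases Y.eq_empty_or_nonempty with rfl | hne
  · simp only [Finset.card_empty, Nat.cast_zero]
    rw [Real.zero_rpow (by norm_num)]
    have : (0 : ℝ) ≤ P.card := by positivity
    nlinarith
  have h1 : a * Y.card ≤ ed Y P := by
    rw [ed_eq_sum]; push_cast
    rw [mul_comm, ← nsmul_eq_mul]
    exact Finset.card_nsmul_le_sum _ _ _ hd
  have h2 := h1.trans (hE Y P (fun x hx => hP x (hY hx)) hP)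
  have hm1 : (1 : ℝ) ≤ Y.card := by exact_mod_cast hne.card_pos
  have hmn : (Y.card : ℝ) ≤ P.card := by exact_mod_cast Finset.card_le_card hY
  generalize (Y.card : ℝ) = m at *
  generalize (P.card : ℝ) = n at *
  set α := m ^ (1 / 3 : ℝ) with hα
  set β := n ^ (1 / 3 : ℝ) with hβ
  have e1 : m = α ^ 3 := by
    rw [hα, ← Real.rpow_natCast, ← Real.rpow_mul (by linarith)]; norm_num
  have e2 : n = β ^ 3 := by
    rw [hβ, ← Real.rpow_natCast, ← Real.rpow_mul (by linarith)]; norm_num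
  have e3 : m ^ (2 / 3 : ℝ) = α ^ 2 := by
    rw [hα, ← Real.rpow_natCast, ← Real.rpow_mul (by linarith)]; norm_num
  have e4 : n ^ (2 / 3 : ℝ) = β ^ 2 := by
    rw [hβ, ← Real.rpow_natCast, ← Real.rpow_mul (by linarith)]; norm_num
  have hα1 : 1 ≤ α := Real.one_le_rpow hm1 (by norm_num)
  have hαβ : α ≤ β := Real.rpow_le_rpow (by linarith) hmn (by norm_num)
  rw [e3, e4, e1, e2] at h2
  rw [e3, e2]
  have hβ0 : 0 ≤ β := by linarith
  have hA0 : 0 ≤ A := by linarith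
  -- each of the three terms of the incidence bound is at most `n α`
  have t1 : α ^ 2 * β ^ 2 ≤ β ^ 3 * α := by
    have : 0 ≤ α * β ^ 2 * (β - α) := by have := sub_nonneg.2 hαβ; positivity
    linarith
  have t2 : α ^ 3 ≤ β ^ 3 * α := by
    have : α ^ 3 ≤ β ^ 3 := pow_le_pow_left₀ (by linarith) hαβ 3
    have : β ^ 3 * 1 ≤ β ^ 3 * α := mul_le_mul_of_nonneg_left hα1 (by positivity)
    linarith
  have t3 : β ^ 3 ≤ β ^ 3 * α := by
    have : β ^ 3 * 1 ≤ β ^ 3 * α := mul_le_mul_of_nonneg_left hα1 (by positivity)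
    linarith
  refine le_of_mul_le_mul_right ?_ (show 0 < α by linarith)
  calc a * α ^ 2 * α = a * α ^ 3 := by ring
    _ ≤ A * (α ^ 2 * β ^ 2 + α ^ 3 + β ^ 3) := h2
    _ ≤ A * (β ^ 3 * α + β ^ 3 * α + β ^ 3 * α) := by gcongr
    _ = 3 * A * β ^ 3 * α := by ring

open Classical in
/-- The points of degree at least `√n` have total degree linear in `n`. -/
lemma high_le (hA : 1 ≤ A) (hE : ∀ Q R : Finset E3, OnSphere Q → OnSphere R → (ed Q R : ℝ) ≤
      A * ((Q.card : ℝ) ^ (2 / 3 : ℝ) * (R.card : ℝ) ^ (2 / 3 : ℝ) + Q.card + R.card))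
    {P H : Finset E3} (hP : OnSphere P) (hH : H ⊆ P)
    (hd : ∀ y ∈ H, Real.sqrt P.card ≤ dg P y) :
    (ed H P : ℝ) ≤ A * (9 * A ^ 2 + 2) * P.card := by
  have h1 : Real.sqrt P.card * H.card ≤ ed H P := by
    rw [ed_eq_sum]; push_cast
    rw [mul_comm, ← nsmul_eq_mul]
    exact Finset.card_nsmul_le_sum _ _ _ hd
  have h2 := hE H P (fun x hx => hP x (hH hx)) hP
  have hmn : (H.card : ℝ) ≤ P.card := by exact_mod_cast Finset.card_le_card hH
  have hm0 : (0 : ℝ) ≤ H.card := by positivity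
  have hn0 : (0 : ℝ) ≤ P.card := by positivity
  generalize (H.card : ℝ) = m at *
  generalize (P.card : ℝ) = n at *
  generalize (ed H P : ℝ) = I at *
  set α := m ^ (1 / 3 : ℝ) with hα
  set β := n ^ (1 / 6 : ℝ) with hβ
  have e1 : m = α ^ 3 := by
    rw [hα, ← Real.rpow_natCast, ← Real.rpow_mul (by linarith)]; norm_num
  have e2 : n = β ^ 6 := by
    rw [hβ, ← Real.rpow_natCast, ← Real.rpow_mul (by linarith)]; norm_num
  have e3 : m ^ (2 / 3 : ℝ) = α ^ 2 := by
    rw [hα, ← Real.rpow_natCast, ← Real.rpow_mul (by linarith)]; norm_num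
  have e4 : n ^ (2 / 3 : ℝ) = β ^ 4 := by
    rw [hβ, ← Real.rpow_natCast, ← Real.rpow_mul (by linarith)]; norm_num
  have e5 : Real.sqrt n = β ^ 3 := by
    rw [hβ, ← Real.rpow_natCast, ← Real.rpow_mul (by linarith), Real.sqrt_eq_rpow]; norm_num
  have hα0 : 0 ≤ α := by positivity
  have hβ0 : 0 ≤ β := by positivity
  have hA0 : 0 ≤ A := by linarith
  rw [e3, e4] at h2
  have h3 : A * (α ^ 2 * β ^ 4 + m + n) ≤ A * (α ^ 2 * β ^ 4 + 2 * β ^ 6) :=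
    mul_le_mul_of_nonneg_left (by linarith) hA0
  have h4 := h2.trans h3
  rw [e5, e1] at h1
  have hαβ : α ≤ 3 * A * β := by
    rcases le_total α β with h | h
    · nlinarith
    rcases hβ0.eq_or_lt with h0 | h0
    · have : m ≤ 0 := by rw [← h0] at e2; linarith
      have : α = 0 := by
        rw [hα, le_antisymm this hm0]; exact Real.zero_rpow (by norm_num)
      rw [this]; positivity
    have hα' : 0 < α := h0.trans_le h
    have h5 : A * (α ^ 2 * β ^ 4 + 2 * β ^ 6) ≤ A * (3 * (α ^ 2 * β ^ 4)) := by
      refine mul_le_mul_of_nonneg_left ?_ hA0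
      have : β ^ 2 * β ^ 4 ≤ α ^ 2 * β ^ 4 := by gcongr
      linarith
    refine le_of_mul_le_mul_right ?_ (show 0 < β ^ 3 * α ^ 2 by positivity)
    linarith
  refine h4.trans ?_
  rw [e2]
  have : α ^ 2 * β ^ 4 ≤ (3 * A * β) ^ 2 * β ^ 4 := by gcongr
  calc A * (α ^ 2 * β ^ 4 + 2 * β ^ 6) ≤ A * ((3 * A * β) ^ 2 * β ^ 4 + 2 * β ^ 6) := by gcongr
    _ = A * (9 * A ^ 2 + 2) * β ^ 6 := by ring

open Classical in
/-- Points of degree below `√n`, grouped dyadically by degree, contribute `O(n²)` for each pair of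
classes. -/
lemma low_le (hA : 1 ≤ A) (hE : ∀ Q R : Finset E3, OnSphere Q → OnSphere R → (ed Q R : ℝ) ≤
      A * ((Q.card : ℝ) ^ (2 / 3 : ℝ) * (R.card : ℝ) ^ (2 / 3 : ℝ) + Q.card + R.card))
    {P L : Finset E3} (hP : OnSphere P) (hL : L ⊆ P)
    (hd : ∀ y ∈ L, (dg P y : ℝ) < Real.sqrt P.card) :
    ((∑ y ∈ L, ∑ z ∈ L, wt P y z : ℕ) : ℝ) ≤
      (Nat.log 2 P.card + 1) ^ 2 * (4 * A * (9 * A ^ 2 + 2) * (P.card : ℝ) ^ 2) := by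
  set D := (L ×ˢ L).filter fun z => dot z.1 z.2 = 0 with hD
  have hDm : ∀ z ∈ D, (z.1 ∈ L ∧ z.2 ∈ L) ∧ dot z.1 z.2 = 0 := fun z hz => by
    simpa [hD] using hz
  have h0 : ∑ y ∈ L, ∑ z ∈ L, wt P y z = ∑ z ∈ D, dg P z.1 * dg P z.2 := by
    rw [hD, Finset.sum_filter, Finset.sum_product]; rfl
  set M := Finset.range (Nat.log 2 P.card + 1)
  set g : E3 × E3 → ℕ × ℕ := fun z => (Nat.log 2 (dg P z.1), Nat.log 2 (dg P z.2)) with hg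
  have hmap : ∀ z ∈ D, g z ∈ M ×ˢ M := by
    intro z _
    simp only [hg, M, Finset.mem_product, Finset.mem_range, Nat.lt_succ_iff]
    exact ⟨Nat.log_mono_right (dg_le _ _), Nat.log_mono_right (dg_le _ _)⟩
  rw [h0, ← Finset.sum_fiberwise_of_maps_to hmap]
  push_cast
  have hn0 : (0 : ℝ) ≤ P.card := by positivity
  have hA0 : 0 ≤ A := by linarith
  have hkey : ∀ v ∈ M ×ˢ M, ∑ z ∈ D.filter (fun z => g z = v), (dg P z.1 : ℝ) * dg P z.2 ≤
      4 * A * (9 * A ^ 2 + 2) * (P.card : ℝ) ^ 2 := by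
    rintro ⟨i, j⟩ -
    set Y : ℕ → Finset E3 := fun i => L.filter fun y => dg P y ≠ 0 ∧ Nat.log 2 (dg P y) = i with hY
    have hYP : ∀ i, Y i ⊆ P := fun i => (Finset.filter_subset _ _).trans hL
    have hYS : ∀ i, OnSphere (Y i) := fun i x hx => hP x (hYP i hx)
    have hYd : ∀ i, ∀ y ∈ Y i, (2 : ℝ) ^ i ≤ dg P y ∧ (dg P y : ℝ) ≤ 2 * 2 ^ i ∧
        (dg P y : ℝ) < Real.sqrt P.card := by
      intro i y hy
      obtain ⟨hyL, hy0, rfl⟩ := Finset.mem_filter.1 hy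
      refine ⟨?_, ?_, hd y hyL⟩
      · exact_mod_cast Nat.pow_log_le_self 2 hy0
      · have := (Nat.lt_pow_succ_log_self (b := 2) (by norm_num) (dg P y)).le
        rw [pow_succ'] at this
        exact_mod_cast this
    have hr := fun i => rich_le hA hE hP (hYP i) (a := 2 ^ i)
      fun y hy => (hYd i y hy).1
    have hsub : ∀ z ∈ D.filter (fun z => g z = (i, j)), z.1 ∈ Y i ∧ z.2 ∈ Y j := by
      intro z hz
      obtain ⟨hz, hgz⟩ := Finset.mem_filter.1 hz
      obtain ⟨⟨z1, z2⟩, hdot⟩ := hDm z hz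
      simp only [hg, Prod.mk.injEq] at hgz
      have p1 : dg P z.1 ≠ 0 := (Finset.card_pos.2 ⟨z.2, by simp [hL z2, hdot]⟩).ne'
      have p2 : dg P z.2 ≠ 0 :=
        (Finset.card_pos.2 ⟨z.1, by simp [hL z1, dot_comm' z.2, hdot]⟩).ne'
      simp only [hY, Finset.mem_filter]
      exact ⟨⟨z1, p1, hgz.1⟩, z2, p2, hgz.2⟩
    have hcard : (D.filter (fun z => g z = (i, j))).card ≤ ed (Y i) (Y j) := by
      refine Finset.card_le_card fun z hz => ?_
      have := hsub z hz
      rw [Finset.mem_filter, Finset.mem_product]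
      exact ⟨this, (hDm z (Finset.mem_filter.1 hz).1).2⟩
    rcases (D.filter (fun z => g z = (i, j))).eq_empty_or_nonempty with he | ⟨z₀, hz₀⟩
    · rw [he, Finset.sum_empty]; positivity
    have hs1 : (2 : ℝ) ^ i ≤ Real.sqrt P.card :=
      (hYd i _ (hsub z₀ hz₀).1).1.trans (hYd i _ (hsub z₀ hz₀).1).2.2.le
    have hs2 : (2 : ℝ) ^ j ≤ Real.sqrt P.card :=
      (hYd j _ (hsub z₀ hz₀).2).1.trans (hYd j _ (hsub z₀ hz₀).2).2.2.le
    have hab : (2 : ℝ) ^ i * 2 ^ j ≤ P.card :=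
      (mul_le_mul hs1 hs2 (by positivity) (by positivity)).trans_eq (Real.mul_self_sqrt hn0)
    have hb1 : ∑ z ∈ D.filter (fun z => g z = (i, j)), (dg P z.1 : ℝ) * dg P z.2 ≤
        (ed (Y i) (Y j) : ℝ) * ((2 * 2 ^ i) * (2 * 2 ^ j)) := by
      refine (Finset.sum_le_card_nsmul _ _ ((2 * 2 ^ i) * (2 * 2 ^ j)) fun z hz => ?_).trans ?_
      · exact mul_le_mul (hYd i _ (hsub z hz).1).2.1 (hYd j _ (hsub z hz).2).2.1
          (by positivity) (by positivity)
      · rw [nsmul_eq_mul]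
        exact mul_le_mul_of_nonneg_right (by exact_mod_cast hcard) (by positivity)
    have hm : ∀ i, ((Y i).card : ℝ) ≤ P.card := fun i => by
      exact_mod_cast Finset.card_le_card (hYP i)
    have hst := hE _ _ (hYS i) (hYS j)
    have ha0 : (0 : ℝ) < 2 ^ i := by positivity
    have hb0 : (0 : ℝ) < 2 ^ j := by positivity
    have q1 := hr i
    have q2 := hr j
    have m1 := hm i
    have m2 := hm j
    have p1 : 0 ≤ ((Y i).card : ℝ) ^ (2 / 3 : ℝ) := by positivity
    have p2 : 0 ≤ ((Y j).card : ℝ) ^ (2 / 3 : ℝ) := by positivity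
    have s0 : (0 : ℝ) ≤ (Y i).card := by positivity
    have t0 : (0 : ℝ) ≤ (Y j).card := by positivity
    generalize ((Y i).card : ℝ) ^ (2 / 3 : ℝ) = u at *
    generalize ((Y j).card : ℝ) ^ (2 / 3 : ℝ) = v at *
    generalize ((Y i).card : ℝ) = s at *
    generalize ((Y j).card : ℝ) = t at *
    generalize (ed (Y i) (Y j) : ℝ) = e at *
    generalize (2 : ℝ) ^ i = a at *
    generalize (2 : ℝ) ^ j = b at *
    generalize (P.card : ℝ) = n at *
    have c1 : (a * u) * (b * v) ≤ (3 * A * n) * (3 * A * n) :=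
      mul_le_mul q1 q2 (by positivity) (by positivity)
    have c2 : a * b * (s + t) ≤ n * (n + n) :=
      mul_le_mul hab (by linarith) (by linarith) hn0
    calc _ ≤ e * ((2 * a) * (2 * b)) := hb1
      _ ≤ A * (u * v + s + t) * ((2 * a) * (2 * b)) := by gcongr
      _ = 4 * A * ((a * u) * (b * v) + a * b * (s + t)) := by ring
      _ ≤ 4 * A * ((3 * A * n) * (3 * A * n) + n * (n + n)) := by gcongr
      _ = _ := by ring
  refine (Finset.sum_le_card_nsmul _ _ _ hkey).trans_eq ?_
  rw [Finset.card_product, nsmul_eq_mul]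
  simp only [M, Finset.card_range]
  push_cast; ring

open Classical in
lemma ncard_paths_four (hA : 1 ≤ A) (hE : ∀ Q R : Finset E3, OnSphere Q → OnSphere R →
      (ed Q R : ℝ) ≤
      A * ((Q.card : ℝ) ^ (2 / 3 : ℝ) * (R.card : ℝ) ^ (2 / 3 : ℝ) + Q.card + R.card))
    {P : Finset E3} (hP : OnSphere P) (hn : 3 ≤ P.card) :
    ((paths P 4).ncard : ℝ) ≤
      44 * A * (9 * A ^ 2 + 2) * (P.card : ℝ) ^ 2 * (Real.log P.card) ^ 2 := by
  set H := P.filter fun y => Real.sqrt P.card ≤ dg P y with hHd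
  have hH : H ⊆ P := Finset.filter_subset _ _
  have h1 := (ncard_paths_four_le hP).trans (sum_wt_split hP H hH)
  have h2 := high_le hA hE hP hH fun y hy => (Finset.mem_filter.1 hy).2
  have h3 := low_le hA hE hP (L := P \ H) Finset.sdiff_subset fun y hy => by
    simp only [hHd, Finset.mem_sdiff, Finset.mem_filter, not_and, not_le] at hy
    exact hy.2 hy.1
  have h1' : ((paths P 4).ncard : ℝ) ≤ 8 * P.card * ed H P +
      ((∑ y ∈ P \ H, ∑ z ∈ P \ H, wt P y z : ℕ) : ℝ) := by exact_mod_cast h1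
  have hn' : (3 : ℝ) ≤ P.card := by exact_mod_cast hn
  have hlog1 : 1 ≤ Real.log P.card := by
    rw [Real.le_log_iff_exp_le (by linarith)]
    linarith [Real.exp_one_lt_d9]
  have hlog2 : (Nat.log 2 P.card : ℝ) + 1 ≤ 3 * Real.log P.card := by
    have := Real.natLog_le_logb P.card 2
    have h5 : Real.logb (2 : ℕ) P.card ≤ 2 * Real.log P.card := by
      rw [Real.logb, div_le_iff₀ (Real.log_pos (by norm_num))]
      push_cast
      nlinarith [Real.log_two_gt_d9]
    linarith
  have hA0 : 0 ≤ A := by linarith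
  have h6 : ((Nat.log 2 P.card : ℝ) + 1) ^ 2 ≤ (3 * Real.log P.card) ^ 2 := by gcongr
  have hl : 1 ≤ Real.log P.card ^ 2 := one_le_pow₀ hlog1
  set n := (P.card : ℝ)
  set l := Real.log n
  set K := A * (9 * A ^ 2 + 2) with hK
  have hK0 : 0 ≤ K := by positivity
  have h7 : 8 * n * ed H P ≤ 8 * n * (K * n) := by gcongr
  have h8 : ((Nat.log 2 P.card : ℝ) + 1) ^ 2 * (4 * A * (9 * A ^ 2 + 2) * n ^ 2) ≤
      (3 * l) ^ 2 * (4 * A * (9 * A ^ 2 + 2) * n ^ 2) := by gcongr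
  have h9 : 8 * (K * n ^ 2) * 1 ≤ 8 * (K * n ^ 2) * l ^ 2 := by gcongr
  calc ((paths P 4).ncard : ℝ) ≤ 8 * n * (K * n) + (3 * l) ^ 2 * (4 * K * n ^ 2) := by
        rw [hK]; rw [hK] at h7; linarith
    _ ≤ 44 * (K * n ^ 2) * l ^ 2 := by linarith
    _ = _ := by rw [hK]; ring

end

/-! ### Growth rates -/

lemma one_le_log {n : ℕ} (hn : 3 ≤ n) : 1 ≤ Real.log n := by
  have hn' : (3 : ℝ) ≤ n := by exact_mod_cast hn
  rw [Real.le_log_iff_exp_le (by linarith)]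
  linarith [Real.exp_one_lt_d9]

/-- The quantity `f P` is at most `n ^ e` up to a constant and a power of `log n`, for `n ≥ 3`
points on the sphere; from `n = 3` on, `log n` exceeds `1`. -/
def Bd (f : Finset E3 → ℕ) (e : ℝ) : Prop :=
  ∃ C : ℝ, 0 ≤ C ∧ ∃ m : ℕ, ∀ P : Finset E3, OnSphere P → 3 ≤ P.card →
    (f P : ℝ) ≤ C * (P.card : ℝ) ^ e * Real.log P.card ^ m

lemma Bd.mul {f g : Finset E3 → ℕ} {d e : ℝ} (hf : Bd f d) (hg : Bd g e) :
    Bd (fun P => f P * g P) (d + e) := by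
  obtain ⟨C, hC, m, h⟩ := hf
  obtain ⟨C', hC', m', h'⟩ := hg
  refine ⟨C * C', mul_nonneg hC hC', m + m', fun P hP hn => ?_⟩
  have hl := one_le_log hn
  have hn0 : (0 : ℝ) < P.card := by exact_mod_cast (by omega : 0 < P.card)
  push_cast
  refine (mul_le_mul (h P hP hn) (h' P hP hn) (by positivity) (by positivity)).trans_eq ?_
  rw [Real.rpow_add hn0, pow_add]; ring

lemma Bd.mono {f g : Finset E3 → ℕ} {d e : ℝ} (hf : Bd f d) (hde : d ≤ e) {c : ℕ}
    (hg : ∀ P, OnSphere P → g P ≤ c * f P) : Bd g e := by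
  obtain ⟨C, hC, m, h⟩ := hf
  refine ⟨c * C, by positivity, m, fun P hP hn => ?_⟩
  have hl := one_le_log hn
  have hn1 : (1 : ℝ) ≤ P.card := by exact_mod_cast (by omega : 1 ≤ P.card)
  have h1 : (g P : ℝ) ≤ c * f P := by exact_mod_cast hg P hP
  have h2 : (P.card : ℝ) ^ d ≤ (P.card : ℝ) ^ e := Real.rpow_le_rpow_of_exponent_le hn1 hde
  calc (g P : ℝ) ≤ c * f P := h1
    _ ≤ c * (C * (P.card : ℝ) ^ d * Real.log P.card ^ m) := by
        gcongr; exact h P hP hn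
    _ ≤ c * (C * (P.card : ℝ) ^ e * Real.log P.card ^ m) := by gcongr
    _ = _ := by ring

lemma Bd.add {f g : Finset E3 → ℕ} {e : ℝ} (hf : Bd f e) (hg : Bd g e) :
    Bd (fun P => f P + g P) e := by
  obtain ⟨C, hC, m, h⟩ := hf
  obtain ⟨C', hC', m', h'⟩ := hg
  refine ⟨C + C', add_nonneg hC hC', m + m', fun P hP hn => ?_⟩
  have hl := one_le_log hn
  have e1 : Real.log P.card ^ m ≤ Real.log P.card ^ (m + m') :=
    pow_le_pow_right₀ hl (by omega)
  have e2 : Real.log P.card ^ m' ≤ Real.log P.card ^ (m + m') :=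
    pow_le_pow_right₀ hl (by omega)
  push_cast
  calc (f P : ℝ) + g P ≤ C * (P.card : ℝ) ^ e * Real.log P.card ^ m +
        C' * (P.card : ℝ) ^ e * Real.log P.card ^ m' := add_le_add (h P hP hn) (h' P hP hn)
    _ ≤ C * (P.card : ℝ) ^ e * Real.log P.card ^ (m + m') +
        C' * (P.card : ℝ) ^ e * Real.log P.card ^ (m + m') := by gcongr
    _ = _ := by ring

/-- The number of paths with `k` vertices as a function of the point set. -/
noncomputable def np (k : ℕ) : Finset E3 → ℕ := fun P => (paths P k).ncard

/-- The exponent in the bound for paths with `k` vertices. -/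
noncomputable def ex (k : ℕ) : ℝ :=
  if k % 5 = 2 then ((2 * (k + 3)) / 5 : ℕ) - (2 / 3 : ℝ) else ((2 * (k + 3)) / 5 : ℕ)

lemma ex_one (q : ℕ) : ex (5 * q + 1) = 2 * q + 1 := by
  rw [ex, if_neg (by omega), show 2 * (5 * q + 1 + 3) / 5 = 2 * q + 1 by omega]
  push_cast; ring

lemma ex_two (q : ℕ) : ex (5 * q + 2) = 2 * q + 4 / 3 := by
  rw [ex, if_pos (by omega), show 2 * (5 * q + 2 + 3) / 5 = 2 * q + 2 by omega]
  push_cast; ring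

lemma ex_three (q : ℕ) : ex (5 * q + 3) = 2 * q + 2 := by
  rw [ex, if_neg (by omega), show 2 * (5 * q + 3 + 3) / 5 = 2 * q + 2 by omega]
  push_cast; ring

lemma ex_four (q : ℕ) : ex (5 * q + 4) = 2 * q + 2 := by
  rw [ex, if_neg (by omega), show 2 * (5 * q + 4 + 3) / 5 = 2 * q + 2 by omega]
  push_cast; ring

lemma ex_five (q : ℕ) : ex (5 * q + 5) = 2 * q + 3 := by
  rw [ex, if_neg (by omega), show 2 * (5 * q + 5 + 3) / 5 = 2 * q + 3 by omega]
  push_cast; ring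

lemma bd_one : Bd (np 1) 1 := by
  refine ⟨1, zero_le_one, 0, fun P _ _ => ?_⟩
  rw [Real.rpow_one, pow_zero, one_mul, mul_one]
  exact_mod_cast ncard_paths_one (P := P)

lemma bd_two : Bd (np 2) (4 / 3) := by
  classical
  refine ⟨22, by norm_num, 0, fun P hP hn => ?_⟩
  rw [pow_zero, mul_one]
  exact le_trans (by exact_mod_cast ncard_paths_two hP) (unit_pairs_le P hP (by omega))

lemma bd_three : Bd (np 3) 2 := by
  refine ⟨3, by norm_num, 0, fun P hP hn => ?_⟩
  rw [pow_zero, mul_one, Real.rpow_two, sq]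
  exact_mod_cast ncard_paths_three hP

lemma bd_five : Bd (np 5) 3 := by
  have h : Bd (fun P => P.card) 1 := ⟨1, zero_le_one, 0, fun P _ _ => by simp⟩
  exact (h.mul bd_three).mono (by norm_num) (c := 4) fun P hP => ncard_paths_five hP

/-- Five more vertices cost a factor `n²`, up to logarithms. If the path does not turn back at its
fifth vertex it splits into a four-vertex path and a path with five fewer vertices; a path that
turns back there cannot do so at the third and the seventh, so these can be dropped. -/
lemma bd_all (h4 : Bd (np 4) 2) : ∀ k, 1 ≤ k → Bd (np k) (ex k) := by
  intro k
  induction k using Nat.strong_induction_on with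
  | _ k ih =>
  intro hk
  rcases Nat.lt_or_ge k 6 with hk6 | hk6
  · have e1 := ex_one 0
    have e2 := ex_two 0
    have e3 := ex_three 0
    have e4 := ex_four 0
    have e5 := ex_five 0
    norm_num at e1 e2 e3 e4 e5
    interval_cases k
    · rw [e1]; exact bd_one
    · rw [e2]; exact bd_two
    · rw [e3]; exact bd_three
    · rw [e4]; exact h4
    · rw [e5]; exact bd_five
  have hex : 2 + ex (k - 5) = ex k := by
    obtain ⟨j, rfl⟩ := Nat.exists_eq_add_of_le' (show 5 ≤ k by omega)
    rw [Nat.add_sub_cancel, ex, ex, Nat.add_mod_right,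
      show 2 * (j + 5 + 3) / 5 = 2 * (j + 3) / 5 + 2 by omega]
    split_ifs <;> push_cast <;> ring
  have hcut : Bd (fun P => 2 * ((paths P 4).ncard * (paths P (k - 5)).ncard)) (ex k) :=
    (h4.mul (ih (k - 5) (by omega) (by omega))).mono hex.le (c := 2) fun P _ => le_rfl
  suffices hturn : Bd (fun P => (turn P k).ncard) (ex k) from
    (hturn.add hcut).mono le_rfl (c := 1) fun P hP => by
      rw [one_mul]; exact ncard_paths_le_turn hP hk6
  obtain ⟨q, hq⟩ : ∃ q, k = 5 * q + 6 ∨ k = 5 * q + 7 ∨ k = 5 * q + 8 ∨ k = 5 * q + 9 ∨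
      k = 5 * q + 10 := ⟨(k - 6) / 5, by omega⟩
  rcases hq with h | h | h | h | h
  · rcases Nat.eq_zero_or_pos q with rfl | hq0
    · obtain rfl : k = 6 := by omega
      have e := ex_one 1
      norm_num at e
      exact (bd_two.mul bd_two).mono (by rw [e]; norm_num) (c := 2) fun P hP => ncard_turn_six hP
    · obtain ⟨r, rfl⟩ := Nat.exists_eq_add_of_le' hq0
      have e := ex_one (r + 2)
      have i := ih (5 * r + 4) (by omega) (by omega)
      rw [ex_four] at i
      refine ((bd_two.mul bd_two).mul i).mono ?_ (c := 4) fun P hP => ?_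
      · rw [show k = 5 * (r + 2) + 1 by omega, e]; push_cast; linarith
      · have := ncard_turn_le' hP (show 8 ≤ k by omega)
        rwa [show k - 7 = 5 * r + 4 by omega] at this
  · have e := ex_two (q + 1)
    have i := ih (5 * q + 4) (by omega) (by omega)
    rw [ex_four] at i
    refine (bd_two.mul i).mono ?_ (c := 2) fun P hP => ?_
    · rw [show k = 5 * (q + 1) + 2 by omega, e]; push_cast; linarith
    · have := ncard_turn_le hP hk6
      rwa [show k - 3 = 5 * q + 4 by omega] at this
  · have e := ex_three (q + 1)
    have i := ih (5 * q + 1) (by omega) (by omega)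
    rw [ex_one] at i
    refine ((bd_two.mul bd_two).mul i).mono ?_ (c := 4) fun P hP => ?_
    · rw [show k = 5 * (q + 1) + 3 by omega, e]; push_cast; linarith
    · have := ncard_turn_le' hP (show 8 ≤ k by omega)
      rwa [show k - 7 = 5 * q + 1 by omega] at this
  · have e := ex_four (q + 1)
    have i := ih (5 * q + 2) (by omega) (by omega)
    rw [ex_two] at i
    refine ((bd_two.mul bd_two).mul i).mono ?_ (c := 4) fun P hP => ?_
    · rw [show k = 5 * (q + 1) + 4 by omega, e]; push_cast; linarith
    · have := ncard_turn_le' hP (show 8 ≤ k by omega)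
      rwa [show k - 7 = 5 * q + 2 by omega] at this
  · have e := ex_five (q + 1)
    have i := ih (5 * (q + 1) + 2) (by omega) (by omega)
    rw [ex_two] at i
    refine (bd_two.mul i).mono ?_ (c := 2) fun P hP => ?_
    · rw [show k = 5 * (q + 1) + 5 by omega, e]; push_cast; linarith
    · have := ncard_turn_le hP hk6
      rwa [show k - 3 = 5 * (q + 1) + 2 by omega] at this

/-! ### Two-point sets and the choice of constants -/

lemma final_one (P : Finset E3) (hn : 2 ≤ P.card) :
    ((paths P 1).ncard : ℝ) ≤ 8 / 3 * (P.card : ℝ) ^ (1 : ℝ) *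
      Real.log P.card ^ (8 / 3 : ℝ) := by
  have hl : Real.log 2 ≤ Real.log P.card :=
    Real.log_le_log (by norm_num) (by exact_mod_cast hn)
  have h2 := Real.log_two_gt_d9
  -- the numerical inequality `(log 2) ^ 8 ≥ (3 / 8) ^ 3`
  have h8 : (3 / 8 : ℝ) ^ 3 ≤ Real.log P.card ^ 8 := by
    have : (0.6931471803 : ℝ) ^ 8 ≤ Real.log P.card ^ 8 := by gcongr; linarith
    refine le_trans ?_ this
    norm_num
  have h3 : (3 / 8 : ℝ) ≤ Real.log P.card ^ (8 / 3 : ℝ) := by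
    refine le_of_pow_le_pow_left₀ (n := 3) (by norm_num) (by positivity) ?_
    rw [← Real.rpow_natCast (Real.log P.card ^ (8 / 3 : ℝ)), ← Real.rpow_mul (by linarith)]
    have : (8 / 3 : ℝ) * (3 : ℕ) = (8 : ℕ) := by norm_num
    rw [this, Real.rpow_natCast]; exact h8
  have h1 : ((paths P 1).ncard : ℝ) ≤ P.card := by exact_mod_cast ncard_paths_one (P := P)
  rw [Real.rpow_one]
  nlinarith [mul_le_mul_of_nonneg_left h3 (show (0 : ℝ) ≤ P.card by positivity)]

lemma ncard_paths_two_le (P : Finset E3) : (paths P 2).ncard ≤ P.card * P.card - P.card := by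
  classical
  have := Set.ncard_le_ncard_of_injOn (s := paths P 2) (t := (P.offDiag : Set (E3 × E3)))
    (fun p => (vtx p 0, vtx p 1))
    (fun p hp => by
      have h0 := vtx_mem hp (i := 0) (by omega)
      have h1 := vtx_mem hp (i := 1) (by omega)
      have h2 := vtx_ne hp (i := 0) (j := 1) (by omega) (by omega) (by omega)
      simpa using ⟨h0, h1, h2⟩)
    (fun p _ q _ h => path_ext fun i hi => by
      simp only [Prod.mk.injEq] at h
      obtain ⟨e0, e1⟩ := h
      interval_cases i <;> assumption) (Finset.finite_toSet _)
  rwa [Set.ncard_coe_finset, Finset.offDiag_card] at this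

lemma final_two {P : Finset E3} (hP : OnSphere P) (hn : 2 ≤ P.card) :
    ((paths P 2).ncard : ℝ) ≤ 5 * (P.card : ℝ) ^ (4 / 3 : ℝ) *
      Real.log P.card ^ (5 : ℝ) := by
  classical
  have h2 := Real.log_two_gt_d9
  rw [show (5 : ℝ) = ((5 : ℕ) : ℝ) by norm_num, Real.rpow_natCast]
  push_cast
  rcases Nat.lt_or_ge P.card 4 with h4 | h4
  · have h0 : ((paths P 2).ncard : ℝ) ≤ (P.card * P.card - P.card : ℕ) := by
      exact_mod_cast ncard_paths_two_le P
    refine h0.trans ?_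
    obtain h | h : P.card = 2 ∨ P.card = 3 := by omega
    · rw [h]
      have e1 : (2.51 : ℝ) ≤ (2 : ℝ) ^ (4 / 3 : ℝ) := by
        refine le_of_pow_le_pow_left₀ (n := 3) (by norm_num) (by positivity) ?_
        rw [← Real.rpow_natCast ((2 : ℝ) ^ (4 / 3 : ℝ)), ← Real.rpow_mul (by norm_num)]
        have : (4 / 3 : ℝ) * (3 : ℕ) = (4 : ℕ) := by norm_num
        rw [this, Real.rpow_natCast]; norm_num
      have e2 : (0.6931471803 : ℝ) ^ 5 ≤ Real.log 2 ^ 5 := by gcongr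
      calc ((2 * 2 - 2 : ℕ) : ℝ) ≤ 5 * 2.51 * 0.6931471803 ^ 5 := by norm_num
        _ ≤ _ := by push_cast; gcongr
    · have e3 : 1 ≤ Real.log P.card := one_le_log (by omega)
      have e1 : (3 : ℝ) ≤ (3 : ℝ) ^ (4 / 3 : ℝ) :=
        Real.self_le_rpow_of_one_le (by norm_num) (by norm_num)
      rw [h] at e3 ⊢
      calc ((3 * 3 - 3 : ℕ) : ℝ) ≤ 5 * 3 * 1 ^ 5 := by norm_num
        _ ≤ _ := by push_cast at e3 ⊢; gcongr
  · have h0 : ((paths P 2).ncard : ℝ) ≤ 22 * (P.card : ℝ) ^ (4 / 3 : ℝ) :=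
      le_trans (by exact_mod_cast ncard_paths_two hP) (unit_pairs_le P hP (by omega))
    refine h0.trans ?_
    have hl : 2 * Real.log 2 ≤ Real.log P.card := by
      rw [show (2 : ℝ) * Real.log 2 = Real.log 4 by
        rw [show (4 : ℝ) = 2 ^ 2 by norm_num, Real.log_pow]; norm_num]
      exact Real.log_le_log (by norm_num) (by exact_mod_cast h4)
    have e2 : (1.386 : ℝ) ^ 5 ≤ Real.log P.card ^ 5 := by gcongr; linarith
    have e3 : (22 : ℝ) ≤ 5 * Real.log P.card ^ 5 := by
      refine le_trans ?_ (mul_le_mul_of_nonneg_left e2 (by norm_num))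
      norm_num
    calc 22 * (P.card : ℝ) ^ (4 / 3 : ℝ) ≤ (5 * Real.log P.card ^ 5) * (P.card : ℝ) ^ (4 / 3 : ℝ) := by
          gcongr
      _ = _ := by ring

lemma final_large {k : ℕ} (hk : 3 ≤ k) {e : ℝ} (h : Bd (np k) e) :
    ∃ B : ℝ, 0 < B ∧ ∀ P : Finset E3, OnSphere P → 2 ≤ P.card →
      ((paths P k).ncard : ℝ) ≤ B * (P.card : ℝ) ^ e * Real.log P.card ^ B := by
  obtain ⟨C, hC, m, h⟩ := h
  refine ⟨max C m + 1, by positivity, fun P hP hn => ?_⟩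
  have hlog : 0 ≤ Real.log P.card := Real.log_natCast_nonneg _
  rcases Nat.lt_or_ge P.card 3 with h3 | h3
  · -- two points carry no path with three distinct vertices
    have : paths P k = ∅ := by
      refine Set.eq_empty_of_forall_notMem fun p hp => ?_
      have := Finset.card_le_card_of_injOn (s := Finset.univ) (t := P) p
        (fun i _ => hp.2.1 i) hp.1.injOn
      rw [Finset.card_univ, Fintype.card_fin] at this
      omega
    rw [this, Set.ncard_empty, Nat.cast_zero]
    positivity
  · refine (h P hP h3).trans ?_
    rw [← Real.rpow_natCast]
    have hl := one_le_log h3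
    have e1 : C ≤ max C m + 1 := by linarith [le_max_left C (m : ℝ)]
    have e2 : Real.log P.card ^ (m : ℝ) ≤ Real.log P.card ^ (max C m + 1) :=
      Real.rpow_le_rpow_of_exponent_le hl (by linarith [le_max_right C (m : ℝ)])
    gcongr

end SphPath

theorem path_upper_bound_on_sphere
    (A : ℝ)
    (hST : ∀ Q R : Finset (EuclideanSpace ℝ (Fin 3)),
      (∀ x ∈ Q, ‖x‖ = 1 / Real.sqrt 2) → (∀ x ∈ R, ‖x‖ = 1 / Real.sqrt 2) →
      ({e : EuclideanSpace ℝ (Fin 3) × EuclideanSpace ℝ (Fin 3) |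
          e.1 ∈ Q ∧ e.2 ∈ R ∧ dist e.1 e.2 = 1}.ncard : ℝ) ≤
        A * ((Q.card : ℝ) ^ (2 / 3 : ℝ) * (R.card : ℝ) ^ (2 / 3 : ℝ) +
          (Q.card : ℝ) + (R.card : ℝ))) :
    ∀ k : ℕ, 1 ≤ k → ∃ B : ℝ, 0 < B ∧
      ∀ (n : ℕ) (P : Finset (EuclideanSpace ℝ (Fin 3))),
        (∀ x ∈ P, ‖x‖ = 1 / Real.sqrt 2) → P.card = n → 2 ≤ n →
        ({p : Fin k → EuclideanSpace ℝ (Fin 3) |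
            Function.Injective p ∧ (∀ i, p i ∈ P) ∧
            ∀ i : Fin k, ∀ h : (i : ℕ) + 1 < k,
              dist (p i) (p ⟨(i : ℕ) + 1, h⟩) = 1}.ncard : ℝ) ≤
          B * (n : ℝ) ^
              (if k % 5 = 2 then ((2 * (k + 3)) / 5 : ℕ) - (2 / 3 : ℝ)
               else ((2 * (k + 3)) / 5 : ℕ)) *
            (Real.log n) ^ B := by
  classical
  intro k hk
  suffices h : ∃ B : ℝ, 0 < B ∧ ∀ P : Finset SphPath.E3, SphPath.OnSphere P → 2 ≤ P.card →
      ((SphPath.paths P k).ncard : ℝ) ≤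
        B * (P.card : ℝ) ^ SphPath.ex k * Real.log P.card ^ B by
    obtain ⟨B, hB, h⟩ := h
    exact ⟨B, hB, fun n P hP hn h2 => by subst hn; exact h P hP h2⟩
  have hE : ∀ Q R : Finset SphPath.E3, SphPath.OnSphere Q → SphPath.OnSphere R →
      (SphPath.ed Q R : ℝ) ≤ max A 1 *
        ((Q.card : ℝ) ^ (2 / 3 : ℝ) * (R.card : ℝ) ^ (2 / 3 : ℝ) + Q.card + R.card) := by
    intro Q R hQ hR
    have h := hST Q R hQ hR
    have hset : {e : EuclideanSpace ℝ (Fin 3) × EuclideanSpace ℝ (Fin 3) |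
          e.1 ∈ Q ∧ e.2 ∈ R ∧ dist e.1 e.2 = 1} =
        (((Q ×ˢ R).filter fun z => SphPath.dot z.1 z.2 = 0 : Finset _) : Set _) := by
      ext ⟨x, y⟩
      simp only [Set.mem_ofPred_eq, Finset.coe_filter, Finset.mem_product, and_assoc]
      exact and_congr_right fun hx => and_congr_right fun hy =>
        SphPath.dist_eq_one_iff (hQ x hx) (hR y hy)
    rw [hset, Set.ncard_coe_finset] at h
    unfold SphPath.ed
    refine le_trans (by convert h) (mul_le_mul_of_nonneg_right (le_max_left A 1) (by positivity))
  have hA1 : 1 ≤ max A 1 := le_max_right A 1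
  have h4 : SphPath.Bd (SphPath.np 4) 2 := by
    refine ⟨44 * max A 1 * (9 * max A 1 ^ 2 + 2), by positivity, 2, fun P hP hn => ?_⟩
    rw [Real.rpow_two]
    exact SphPath.ncard_paths_four hA1 hE hP hn
  obtain rfl | rfl | h3 : k = 1 ∨ k = 2 ∨ 3 ≤ k := by omega
  · refine ⟨8 / 3, by norm_num, fun P _ hn => ?_⟩
    have e := SphPath.ex_one 0
    norm_num at e
    rw [e]
    exact SphPath.final_one P hn
  · refine ⟨5, by norm_num, fun P hP hn => ?_⟩
    have e := SphPath.ex_two 0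
    norm_num at e
    rw [e]
    exact SphPath.final_two hP hn
  · exact SphPath.final_large h3 (SphPath.bd_all h4 k hk)
end

section
/- Assume the rich-points bound: there is a constant A such that for any set P of n points on the sphere of radius 1/√2 and any r ≥ 1, the number of points on the sphere at unit distance from at least r points of P is at most A(n³/r² + n/r). Then for any n-point set P on this sphere, the number of unit-distance 3-cycles (triangles with all sides of Euclidean length 1) determined by P is at most C·n^{4/3} for a constant C depending only on A. -/
/-!
Two points of the sphere of radius `1 / √2` are at distance `1` exactly when they are orthogonal.
The vertices of a triangle are then pairwise orthogonal, so the third one is fixed up to sign by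
the first two, and it suffices to bound the number of orthogonal pairs by
`O(n ^ (4 / 3))`. Central projection to a generic affine chart turns each point `x` into a point
of the plane and each great circle orthogonal to `y` into a non-vertical line (`exists_chart`,
`mem_incidence_of_orth`), both correspondences being at most two-to-one, so orthogonal pairs become
point-line incidences, and the Szemerédi–Trotter theorem gives the bound. That theorem is proved
here by Székely's crossing-number method, for points with pairwise distinct abscissae.

* A crossing-free straight-line graph on `n` vertices has at most `3 * n` edges
  (`IsGeom.card_le_of_no_cross`). In place of Euler's formula there is a charging argument: an edge
  `e` that is not the steepest at its left end `v` spans a wedge with the next steeper edge `f` from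
  `v`. The leftmost vertex `u` of this wedge sees `e` vertically below and `f` vertically above
  without any edge in between (`IsWitness.no_between`), so `u` is charged at most twice: once by an
  edge ending at `u` and once by an edge passing below `u`. The steepest edges number at most `n`.
* Deleting an edge from every crossing gives `|G| ≤ 3 * n + cr`, and applying this to a random
  sample of the vertices gives the crossing inequality (`IsGeom.sampled`). The sample is a
  colour class of a uniformly random colouring, so that expectations are finite counts.
* Joining consecutive points on every line gives a graph with at least `I - |L|` edges and
  at most `|L| ^ 2` crossings (`incidences_sampled`); sampling with probability about
  `n ^ (-1 / 3)` yields `I ≤ 8 * n ^ (4 / 3)` (`card_incidences_le`).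
-/

/-! ### Crossing-free geometric graphs -/

/-- A segment in the plane: left end `l`, right end `r`, and supporting line
`y = m.1 * x + m.2`. -/
@[ext]
structure Seg where
  l : ℝ × ℝ
  r : ℝ × ℝ
  m : ℝ × ℝ

/-- The height of the supporting line of a segment above the abscissa `x`. -/
def Seg.h (e : Seg) (x : ℝ) : ℝ := e.m.1 * x + e.m.2

/-- Two distinct segments cross when they meet above a point interior to both of their
projections to the first axis. -/
def Seg.Cross (e f : Seg) : Prop :=
  e ≠ f ∧ ∃ x, e.l.1 < x ∧ f.l.1 < x ∧ x < e.r.1 ∧ x < f.r.1 ∧ e.h x = f.h x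

/-- `G` is a set of edges of a geometric graph on `V`: its segments join points of `V` from left to
right and contain no point of `V` in their interior. -/
structure IsGeom (V : Finset (ℝ × ℝ)) (G : Finset Seg) : Prop where
  lmem : ∀ e ∈ G, e.l ∈ V
  rmem : ∀ e ∈ G, e.r ∈ V
  lt : ∀ e ∈ G, e.l.1 < e.r.1
  hl : ∀ e ∈ G, e.h e.l.1 = e.l.2
  hr : ∀ e ∈ G, e.h e.r.1 = e.r.2
  avoid : ∀ e ∈ G, ∀ v ∈ V, e.l.1 < v.1 → v.1 < e.r.1 → e.h v.1 ≠ v.2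

/-- The vertical order of two segments persists to the left as long as they do not meet. -/
theorem Seg.le_of_no_meet (e g : Seg) {a x : ℝ} (hax : a < x) (hx : e.h x < g.h x)
    (hno : ∀ y, a < y → y < x → e.h y ≠ g.h y) : e.h a ≤ g.h a := by
  by_contra! hlt
  have hc : ContinuousOn (fun y => e.h y - g.h y) (Set.Icc a x) := by
    unfold Seg.h; fun_prop
  obtain ⟨y, hy, hy0⟩ := intermediate_value_Ioo' hax.le hc
    (show (0 : ℝ) ∈ Set.Ioo (e.h x - g.h x) (e.h a - g.h a) from
      ⟨by linarith, by linarith⟩)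
  exact hno y hy.1 hy.2 (sub_eq_zero.1 hy0)

theorem Seg.eq_of_meet {G : Finset Seg}
    (hX : ∀ e ∈ G, ∀ f ∈ G, ¬ e.Cross f) {e f : Seg} (he : e ∈ G) (hf : f ∈ G)
    {x : ℝ} (h1 : e.l.1 < x) (h2 : f.l.1 < x) (h3 : x < e.r.1) (h4 : x < f.r.1)
    (h5 : e.h x = f.h x) : e = f := by
  by_contra hne
  exact hX e he f hf ⟨hne, x, h1, h2, h3, h4, h5⟩

theorem IsGeom.slope_lt {V : Finset (ℝ × ℝ)} {G : Finset Seg} (hG : IsGeom V G) {e f : Seg}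
    (he : e ∈ G) (hf : f ∈ G) (hl : e.l = f.l) {x : ℝ} (hx : e.l.1 < x) :
    e.h x < f.h x ↔ e.m.1 < f.m.1 := by
  have h1 := hG.hl e he
  have h2 := hG.hl f hf
  rw [← hl] at h2
  unfold Seg.h at *
  have h3 : f.m.1 * x + f.m.2 - (e.m.1 * x + e.m.2) = (f.m.1 - e.m.1) * (x - e.l.1) := by
    linear_combination h2 - h1
  have h4 : 0 < x - e.l.1 := by linarith
  constructor
  · intro h
    have : 0 < (f.m.1 - e.m.1) * (x - e.l.1) := by linarith
    have := pos_of_mul_pos_left this h4.le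
    linarith
  · intro h
    have := mul_pos (sub_pos.2 h) h4
    linarith

/-- `u` is the leftmost vertex in the wedge between two edges `e`, `f` that leave their common left
end consecutively by slope. -/
structure IsWitness (V : Finset (ℝ × ℝ)) (G : Finset Seg) (e f : Seg) (u : ℝ × ℝ) : Prop where
  hf : f ∈ G
  hl : f.l = e.l
  slope : e.m.1 < f.m.1
  next : ∀ g ∈ G, g.l = e.l → e.m.1 < g.m.1 → f.m.1 ≤ g.m.1
  hu : u ∈ V
  lu : e.l.1 < u.1
  ue : u.1 ≤ e.r.1
  uf : u.1 ≤ f.r.1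
  above : e.h u.1 ≤ u.2
  below : u.2 ≤ f.h u.1
  left : ∀ w ∈ V, e.l.1 < w.1 → w.1 < u.1 → e.h w.1 ≤ w.2 → ¬ w.2 ≤ f.h w.1

theorem IsGeom.exists_witness {V : Finset (ℝ × ℝ)} {G : Finset Seg} (hG : IsGeom V G)
    {e : Seg} (he : e ∈ G) (hnt : ∃ f ∈ G, f.l = e.l ∧ e.m.1 < f.m.1) :
    ∃ f u, IsWitness V G e f u := by
  classical
  obtain ⟨f, hf, hfmin⟩ := Finset.exists_min_image
    (G.filter fun f => f.l = e.l ∧ e.m.1 < f.m.1) (fun f => f.m.1)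
    (by obtain ⟨f, hf, h⟩ := hnt; exact ⟨f, by simp [hf, h]⟩)
  simp only [Finset.mem_filter] at hf hfmin
  obtain ⟨hf, hfl, hfm⟩ := hf
  have hwne : (V.filter fun w => e.l.1 < w.1 ∧ w.1 ≤ e.r.1 ∧ w.1 ≤ f.r.1 ∧
      e.h w.1 ≤ w.2 ∧ w.2 ≤ f.h w.1).Nonempty := by
    rcases le_total e.r.1 f.r.1 with h | h
    · refine ⟨e.r, ?_⟩
      simp only [Finset.mem_filter]
      have := (hG.slope_lt he hf hfl.symm (hG.lt e he)).2 hfm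
      rw [hG.hr e he] at this ⊢
      exact ⟨hG.rmem e he, hG.lt e he, le_rfl, h, le_rfl, this.le⟩
    · refine ⟨f.r, ?_⟩
      simp only [Finset.mem_filter]
      have h0 : e.l.1 < f.r.1 := hfl ▸ hG.lt f hf
      have := (hG.slope_lt he hf hfl.symm h0).2 hfm
      rw [hG.hr f hf] at this ⊢
      exact ⟨hG.rmem f hf, h0, h, le_rfl, this.le, le_rfl⟩
  obtain ⟨u, hu, humin⟩ := Finset.exists_min_image _ (fun w => w.1) hwne
  simp only [Finset.mem_filter] at hu humin
  obtain ⟨hu, h1, h2, h3, h4, h5⟩ := hu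
  refine ⟨f, u, hf, hfl, hfm, fun g hg h h' => hfmin g ⟨hg, h, h'⟩, hu, h1, h2, h3, h4, h5, ?_⟩
  intro w hw a1 a2 a3 a4
  have := humin w ⟨hw, a1, by linarith, by linarith, a3, a4⟩
  linarith

/-- No edge passes strictly between `e` and `f` above the leftmost vertex of their wedge: followed
to the left, such an edge would have to start inside the wedge, pass through its apex, or start at
the apex with an intermediate slope. -/
theorem IsWitness.no_between {V : Finset (ℝ × ℝ)} {G : Finset Seg} (hG : IsGeom V G)
    (hV : Set.InjOn Prod.fst (V : Set (ℝ × ℝ)))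
    (hX : ∀ e ∈ G, ∀ f ∈ G, ¬ e.Cross f) {e f : Seg} {u : ℝ × ℝ} (he : e ∈ G)
    (hw : IsWitness V G e f u) {g : Seg} (hg : g ∈ G) (h1 : g.l.1 < u.1) (h2 : u.1 ≤ g.r.1)
    (h3 : e.h u.1 < g.h u.1) (h4 : g.h u.1 < f.h u.1) : False := by
  have hfl1 : f.l.1 = e.l.1 := by rw [hw.hl]
  have hue := hw.ue
  have huf := hw.uf
  have heg : ∀ a, g.l.1 ≤ a → e.l.1 ≤ a → a < u.1 → e.h a ≤ g.h a ∧ g.h a ≤ f.h a := by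
    intro a ha1 ha2 ha3
    constructor
    · refine Seg.le_of_no_meet e g ha3 h3 fun y hy1 hy2 hy => h3.ne ?_
      rw [Seg.eq_of_meet hX he hg (by linarith) (by linarith) (by linarith)
        (by linarith) hy]
    · refine Seg.le_of_no_meet g f ha3 h4 fun y hy1 hy2 hy => h4.ne ?_
      rw [Seg.eq_of_meet hX hg hw.hf (by linarith) (by linarith) (by linarith)
        (by linarith) hy]
  rcases lt_trichotomy g.l.1 e.l.1 with h | h | h
  · obtain ⟨b1, b2⟩ := heg e.l.1 h.le le_rfl hw.lu
    have e1 := hG.hl e he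
    have e2 := hG.hl f hw.hf
    rw [hw.hl] at e2
    have := hw.lu
    exact hG.avoid g hg e.l (hG.lmem e he) h (by linarith) (by linarith)
  · have hgl : g.l = e.l := hV (hG.lmem g hg) (hG.lmem e he) h
    have s1 := (hG.slope_lt he hg hgl.symm hw.lu).1 h3
    have s2 := (hG.slope_lt hg hw.hf (hgl.trans hw.hl.symm) h1).1 h4
    have := hw.next g hg hgl s1
    linarith
  · obtain ⟨b1, b2⟩ := heg g.l.1 le_rfl h.le h1
    rw [hG.hl g hg] at b1 b2
    exact hw.left g.l (hG.lmem g hg) h h1 b1 b2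

theorem IsGeom.eq_of_ends {V : Finset (ℝ × ℝ)} {G : Finset Seg} (hG : IsGeom V G)
    {e f : Seg} (he : e ∈ G) (hf : f ∈ G) (hl : e.l = f.l) (hr : e.r = f.r) : e = f := by
  have hlt := hG.lt e he
  have s1 := hG.slope_lt he hf hl hlt
  have s2 := hG.slope_lt hf he hl.symm (hl ▸ hlt)
  have r1 := hG.hr e he
  have r2 := hG.hr f hf
  rw [← hr] at r2
  have hm : e.m.1 = f.m.1 := by
    rcases lt_trichotomy e.m.1 f.m.1 with h | h | h
    · have := s1.2 h; linarith
    · exact h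
    · have := s2.2 h; linarith
  refine Seg.ext hl hr (Prod.ext hm ?_)
  unfold Seg.h at r1 r2
  rw [hm] at r1
  linarith

/-- A crossing-free geometric graph has linearly many edges. Every edge that is not the steepest at
its left end is charged to the leftmost vertex of the wedge above it. -/
theorem IsGeom.card_le_of_no_cross {V : Finset (ℝ × ℝ)} {G : Finset Seg} (hG : IsGeom V G)
    (hV : Set.InjOn Prod.fst (V : Set (ℝ × ℝ)))
    (hX : ∀ e ∈ G, ∀ f ∈ G, ¬ e.Cross f) : G.card ≤ 3 * V.card := by
  classical
  have hch : ∀ e : Seg, ∃ f u, e ∈ G → (∃ f ∈ G, f.l = e.l ∧ e.m.1 < f.m.1) →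
      IsWitness V G e f u := by
    intro e
    by_cases h : e ∈ G ∧ (∃ f ∈ G, f.l = e.l ∧ e.m.1 < f.m.1)
    · obtain ⟨f, u, hw⟩ := hG.exists_witness h.1 h.2
      exact ⟨f, u, fun _ _ => hw⟩
    · exact ⟨e, e.l, fun a b => absurd ⟨a, b⟩ h⟩
  choose F U hW using hch
  set N : Seg → Prop := fun e => ∃ f ∈ G, f.l = e.l ∧ e.m.1 < f.m.1 with hN
  have hT : (G.filter fun e => ¬ N e).card ≤ V.card := by
    refine Finset.card_le_card_of_injOn (fun e => e.l) ?_ ?_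
    · intro e he
      simp only [Finset.coe_filter, Set.mem_ofPred_eq] at he
      exact hG.lmem e he.1
    · intro e he f hf hef
      simp only [Finset.coe_filter, Set.mem_ofPred_eq, hN, not_exists, not_and, not_lt] at he hf
      have hef' : e.l = f.l := hef
      have hm : e.m.1 = f.m.1 := le_antisymm (hf.2 e he.1 hef) (he.2 f hf.1 hef.symm)
      have h1 := hG.lt e he.1
      have h2 := hG.lt f hf.1
      rw [← hef'] at h2
      obtain ⟨x, hx1, hx2⟩ := exists_between (lt_min h1 h2)
      rw [lt_min_iff] at hx2
      have s1 := hG.slope_lt he.1 hf.1 hef hx1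
      have s2 := hG.slope_lt hf.1 he.1 hef.symm (hef' ▸ hx1)
      refine Seg.eq_of_meet hX he.1 hf.1 hx1 (hef' ▸ hx1) hx2.1 hx2.2 ?_
      rcases lt_trichotomy (e.h x) (f.h x) with h | h | h
      · exact absurd (s1.1 h) (by rw [hm]; exact lt_irrefl _)
      · exact h
      · exact absurd (s2.1 h) (by rw [hm]; exact lt_irrefl _)
  have hA : (G.filter fun e => N e ∧ U e = e.r).card ≤ V.card := by
    refine Finset.card_le_card_of_injOn U ?_ ?_
    · intro e he
      simp only [Finset.coe_filter, Set.mem_ofPred_eq] at he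
      exact (hW e he.1 he.2.1).hu
    · intro e he e' he' hU
      simp only [Finset.coe_filter, Set.mem_ofPred_eq] at he he'
      have w := hW e he.1 he.2.1
      have w' := hW e' he'.1 he'.2.1
      have hlt := (hG.slope_lt he.1 w.hf w.hl.symm w.lu).2 w.slope
      have hlt' := (hG.slope_lt he'.1 w'.hf w'.hl.symm w'.lu).2 w'.slope
      have heU : e.h (U e).1 = (U e).2 := by rw [he.2.2]; exact hG.hr e he.1
      have heU' : e'.h (U e).1 = (U e).2 := by rw [hU, he'.2.2]; exact hG.hr e' he'.1
      rw [← hU] at hlt' w'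
      have fl' : (F e').l.1 < (U e).1 := by rw [w'.hl]; exact w'.lu
      have fl : (F e).l.1 < (U e).1 := by rw [w.hl]; exact w.lu
      -- the upper edge of the wedge does not end at the witness, which lies on the lower edge
      have fr : ∀ f ∈ G, (U e).1 ≤ f.r.1 → (U e).2 < f.h (U e).1 → (U e).1 < f.r.1 := by
        intro f hf h1 h2
        refine lt_of_le_of_ne h1 fun h => ?_
        have h3 : U e = f.r := hV w.hu (hG.rmem f hf) h
        have := hG.hr f hf
        rw [← h3] at this
        linarith
      have hFF : F e = F e' := by
        refine Seg.eq_of_meet hX w.hf w'.hf fl fl'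
          (fr _ w.hf w.uf (by linarith)) (fr _ w'.hf w'.uf (by linarith)) ?_
        rcases lt_trichotomy ((F e).h (U e).1) ((F e').h (U e).1) with h | h | h
        · exact (w'.no_between hG hV hX he'.1 w.hf fl w.uf (by linarith) h).elim
        · exact h
        · exact (w.no_between hG hV hX he.1 w'.hf fl' w'.uf (by linarith) h).elim
      exact hG.eq_of_ends he.1 he'.1 (by rw [← w.hl, ← w'.hl, hFF])
        (by rw [← he.2.2, ← he'.2.2, hU])
  have hB : (G.filter fun e => N e ∧ U e ≠ e.r).card ≤ V.card := by
    refine Finset.card_le_card_of_injOn U ?_ ?_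
    · intro e he
      simp only [Finset.coe_filter, Set.mem_ofPred_eq] at he
      exact (hW e he.1 he.2.1).hu
    · intro e he e' he' hU
      simp only [Finset.coe_filter, Set.mem_ofPred_eq] at he he'
      have key : ∀ e, (e ∈ G ∧ N e ∧ U e ≠ e.r) → (U e).1 < e.r.1 ∧ e.h (U e).1 < (U e).2 := by
        intro e he
        have w := hW e he.1 he.2.1
        have h1 : (U e).1 < e.r.1 :=
          lt_of_le_of_ne w.ue fun h => he.2.2 (hV w.hu (hG.rmem e he.1) h)
        exact ⟨h1, lt_of_le_of_ne w.above (hG.avoid e he.1 _ w.hu w.lu h1)⟩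
      obtain ⟨k1, k2⟩ := key e he
      obtain ⟨k1', k2'⟩ := key e' he'
      have w := hW e he.1 he.2.1
      have w' := hW e' he'.1 he'.2.1
      rw [← hU] at k1' k2' w'
      have b := w.below
      have b' := w'.below
      refine Seg.eq_of_meet hX he.1 he'.1 w.lu w'.lu k1 k1' ?_
      rcases lt_trichotomy (e.h (U e).1) (e'.h (U e).1) with h | h | h
      · exact (w.no_between hG hV hX he.1 he'.1 w'.lu k1'.le h (by linarith)).elim
      · exact h
      · exact (w'.no_between hG hV hX he'.1 he.1 w.lu k1.le h (by linarith)).elim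
  have hsub : G ⊆ (G.filter fun e => ¬ N e) ∪ ((G.filter fun e => N e ∧ U e = e.r) ∪
      (G.filter fun e => N e ∧ U e ≠ e.r)) := by
    intro e he
    simp only [Finset.mem_union, Finset.mem_filter]
    by_cases h1 : N e
    · by_cases h2 : U e = e.r
      · exact Or.inr (Or.inl ⟨he, h1, h2⟩)
      · exact Or.inr (Or.inr ⟨he, h1, h2⟩)
    · exact Or.inl ⟨he, h1⟩
  have := Finset.card_le_card hsub
  have h1 := Finset.card_union_le (G.filter fun e => ¬ N e)
    ((G.filter fun e => N e ∧ U e = e.r) ∪ (G.filter fun e => N e ∧ U e ≠ e.r))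
  have h2 := Finset.card_union_le (G.filter fun e => N e ∧ U e = e.r)
    (G.filter fun e => N e ∧ U e ≠ e.r)
  omega

/-! ### Crossings -/

open Classical in
/-- The ordered pairs of crossing segments of `G`. -/
noncomputable def crossings (G : Finset Seg) : Finset (Seg × Seg) :=
  (G ×ˢ G).filter fun z => z.1.Cross z.2

theorem mem_crossings {G : Finset Seg} {z : Seg × Seg} :
    z ∈ crossings G ↔ z.1 ∈ G ∧ z.2 ∈ G ∧ z.1.Cross z.2 := by
  simp [crossings, and_assoc]

theorem IsGeom.mono {V T : Finset (ℝ × ℝ)} {G H : Finset Seg} (hG : IsGeom V G) (hT : T ⊆ V)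
    (hH : H ⊆ G) (hl : ∀ e ∈ H, e.l ∈ T) (hr : ∀ e ∈ H, e.r ∈ T) : IsGeom T H where
  lmem := hl
  rmem := hr
  lt e he := hG.lt e (hH he)
  hl e he := hG.hl e (hH he)
  hr e he := hG.hr e (hH he)
  avoid e he v hv := hG.avoid e (hH he) v (hT hv)

theorem IsGeom.card_le_add_crossings {V : Finset (ℝ × ℝ)} {G : Finset Seg} (hG : IsGeom V G)
    (hV : Set.InjOn Prod.fst (V : Set (ℝ × ℝ))) :
    G.card ≤ 3 * V.card + (crossings G).card := by
  classical
  set B := (crossings G).image Prod.fst with hB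
  have h1 : B.card ≤ (crossings G).card := Finset.card_image_le
  have h2 : (G \ B).card ≤ 3 * V.card := by
    have hsub : G \ B ⊆ G := Finset.sdiff_subset
    refine (hG.mono (Finset.Subset.refl V) hsub (fun e he => hG.lmem e (hsub he))
      (fun e he => hG.rmem e (hsub he))).card_le_of_no_cross hV ?_
    intro e he f hf hc
    refine (Finset.mem_sdiff.1 he).2 (Finset.mem_image.2 ⟨(e, f), ?_, rfl⟩)
    exact mem_crossings.2 ⟨hsub he, hsub hf, hc⟩
  have h3 := Finset.card_le_card_sdiff_add_card (s := G) (t := B)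
  omega

theorem Seg.m_eq_of_two_points {e f : Seg} {x y : ℝ} (hxy : x ≠ y) (hx : e.h x = f.h x)
    (hy : e.h y = f.h y) : e.m = f.m := by
  unfold Seg.h at hx hy
  have h : (e.m.1 - f.m.1) * (x - y) = 0 := by linear_combination hx - hy
  have h1 : e.m.1 = f.m.1 := by
    rcases mul_eq_zero.1 h with h | h
    · linarith
    · exact absurd (sub_eq_zero.1 h) hxy
  refine Prod.ext h1 ?_
  rw [h1] at hx
  linarith

/-- Edges on a common line have disjoint interiors, since neither may contain an end of the
other. -/
theorem IsGeom.eq_of_overlap {V : Finset (ℝ × ℝ)} {G : Finset Seg} (hG : IsGeom V G)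
    (hV : Set.InjOn Prod.fst (V : Set (ℝ × ℝ))) {e f : Seg} (he : e ∈ G) (hf : f ∈ G)
    (hm : e.m = f.m) {x : ℝ} (h1 : e.l.1 < x) (h2 : f.l.1 < x) (h3 : x < e.r.1)
    (h4 : x < f.r.1) : e = f := by
  have hh : ∀ y, e.h y = f.h y := fun y => by unfold Seg.h; rw [hm]
  have hl : e.l = f.l := by
    refine hV (hG.lmem e he) (hG.lmem f hf) ?_
    rcases lt_trichotomy e.l.1 f.l.1 with h | h | h
    · exact (hG.avoid e he f.l (hG.lmem f hf) h (by linarith)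
        (by rw [hh]; exact hG.hl f hf)).elim
    · exact h
    · exact (hG.avoid f hf e.l (hG.lmem e he) h (by linarith)
        (by rw [← hh]; exact hG.hl e he)).elim
  have hr : e.r = f.r := by
    refine hV (hG.rmem e he) (hG.rmem f hf) ?_
    rcases lt_trichotomy e.r.1 f.r.1 with h | h | h
    · exact (hG.avoid f hf e.r (hG.rmem e he) (by linarith) h
        (by rw [← hh]; exact hG.hr e he)).elim
    · exact h
    · exact (hG.avoid e he f.r (hG.rmem f hf) (by linarith) h
        (by rw [hh]; exact hG.hr f hf)).elim
  exact Seg.ext hl hr hm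

theorem IsGeom.m_ne_of_cross {V : Finset (ℝ × ℝ)} {G : Finset Seg} (hG : IsGeom V G)
    (hV : Set.InjOn Prod.fst (V : Set (ℝ × ℝ))) {e f : Seg} (he : e ∈ G) (hf : f ∈ G)
    (hc : e.Cross f) : e.m ≠ f.m := by
  obtain ⟨hne, x, h1, h2, h3, h4, -⟩ := hc
  exact fun hm => hne (hG.eq_of_overlap hV he hf hm h1 h2 h3 h4)

/-- A crossing is determined by the two supporting lines. -/
theorem IsGeom.card_crossings_le {V L : Finset (ℝ × ℝ)} {G : Finset Seg} (hG : IsGeom V G)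
    (hV : Set.InjOn Prod.fst (V : Set (ℝ × ℝ))) (hL : ∀ e ∈ G, e.m ∈ L) :
    (crossings G).card ≤ L.card ^ 2 := by
  classical
  rw [sq, ← Finset.card_product]
  refine Finset.card_le_card_of_injOn (fun z => (z.1.m, z.2.m)) ?_ ?_
  · intro z hz
    obtain ⟨h1, h2, -⟩ := mem_crossings.1 (Finset.mem_coe.1 hz)
    exact Finset.mem_coe.2 (Finset.mem_product.2 ⟨hL _ h1, hL _ h2⟩)
  · rintro ⟨e, f⟩ hz ⟨e', f'⟩ hz' hm
    obtain ⟨he, hf, hc⟩ := mem_crossings.1 (Finset.mem_coe.1 hz)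
    obtain ⟨he', hf', hc'⟩ := mem_crossings.1 (Finset.mem_coe.1 hz')
    simp only [Prod.mk.injEq] at hm he hf he' hf' hc hc'
    have hne := hG.m_ne_of_cross hV he hf hc
    obtain ⟨-, x, a1, a2, a3, a4, a5⟩ := hc
    obtain ⟨-, y, b1, b2, b3, b4, b5⟩ := hc'
    have hxy : x = y := by
      by_contra h
      refine hne (Seg.m_eq_of_two_points h a5 ?_)
      unfold Seg.h at b5 ⊢
      rw [hm.1, hm.2]
      exact b5
    subst hxy
    rw [hG.eq_of_overlap hV he he' hm.1 a1 b1 a3 b3, hG.eq_of_overlap hV hf hf' hm.2 a2 b2 a4 b4]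

/-- Crossing edges share no end: their supporting lines are distinct and already meet at the
crossing. -/
theorem IsGeom.card_ends {V : Finset (ℝ × ℝ)} {G : Finset Seg} (hG : IsGeom V G)
    (hV : Set.InjOn Prod.fst (V : Set (ℝ × ℝ))) {e f : Seg} (he : e ∈ G) (hf : f ∈ G)
    (hc : e.Cross f) : ({e.l, e.r, f.l, f.r} : Finset (ℝ × ℝ)).card = 4 := by
  have hne := hG.m_ne_of_cross hV he hf hc
  obtain ⟨-, x, a1, a2, a3, a4, a5⟩ := hc
  have key : ∀ y, y ≠ x → e.h y ≠ f.h y := fun y hy h =>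
    hne (Seg.m_eq_of_two_points hy h a5)
  have el := hG.hl e he
  have er := hG.hr e he
  have fl := hG.hl f hf
  have fr := hG.hr f hf
  have n1 : e.l ≠ e.r := fun h => by rw [h] at a1; linarith
  have n2 : f.l ≠ f.r := fun h => by rw [h] at a2; linarith
  have n3 : e.l ≠ f.l := fun h => key e.l.1 a1.ne (by rw [el, h, fl])
  have n4 : e.l ≠ f.r := fun h => by rw [h] at a1; linarith
  have n5 : e.r ≠ f.l := fun h => by rw [h] at a3; linarith
  have n6 : e.r ≠ f.r := fun h => key e.r.1 a3.ne' (by rw [er, h, fr])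
  rw [Finset.card_insert_of_notMem, Finset.card_insert_of_notMem, Finset.card_pair n2] <;>
    simp [n1, n3, n4, n5, n6]

/-! ### Random sampling of the vertices -/

open Classical in
/-- The points of `V` that receive colour `0` in the colouring `c`. -/
noncomputable def zeroClass (V : Finset (ℝ × ℝ)) (k : ℕ) (c : V → Fin (k + 1)) :
    Finset (ℝ × ℝ) :=
  V.filter fun v => ∃ h : v ∈ V, c ⟨v, h⟩ = 0

open Classical in
/-- A fixed set `A ⊆ V` lies in the zero class with probability `1 / (k + 1) ^ |A|`. -/
theorem card_colourings (V A : Finset (ℝ × ℝ)) (k : ℕ) (hA : A ⊆ V) :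
    (((Finset.univ : Finset (V → Fin (k + 1))).filter
      fun c => A ⊆ zeroClass V k c).card : ℝ) * ((k : ℝ) + 1) ^ A.card
      = ((k : ℝ) + 1) ^ V.card := by
  have h1 : ((Finset.univ : Finset (V → Fin (k + 1))).filter fun c => A ⊆ zeroClass V k c)
      = Fintype.piFinset (fun v : V => if v.1 ∈ A then ({0} : Finset (Fin (k + 1)))
          else Finset.univ) := by
    ext c
    rw [Finset.mem_filter, Fintype.mem_piFinset]
    simp only [Finset.mem_univ, true_and]
    constructor
    · intro h v
      split_ifs with hv
      · obtain ⟨_, _, h0⟩ := Finset.mem_filter.1 (h hv)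
        simpa using h0
      · simp
    · intro h v hv
      refine Finset.mem_filter.2 ⟨hA hv, hA hv, ?_⟩
      have := h ⟨v, hA hv⟩
      simpa [hv] using this
  have h2 : (Fintype.piFinset (fun v : V => if v.1 ∈ A then ({0} : Finset (Fin (k + 1)))
          else Finset.univ)).card = (k + 1) ^ (V \ A).card := by
    rw [Fintype.card_piFinset]
    have : ∀ v : V, (if v.1 ∈ A then ({0} : Finset (Fin (k + 1))) else Finset.univ).card
        = if v.1 ∈ A then 1 else (k + 1) := by
      intro v; split_ifs <;> simp
    simp only [this]
    rw [Finset.prod_coe_sort V (fun v => if v ∈ A then 1 else k + 1), Finset.prod_ite]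
    simp [Finset.sdiff_eq_filter]
  rw [h1, h2]
  push_cast
  rw [← pow_add, Finset.card_sdiff_add_card_eq_card hA]

/-- If every point of `V` survives independently with probability `1 / (k + 1)`, then a member of
`S` with `j` marked points keeps all of them with probability `1 / (k + 1) ^ j`, and expectations
add up. -/
theorem sum_colourings {α : Type*} (S : Finset α) (V : Finset (ℝ × ℝ)) (k j : ℕ)
    (A : α → Finset (ℝ × ℝ)) (hA : ∀ s ∈ S, A s ⊆ V) (hj : ∀ s ∈ S, (A s).card = j)
    [∀ c : V → Fin (k + 1), DecidablePred fun s => A s ⊆ zeroClass V k c] :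
    (∑ c : V → Fin (k + 1), ((S.filter fun s => A s ⊆ zeroClass V k c).card : ℝ))
      * ((k : ℝ) + 1) ^ j = S.card * ((k : ℝ) + 1) ^ V.card := by
  classical
  have h : ∀ c : V → Fin (k + 1), ((S.filter fun s => A s ⊆ zeroClass V k c).card : ℝ)
      = ∑ s ∈ S, if A s ⊆ zeroClass V k c then (1 : ℝ) else 0 := by
    intro c
    rw [Finset.card_filter]
    push_cast
    exact Finset.sum_congr rfl fun s _ => by congr
  simp only [h]
  rw [Finset.sum_comm, Finset.sum_mul, Finset.card_eq_sum_ones, Nat.cast_sum, Finset.sum_mul]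
  refine Finset.sum_congr rfl fun s hs => ?_
  rw [← card_colourings V (A s) k (hA s hs), hj s hs, Finset.card_filter]
  push_cast
  rw [one_mul]

/-- The crossing inequality, in the parametric form obtained from
`IsGeom.card_le_add_crossings` applied to a random sample of the vertices. -/
theorem IsGeom.sampled {V : Finset (ℝ × ℝ)} {G : Finset Seg} (hG : IsGeom V G)
    (hV : Set.InjOn Prod.fst (V : Set (ℝ × ℝ))) (k : ℕ) :
    (G.card : ℝ) * ((k : ℝ) + 1) ^ 2 ≤
      3 * V.card * ((k : ℝ) + 1) ^ 3 + (crossings G).card := by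
  classical
  have hE := sum_colourings G V k 2 (fun e => {e.l, e.r})
    (fun e he => by
      simp [Finset.insert_subset_iff, hG.lmem e he, hG.rmem e he])
    (fun e he => Finset.card_pair fun h => by
      have := hG.lt e he
      rw [h] at this
      exact lt_irrefl _ this)
  have hP := sum_colourings V V k 1 (fun v => {v}) (fun v hv => by simpa using hv)
    (fun v _ => Finset.card_singleton v)
  have hC := sum_colourings (crossings G) V k 4 (fun z => {z.1.l, z.1.r, z.2.l, z.2.r})
    (fun z hz => by
      obtain ⟨h1, h2, -⟩ := mem_crossings.1 hz
      simp [Finset.insert_subset_iff, hG.lmem _ h1, hG.rmem _ h1, hG.lmem _ h2, hG.rmem _ h2])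
    (fun z hz => by
      obtain ⟨h1, h2, h3⟩ := mem_crossings.1 hz
      exact hG.card_ends hV h1 h2 h3)
  have hle : ∀ c : V → Fin (k + 1),
      ((G.filter fun e => {e.l, e.r} ⊆ zeroClass V k c).card : ℝ) ≤
      3 * ((V.filter fun v => {v} ⊆ zeroClass V k c).card : ℝ) +
      (((crossings G).filter fun z =>
        {z.1.l, z.1.r, z.2.l, z.2.r} ⊆ zeroClass V k c).card : ℝ) := by
    intro c
    have hTV : zeroClass V k c ⊆ V := Finset.filter_subset _ _
    have hg : IsGeom (zeroClass V k c) (G.filter fun e => {e.l, e.r} ⊆ zeroClass V k c) := by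
      refine hG.mono hTV (Finset.filter_subset _ _) ?_ ?_
      · intro e he
        exact (Finset.mem_filter.1 he).2 (by simp)
      · intro e he
        exact (Finset.mem_filter.1 he).2 (by simp)
    have h1 := hg.card_le_add_crossings (hV.mono (Finset.coe_subset.2 hTV))
    have h2 : (zeroClass V k c).card ≤ (V.filter fun v => {v} ⊆ zeroClass V k c).card :=
      Finset.card_le_card fun v hv => Finset.mem_filter.2 ⟨hTV hv, by simpa using hv⟩
    have h3 : (crossings (G.filter fun e => {e.l, e.r} ⊆ zeroClass V k c)).card ≤
        ((crossings G).filter fun z =>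
          {z.1.l, z.1.r, z.2.l, z.2.r} ⊆ zeroClass V k c).card := by
      refine Finset.card_le_card fun z hz => ?_
      obtain ⟨a1, a2, a3⟩ := mem_crossings.1 hz
      rw [Finset.mem_filter] at a1 a2
      refine Finset.mem_filter.2 ⟨mem_crossings.2 ⟨a1.1, a2.1, a3⟩, ?_⟩
      have b1 := a1.2
      have b2 := a2.2
      simp only [Finset.insert_subset_iff, Finset.singleton_subset_iff] at b1 b2 ⊢
      exact ⟨b1.1, b1.2, b2.1, b2.2⟩
    have h4 := h1.trans (Nat.add_le_add (Nat.mul_le_mul_left 3 h2) h3)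
    exact_mod_cast h4
  have hsum := Finset.sum_le_sum fun c (_ : c ∈ (Finset.univ : Finset (V → Fin (k + 1)))) => hle c
  rw [Finset.sum_add_distrib, ← Finset.mul_sum] at hsum
  set SE := ∑ c : V → Fin (k + 1), ((G.filter fun e => {e.l, e.r} ⊆ zeroClass V k c).card : ℝ)
  set SP := ∑ c : V → Fin (k + 1), ((V.filter fun v => {v} ⊆ zeroClass V k c).card : ℝ)
  set SC := ∑ c : V → Fin (k + 1), (((crossings G).filter fun z =>
        {z.1.l, z.1.r, z.2.l, z.2.r} ⊆ zeroClass V k c).card : ℝ)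
  have hK : (0 : ℝ) < (k : ℝ) + 1 := by positivity
  set K : ℝ := (k : ℝ) + 1
  have hM : 0 < K ^ V.card := by positivity
  set M := K ^ V.card
  have h5 := mul_le_mul_of_nonneg_right hsum (pow_pos hK 4).le
  refine le_of_mul_le_mul_right ?_ hM
  calc (G.card : ℝ) * K ^ 2 * M = SE * K ^ 4 := by linear_combination (-K ^ 2) * hE
    _ ≤ (3 * SP + SC) * K ^ 4 := h5
    _ = _ := by linear_combination 3 * K ^ 3 * hP + hC

/-! ### Incidences of points and lines -/

open Classical in
/-- The incidences between the points of `V` and the non-vertical lines `y = l.1 * x + l.2`,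
`l ∈ L`. -/
noncomputable def incidences (V L : Finset (ℝ × ℝ)) : Finset ((ℝ × ℝ) × (ℝ × ℝ)) :=
  (V ×ˢ L).filter fun z => z.1.2 = z.2.1 * z.1.1 + z.2.2

theorem mem_incidences {V L : Finset (ℝ × ℝ)} {z : (ℝ × ℝ) × (ℝ × ℝ)} :
    z ∈ incidences V L ↔ z.1 ∈ V ∧ z.2 ∈ L ∧ z.1.2 = z.2.1 * z.1.1 + z.2.2 := by
  simp [incidences, and_assoc]

/-- Székely's argument: joining consecutive points on each line gives a geometric graph with at
least `I - |L|` edges and at most `|L| ^ 2` crossings. -/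
theorem incidences_sampled (V L : Finset (ℝ × ℝ))
    (hV : Set.InjOn Prod.fst (V : Set (ℝ × ℝ))) (k : ℕ) :
    ((incidences V L).card : ℝ) * ((k : ℝ) + 1) ^ 2 ≤
      L.card * ((k : ℝ) + 1) ^ 2 + 3 * V.card * ((k : ℝ) + 1) ^ 3 + (L.card : ℝ) ^ 2 := by
  classical
  set N : (ℝ × ℝ) × (ℝ × ℝ) → Prop := fun z => ∃ q ∈ V, z.1.1 < q.1 ∧ q.2 = z.2.1 * q.1 + z.2.2
    with hN
  have hch : ∀ z, ∃ q, N z → q ∈ V ∧ z.1.1 < q.1 ∧ q.2 = z.2.1 * q.1 + z.2.2 ∧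
      ∀ v ∈ V, z.1.1 < v.1 → v.1 < q.1 → z.2.1 * v.1 + z.2.2 ≠ v.2 := by
    intro z
    by_cases hz : N z
    · obtain ⟨q, hq, hmin⟩ := Finset.exists_min_image
        (V.filter fun q => z.1.1 < q.1 ∧ q.2 = z.2.1 * q.1 + z.2.2) (fun q => q.1)
        (by obtain ⟨q, hq, h⟩ := hz; exact ⟨q, Finset.mem_filter.2 ⟨hq, h⟩⟩)
      rw [Finset.mem_filter] at hq
      refine ⟨q, fun _ => ⟨hq.1, hq.2.1, hq.2.2, fun v hv h1 h2 h3 => ?_⟩⟩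
      have := hmin v (Finset.mem_filter.2 ⟨hv, h1, h3.symm⟩)
      linarith
    · exact ⟨0, fun h => absurd h hz⟩
  choose Q hQ using hch
  -- the last point of `V` on each line starts no edge
  set J := (incidences V L).filter N with hJ
  set G : Finset Seg := J.image fun z => ⟨z.1, Q z, z.2⟩ with hGdef
  have hGJ : G.card = J.card := by
    refine Finset.card_image_of_injective _ fun z w h => ?_
    simp only [Seg.mk.injEq] at h
    exact Prod.ext h.1 h.2.2
  have hmemG : ∀ e ∈ G, ∃ z, (z.1 ∈ V ∧ z.2 ∈ L ∧ z.1.2 = z.2.1 * z.1.1 + z.2.2) ∧ N z ∧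
      e = ⟨z.1, Q z, z.2⟩ := by
    intro e he
    obtain ⟨z, hz, rfl⟩ := Finset.mem_image.1 he
    obtain ⟨h1, h2⟩ := Finset.mem_filter.1 hz
    exact ⟨z, mem_incidences.1 h1, h2, rfl⟩
  have hG : IsGeom V G := by
    constructor <;> intro e he <;> obtain ⟨z, hz, hn, rfl⟩ := hmemG e he
    · exact hz.1
    · exact (hQ z hn).1
    · exact (hQ z hn).2.1
    · exact hz.2.2.symm
    · exact (hQ z hn).2.2.1.symm
    · exact (hQ z hn).2.2.2
  have hGL : ∀ e ∈ G, e.m ∈ L := by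
    intro e he
    obtain ⟨z, hz, hn, rfl⟩ := hmemG e he
    exact hz.2.1
  have hlast : ((incidences V L).filter fun z => ¬ N z).card ≤ L.card := by
    refine Finset.card_le_card_of_injOn Prod.snd ?_ ?_
    · intro z hz
      exact (mem_incidences.1 (Finset.mem_filter.1 (Finset.mem_coe.1 hz)).1).2.1
    · intro z hz w hw h
      obtain ⟨hz1, hz2⟩ := Finset.mem_filter.1 (Finset.mem_coe.1 hz)
      obtain ⟨hw1, hw2⟩ := Finset.mem_filter.1 (Finset.mem_coe.1 hw)
      rw [mem_incidences] at hz1 hw1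
      refine Prod.ext (hV hz1.1 hw1.1 ?_) h
      rcases lt_trichotomy z.1.1 w.1.1 with h' | h' | h'
      · exact (hz2 ⟨w.1, hw1.1, h', by rw [h]; exact hw1.2.2⟩).elim
      · exact h'
      · exact (hw2 ⟨z.1, hz1.1, h', by rw [← h]; exact hz1.2.2⟩).elim
  have hI : (incidences V L).card ≤ G.card + L.card := by
    have : J.card + ((incidences V L).filter fun z => ¬ N z).card = (incidences V L).card := by
      rw [hJ]
      convert Finset.card_filter_add_card_filter_not (s := incidences V L) N
    omega
  have hI' : ((incidences V L).card : ℝ) ≤ G.card + L.card := by exact_mod_cast hI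
  have hX : ((crossings G).card : ℝ) ≤ (L.card : ℝ) ^ 2 := by
    exact_mod_cast hG.card_crossings_le hV hGL
  have hS := hG.sampled hV k
  have := mul_le_mul_of_nonneg_right hI' (show (0 : ℝ) ≤ ((k : ℝ) + 1) ^ 2 by positivity)
  linarith

/-- The Szemerédi–Trotter bound for at most `n` points and at most `n` lines. -/
theorem card_incidences_le (V L : Finset (ℝ × ℝ))
    (hV : Set.InjOn Prod.fst (V : Set (ℝ × ℝ))) (n : ℕ) (hn : 1 ≤ n) (hVn : V.card ≤ n)
    (hLn : L.card ≤ n) : ((incidences V L).card : ℝ) ≤ 8 * (n : ℝ) ^ (4 / 3 : ℝ) := by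
  have hn' : (1 : ℝ) ≤ n := by exact_mod_cast hn
  set s : ℝ := (n : ℝ) ^ (1 / 3 : ℝ) with hs
  have hs1 : 1 ≤ s := Real.one_le_rpow hn' (by norm_num)
  have hs3 : s ^ 3 = n := by
    rw [hs, ← Real.rpow_natCast, ← Real.rpow_mul (by linarith)]
    norm_num
  have hs4 : (n : ℝ) ^ (4 / 3 : ℝ) = s ^ 4 := by
    rw [hs, ← Real.rpow_natCast, ← Real.rpow_mul (by linarith)]
    norm_num
  -- the sampling probability is of order `n ^ (-1 / 3)`
  set k := ⌊s⌋₊ with hk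
  have hk1 : s ≤ (k : ℝ) + 1 := (Nat.lt_floor_add_one s).le
  have hk2 : (k : ℝ) + 1 ≤ 2 * s := by
    have := Nat.floor_le (show 0 ≤ s by linarith)
    linarith
  have h := incidences_sampled V L hV k
  set K : ℝ := (k : ℝ) + 1
  have hK : 0 < K := by linarith
  have hVr : (V.card : ℝ) ≤ s ^ 3 := by rw [hs3]; exact_mod_cast hVn
  have hLr : (L.card : ℝ) ≤ s ^ 3 := by rw [hs3]; exact_mod_cast hLn
  rw [hs4]
  refine le_of_mul_le_mul_right ?_ (pow_pos hK 2)
  have hs0 : 0 ≤ s := by linarith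
  calc ((incidences V L).card : ℝ) * K ^ 2
      ≤ L.card * K ^ 2 + 3 * V.card * K ^ 3 + (L.card : ℝ) ^ 2 := h
    _ ≤ s ^ 3 * K ^ 2 + 3 * s ^ 3 * K ^ 3 + (s ^ 3) ^ 2 := by gcongr
    _ = (s ^ 3 * 1 + 3 * s ^ 3 * K) * K ^ 2 + s ^ 4 * s ^ 2 := by ring
    _ ≤ (s ^ 3 * s + 3 * s ^ 3 * (2 * s)) * K ^ 2 + s ^ 4 * K ^ 2 := by gcongr
    _ = 8 * s ^ 4 * K ^ 2 := by ring

/-! ### Projection of the sphere to a generic chart -/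

open Polynomial in
theorem exists_eval_ne_zero (Q : Finset ℝ[X]) (hQ : ∀ p ∈ Q, p ≠ 0) :
    ∃ t : ℝ, ∀ p ∈ Q, p.eval t ≠ 0 := by
  have h : ∏ p ∈ Q, p ≠ 0 := Finset.prod_ne_zero_iff.2 hQ
  by_contra! hc
  refine h (Polynomial.funext fun t => ?_)
  obtain ⟨p, hp, h0⟩ := hc t
  rw [Polynomial.eval_prod, Polynomial.eval_zero]
  exact Finset.prod_eq_zero hp h0

/-- Euclidean three-space. -/
abbrev E3 := EuclideanSpace ℝ (Fin 3)

/-- The linear form that is the denominator of the projected point `ptOf t x`. -/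
def ptDen (t : ℝ) (x : E3) : ℝ := x 2 + t * (x 0 - x 1) - t ^ 3 * x 1

/-- The linear form that is the denominator of the dual line `lineOf t y`: the inner product with
`(t ^ 2, 1, t)`, the direction corresponding to the point at infinity of the vertical lines. -/
def lineDen (t : ℝ) (x : E3) : ℝ := x 1 + t * x 2 + t ^ 2 * x 0

/-- Central projection of the sphere to an affine chart depending on the parameter `t`. -/
noncomputable def ptOf (t : ℝ) (x : E3) : ℝ × ℝ :=
  ((x 0 - t ^ 2 * x 1) / ptDen t x, x 1 / ptDen t x)

/-- Slope and intercept of the image, in the chart of `ptOf t`, of the great circle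
orthogonal to `y`. -/
noncomputable def lineOf (t : ℝ) (y : E3) : ℝ × ℝ :=
  (-(y 0 - t * y 2) / lineDen t y, -y 2 / lineDen t y)

/-- The triple product of `x`, `y`, `z`. -/
def tripleDet (x y z : E3) : ℝ :=
  (x 1 * y 2 - x 2 * y 1) * z 0 + (x 2 * y 0 - x 0 * y 2) * z 1 + (x 0 * y 1 - x 1 * y 0) * z 2

/-- The parameter can be chosen so that all projected points and dual lines are finite and
non-vertical, and the abscissae of distinct projected points are distinct. -/
theorem exists_chart (P : Finset E3) (hP : ∀ x ∈ P, x ≠ 0) :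
    ∃ t : ℝ, (∀ x ∈ P, ptDen t x ≠ 0) ∧ (∀ x ∈ P, lineDen t x ≠ 0) ∧
      ∀ x ∈ P, ∀ y ∈ P, (ptOf t x).1 = (ptOf t y).1 → ptOf t x = ptOf t y := by
  classical
  -- `lineDen t`, evaluated at a fixed vector, is a polynomial in `t`, nonzero unless the vector is;
  -- its values at the cross products of points of `P` decide whether two abscissae coincide
  let f : ℝ → ℝ → ℝ → Polynomial ℝ := fun a b c =>
    Polynomial.C b + Polynomial.C c * Polynomial.X + Polynomial.C a * Polynomial.X ^ 2
  let g : E3 → Polynomial ℝ := fun x => Polynomial.C (x 2) +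
    Polynomial.C (x 0 - x 1) * Polynomial.X - Polynomial.C (x 1) * Polynomial.X ^ 3
  let w : E3 × E3 → Polynomial ℝ := fun z => f (z.1 1 * z.2 2 - z.1 2 * z.2 1)
    (z.1 2 * z.2 0 - z.1 0 * z.2 2) (z.1 0 * z.2 1 - z.1 1 * z.2 0)
  have hf : ∀ a b c, f a b c = 0 → a = 0 ∧ b = 0 ∧ c = 0 := by
    intro a b c h
    have h0 := congrArg (fun p => Polynomial.coeff p 0) h
    have h1 := congrArg (fun p => Polynomial.coeff p 1) h
    have h2 := congrArg (fun p => Polynomial.coeff p 2) h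
    simp [f, Polynomial.coeff_X, Polynomial.coeff_C] at h0 h1 h2
    exact ⟨h2, h0, h1⟩
  have hz : ∀ x ∈ P, ¬ (x 0 = 0 ∧ x 1 = 0 ∧ x 2 = 0) := by
    rintro x hx ⟨h0, h1, h2⟩
    refine hP x hx ?_
    ext i
    fin_cases i <;> simp [h0, h1, h2]
  have hg : ∀ x ∈ P, g x ≠ 0 := by
    intro x hx h
    have h0 := congrArg (fun p => Polynomial.coeff p 0) h
    have h1 := congrArg (fun p => Polynomial.coeff p 1) h
    have h3 := congrArg (fun p => Polynomial.coeff p 3) h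
    simp [g, Polynomial.coeff_X, Polynomial.coeff_C] at h0 h1 h3
    exact hz x hx ⟨by linarith, h3, h0⟩
  obtain ⟨t, ht⟩ := exists_eval_ne_zero
    (P.image g ∪ (P.image (fun x => f (x 0) (x 1) (x 2)) ∪
      ((P ×ˢ P).image w).filter (fun p => p ≠ 0))) (by
    intro p hp
    simp only [Finset.mem_union, Finset.mem_filter] at hp
    rcases hp with hp | hp | hp
    · obtain ⟨x, hx, rfl⟩ := Finset.mem_image.1 hp
      exact hg x hx
    · obtain ⟨x, hx, rfl⟩ := Finset.mem_image.1 hp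
      exact fun h => hz x hx (hf _ _ _ h)
    · exact hp.2)
  simp only [Finset.mem_union, Finset.mem_filter] at ht
  have hD : ∀ x ∈ P, ptDen t x ≠ 0 := by
    intro x hx h
    refine ht (g x) (Or.inl (Finset.mem_image.2 ⟨x, hx, rfl⟩)) ?_
    rw [← h]
    simp [g, ptDen]
    ring
  refine ⟨t, hD, ?_, ?_⟩
  · intro x hx h
    refine ht (f (x 0) (x 1) (x 2)) (Or.inr (Or.inl (Finset.mem_image.2 ⟨x, hx, rfl⟩))) ?_
    rw [← h]
    simp [f, lineDen]
    ring
  · intro x hx y hy hxy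
    have hDx := hD x hx
    have hDy := hD y hy
    have hxy' : (x 0 - t ^ 2 * x 1) * ptDen t y = (y 0 - t ^ 2 * y 1) * ptDen t x :=
      (div_eq_div_iff hDx hDy).1 hxy
    have hw : f (x 1 * y 2 - x 2 * y 1) (x 2 * y 0 - x 0 * y 2) (x 0 * y 1 - x 1 * y 0) = 0 := by
      by_contra hne
      refine ht (f _ _ _) (Or.inr (Or.inr ⟨Finset.mem_image.2
        ⟨(x, y), Finset.mem_product.2 ⟨hx, hy⟩, rfl⟩, hne⟩)) ?_
      simp only [f, Polynomial.eval_add, Polynomial.eval_mul, Polynomial.eval_pow,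
        Polynomial.eval_C, Polynomial.eval_X]
      unfold ptDen at hxy'
      linear_combination -hxy'
    obtain ⟨c0, c1, c2⟩ := hf _ _ _ hw
    refine Prod.ext hxy ((div_eq_div_iff hDx hDy).2 ?_)
    unfold ptDen
    linear_combination c0 - t * c2

theorem mem_incidence_of_orth {t : ℝ} {x y : E3} (hx : ptDen t x ≠ 0) (hy : lineDen t y ≠ 0)
    (h : x 0 * y 0 + x 1 * y 1 + x 2 * y 2 = 0) :
    (ptOf t x).2 = (lineOf t y).1 * (ptOf t x).1 + (lineOf t y).2 := by
  unfold ptOf lineOf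
  field_simp
  unfold lineDen ptDen
  linear_combination h

/-- Two vectors of equal length on a common line through the origin agree as soon as a witness to
their proportionality has the same sign on both. -/
theorem eq_of_proportional {x y : E3} {a b : ℝ} (ha : a ≠ 0) (hb : b ≠ 0)
    (hab : 0 < a ↔ 0 < b)
    (hx : x 0 ^ 2 + x 1 ^ 2 + x 2 ^ 2 = 1 / 2) (hy : y 0 ^ 2 + y 1 ^ 2 + y 2 ^ 2 = 1 / 2)
    (h0 : b * x 0 = a * y 0) (h1 : b * x 1 = a * y 1) (h2 : b * x 2 = a * y 2) : x = y := by
  have hsq : (b - a) * (b + a) = 0 := by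
    linear_combination 2 * (b * x 0 + a * y 0) * h0 + 2 * (b * x 1 + a * y 1) * h1 +
      2 * (b * x 2 + a * y 2) * h2 - 2 * b ^ 2 * hx + 2 * a ^ 2 * hy
  have hE : b = a := by
    rcases mul_eq_zero.1 hsq with h | h
    · linarith
    · rcases lt_or_gt_of_ne ha with h' | h'
      · have : ¬ 0 < b := fun hb' => by have := hab.2 hb'; linarith
        exact (this (by linarith)).elim
      · have := hab.1 h'; linarith
  subst hE
  ext i
  fin_cases i
  · exact mul_left_cancel₀ hb h0
  · exact mul_left_cancel₀ hb h1
  · exact mul_left_cancel₀ hb h2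

theorem eq_of_ptOf {t : ℝ} {x y : E3} (hx : ptDen t x ≠ 0) (hy : ptDen t y ≠ 0)
    (hs : 0 < ptDen t x ↔ 0 < ptDen t y)
    (nx : x 0 ^ 2 + x 1 ^ 2 + x 2 ^ 2 = 1 / 2) (ny : y 0 ^ 2 + y 1 ^ 2 + y 2 ^ 2 = 1 / 2)
    (h : ptOf t x = ptOf t y) : x = y := by
  have h1 : (x 0 - t ^ 2 * x 1) * ptDen t y = (y 0 - t ^ 2 * y 1) * ptDen t x :=
    (div_eq_div_iff hx hy).1 (congrArg Prod.fst h)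
  have h2 : x 1 * ptDen t y = y 1 * ptDen t x :=
    (div_eq_div_iff hx hy).1 (congrArg Prod.snd h)
  have h0 : ptDen t y * x 0 = ptDen t x * y 0 := by linear_combination h1 + t ^ 2 * h2
  refine eq_of_proportional hx hy hs nx ny h0 (by linear_combination h2) ?_
  have e1 : x 2 = ptDen t x - t * (x 0 - x 1) + t ^ 3 * x 1 := by unfold ptDen; ring
  have e2 : y 2 = ptDen t y - t * (y 0 - y 1) + t ^ 3 * y 1 := by unfold ptDen; ring
  rw [e1, e2]
  linear_combination -t * h0 + (t + t ^ 3) * h2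

theorem eq_of_lineOf {t : ℝ} {x y : E3} (hx : lineDen t x ≠ 0) (hy : lineDen t y ≠ 0)
    (hs : 0 < lineDen t x ↔ 0 < lineDen t y)
    (nx : x 0 ^ 2 + x 1 ^ 2 + x 2 ^ 2 = 1 / 2) (ny : y 0 ^ 2 + y 1 ^ 2 + y 2 ^ 2 = 1 / 2)
    (h : lineOf t x = lineOf t y) : x = y := by
  have h1 : -(x 0 - t * x 2) * lineDen t y = -(y 0 - t * y 2) * lineDen t x :=
    (div_eq_div_iff hx hy).1 (congrArg Prod.fst h)
  have h2 : -x 2 * lineDen t y = -y 2 * lineDen t x :=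
    (div_eq_div_iff hx hy).1 (congrArg Prod.snd h)
  have h0 : lineDen t y * x 0 = lineDen t x * y 0 := by linear_combination -h1 - t * h2
  refine eq_of_proportional hx hy hs nx ny h0 ?_ (by linear_combination -h2)
  have e1 : x 1 = lineDen t x - t * x 2 - t ^ 2 * x 0 := by unfold lineDen; ring
  have e2 : y 1 = lineDen t y - t * y 2 - t ^ 2 * y 0 := by unfold lineDen; ring
  rw [e1, e2]
  linear_combination -t ^ 2 * h0 + t * h2

/-! ### Triangles -/

/-- The third vertex of a triangle is a multiple of the cross product of the other two. -/
theorem third_eq {x y z : E3} (nx : x 0 ^ 2 + x 1 ^ 2 + x 2 ^ 2 = 1 / 2)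
    (ny : y 0 ^ 2 + y 1 ^ 2 + y 2 ^ 2 = 1 / 2)
    (hxy : x 0 * y 0 + x 1 * y 1 + x 2 * y 2 = 0)
    (hyz : y 0 * z 0 + y 1 * z 1 + y 2 * z 2 = 0)
    (hzx : z 0 * x 0 + z 1 * x 1 + z 2 * x 2 = 0) :
    z 0 = 4 * tripleDet x y z * (x 1 * y 2 - x 2 * y 1) ∧
    z 1 = 4 * tripleDet x y z * (x 2 * y 0 - x 0 * y 2) ∧
    z 2 = 4 * tripleDet x y z * (x 0 * y 1 - x 1 * y 0) := by
  unfold tripleDet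
  generalize x 0 = a at *
  generalize x 1 = b at *
  generalize x 2 = c at *
  generalize y 0 = p at *
  generalize y 1 = q at *
  generalize y 2 = r at *
  generalize z 0 = u at *
  generalize z 1 = v at *
  generalize z 2 = w at *
  refine ⟨?_, ?_, ?_⟩
  · linear_combination (-4 * u) * ((p ^ 2 + q ^ 2 + r ^ 2) * nx + 1 / 2 * ny
      - (a * p + b * q + c * r) * hxy) + 4 * ((c * p - a * r) * c - (a * q - b * p) * b) * hyz
      - 4 * ((c * p - a * r) * r - (a * q - b * p) * q) * hzx
  · linear_combination (-4 * v) * ((p ^ 2 + q ^ 2 + r ^ 2) * nx + 1 / 2 * ny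
      - (a * p + b * q + c * r) * hxy) + 4 * ((a * q - b * p) * a - (b * r - c * q) * c) * hyz
      - 4 * ((a * q - b * p) * p - (b * r - c * q) * r) * hzx
  · linear_combination (-4 * w) * ((p ^ 2 + q ^ 2 + r ^ 2) * nx + 1 / 2 * ny
      - (a * p + b * q + c * r) * hxy) + 4 * ((b * r - c * q) * b - (c * p - a * r) * a) * hyz
      - 4 * ((b * r - c * q) * q - (c * p - a * r) * p) * hzx

theorem eq_of_third {x y z z' : E3} (nx : x 0 ^ 2 + x 1 ^ 2 + x 2 ^ 2 = 1 / 2)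
    (ny : y 0 ^ 2 + y 1 ^ 2 + y 2 ^ 2 = 1 / 2) (nz : z 0 ^ 2 + z 1 ^ 2 + z 2 ^ 2 = 1 / 2)
    (nz' : z' 0 ^ 2 + z' 1 ^ 2 + z' 2 ^ 2 = 1 / 2)
    (hxy : x 0 * y 0 + x 1 * y 1 + x 2 * y 2 = 0)
    (hyz : y 0 * z 0 + y 1 * z 1 + y 2 * z 2 = 0)
    (hzx : z 0 * x 0 + z 1 * x 1 + z 2 * x 2 = 0)
    (hyz' : y 0 * z' 0 + y 1 * z' 1 + y 2 * z' 2 = 0)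
    (hzx' : z' 0 * x 0 + z' 1 * x 1 + z' 2 * x 2 = 0)
    (hs : 0 < tripleDet x y z ↔ 0 < tripleDet x y z') : z = z' := by
  obtain ⟨e0, e1, e2⟩ := third_eq nx ny hxy hyz hzx
  obtain ⟨f0, f1, f2⟩ := third_eq nx ny hxy hyz' hzx'
  have hd : tripleDet x y z ≠ 0 := fun h => by
    rw [h] at e0 e1 e2
    rw [e0, e1, e2] at nz
    norm_num at nz
  have hd' : tripleDet x y z' ≠ 0 := fun h => by
    rw [h] at f0 f1 f2
    rw [f0, f1, f2] at nz'
    norm_num at nz'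
  refine eq_of_proportional hd hd' hs nz nz' ?_ ?_ ?_
  · linear_combination tripleDet x y z' * e0 - tripleDet x y z * f0
  · linear_combination tripleDet x y z' * e1 - tripleDet x y z * f1
  · linear_combination tripleDet x y z' * e2 - tripleDet x y z * f2

theorem sq_coords_of_norm {x : E3} (hx : ‖x‖ = 1 / Real.sqrt 2) :
    x 0 ^ 2 + x 1 ^ 2 + x 2 ^ 2 = 1 / 2 := by
  have h := EuclideanSpace.real_norm_sq_eq x
  rw [hx, Fin.sum_univ_three, div_pow, Real.sq_sqrt (by norm_num)] at h
  linarith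

theorem orth_of_dist {x y : E3} (nx : x 0 ^ 2 + x 1 ^ 2 + x 2 ^ 2 = 1 / 2)
    (ny : y 0 ^ 2 + y 1 ^ 2 + y 2 ^ 2 = 1 / 2) (h : dist x y = 1) :
    x 0 * y 0 + x 1 * y 1 + x 2 * y 2 = 0 := by
  have h2 := EuclideanSpace.real_norm_sq_eq (x - y)
  rw [← dist_eq_norm, h, Fin.sum_univ_three] at h2
  simp only [PiLp.sub_apply] at h2
  linarith

theorem triangle_bound_from_rich_points
    (A : ℝ)
    (hrich : ∀ (P : Finset (EuclideanSpace ℝ (Fin 3))),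
      (∀ x ∈ P, ‖x‖ = 1 / Real.sqrt 2) →
      ∀ r : ℝ, 1 ≤ r →
        ({x : EuclideanSpace ℝ (Fin 3) | ‖x‖ = 1 / Real.sqrt 2 ∧
            r ≤ ({p ∈ (P : Set (EuclideanSpace ℝ (Fin 3))) |
              dist x p = 1}.ncard : ℝ)}.ncard : ℝ) ≤
          A * ((P.card : ℝ) ^ 3 / r ^ 2 + (P.card : ℝ) / r)) :
    ∃ C : ℝ, ∀ P : Finset (EuclideanSpace ℝ (Fin 3)),
      (∀ x ∈ P, ‖x‖ = 1 / Real.sqrt 2) →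
      ({t : EuclideanSpace ℝ (Fin 3) × EuclideanSpace ℝ (Fin 3) ×
          EuclideanSpace ℝ (Fin 3) |
        t.1 ∈ P ∧ t.2.1 ∈ P ∧ t.2.2 ∈ P ∧
        t.1 ≠ t.2.1 ∧ t.1 ≠ t.2.2 ∧ t.2.1 ≠ t.2.2 ∧
        dist t.1 t.2.1 = 1 ∧ dist t.2.1 t.2.2 = 1 ∧
        dist t.2.2 t.1 = 1}.ncard : ℝ) ≤ C * (P.card : ℝ) ^ (4 / 3 : ℝ) := by
  classical
  refine ⟨64, fun P hP => ?_⟩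
  have hsq : ∀ x ∈ P, x 0 ^ 2 + x 1 ^ 2 + x 2 ^ 2 = 1 / 2 := fun x hx =>
    sq_coords_of_norm (hP x hx)
  rcases P.eq_empty_or_nonempty with rfl | hne
  · simp
  obtain ⟨t, hD, hN, hinj⟩ := exists_chart P (fun x hx h => by
    have := hsq x hx
    rw [h] at this
    norm_num at this)
  set I := incidences (P.image (ptOf t)) (P.image (lineOf t)) with hI
  have hIc : (I.card : ℝ) ≤ 8 * (P.card : ℝ) ^ (4 / 3 : ℝ) := by
    refine card_incidences_le _ _ ?_ P.card hne.card_pos Finset.card_image_le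
      Finset.card_image_le
    intro p hp q hq h
    obtain ⟨x, hx, rfl⟩ := Finset.mem_image.1 (Finset.mem_coe.1 hp)
    obtain ⟨y, hy, rfl⟩ := Finset.mem_image.1 (Finset.mem_coe.1 hq)
    exact hinj x hx y hy h
  -- a triangle is determined by the incidence of its first two vertices and three signs
  have hle := Set.ncard_le_ncard_of_injOn (s := {t : EuclideanSpace ℝ (Fin 3) ×
        EuclideanSpace ℝ (Fin 3) × EuclideanSpace ℝ (Fin 3) |
        t.1 ∈ P ∧ t.2.1 ∈ P ∧ t.2.2 ∈ P ∧
        t.1 ≠ t.2.1 ∧ t.1 ≠ t.2.2 ∧ t.2.1 ≠ t.2.2 ∧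
        dist t.1 t.2.1 = 1 ∧ dist t.2.1 t.2.2 = 1 ∧
        dist t.2.2 t.1 = 1})
    (t := ((I ×ˢ (Finset.univ : Finset (Bool × Bool × Bool)) :
      Finset (((ℝ × ℝ) × (ℝ × ℝ)) × (Bool × Bool × Bool))) : Set _))
    (fun z => ((ptOf t z.1, lineOf t z.2.1), (decide (0 < ptDen t z.1),
      decide (0 < lineDen t z.2.1), decide (0 < tripleDet z.1 z.2.1 z.2.2)))) ?_ ?_
    (Finset.finite_toSet _)
  · rw [Set.ncard_coe_finset, Finset.card_product] at hle
    have h8 : (Finset.univ : Finset (Bool × Bool × Bool)).card = 8 := by decide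
    rw [h8] at hle
    have hle' := (Nat.cast_le (α := ℝ)).2 hle
    push_cast at hle'
    linarith
  · rintro ⟨x, y, z⟩ ⟨hx, hy, -, -, -, -, hxy, -, -⟩
    rw [Finset.mem_coe, Finset.mem_product]
    refine ⟨mem_incidences.2 ⟨Finset.mem_image_of_mem _ hx, Finset.mem_image_of_mem _ hy, ?_⟩,
      Finset.mem_univ _⟩
    exact mem_incidence_of_orth (hD x hx) (hN y hy)
      (orth_of_dist (hsq x hx) (hsq y hy) hxy)
  · rintro ⟨x, y, z⟩ ⟨hx, hy, hz, -, -, -, hxy, hyz, hzx⟩ ⟨x', y', z'⟩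
      ⟨hx', hy', hz', -, -, -, hxy', hyz', hzx'⟩ h
    simp only [Prod.mk.injEq, decide_eq_decide] at hx hy hz hxy hyz hzx hx' hy' hz' hxy' hyz' hzx' h
    obtain ⟨⟨h1, h2⟩, s1, s2, s3⟩ := h
    obtain rfl := eq_of_ptOf (hD x hx) (hD x' hx') s1 (hsq x hx) (hsq x' hx') h1
    obtain rfl := eq_of_lineOf (hN y hy) (hN y' hy') s2 (hsq y hy) (hsq y' hy') h2
    obtain rfl := eq_of_third (hsq x hx) (hsq y hy) (hsq z hz) (hsq z' hz')
      (orth_of_dist (hsq x hx) (hsq y hy) hxy) (orth_of_dist (hsq y hy) (hsq z hz) hyz)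
      (orth_of_dist (hsq z hz) (hsq x hx) hzx) (orth_of_dist (hsq y hy) (hsq z' hz') hyz')
      (orth_of_dist (hsq z' hz') (hsq x hx) hzx') s3
    rfl
end
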